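/- arXiv:1101.3099 — 2 statements merged into one kernel-verified Lean document; each statement's English description precedes it below -/
import Mathlib

section
/- If the edge-probability function satisfies p(n) ≤ 1.02·ln n / n, then with high probability a graph G sampled from G(n,p) contains ⌊δ(G)/2⌋ pairwise edge-disjoint Hamilton cycles, where δ(G) is the minimum degree of G. -/
open Filter Finset SimpleGraph
open scoped Classical

/-- The probability weight of a particular graph `G` on `[n]` under `G(n,p)`. -/
noncomputable def gnpWeight (n : ℕ) (p : ℝ) (G : SimpleGraph (Fin n)) : ℝ :=
  p ^ G.edgeFinset.card * (1 - p) ^ (n.choose 2 - G.edgeFinset.card)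

/-- The probability that a random graph `G ~ G(n,p)` satisfies the predicate `A`. -/
noncomputable def gnpProb (n : ℕ) (p : ℝ) (A : SimpleGraph (Fin n) → Prop) : ℝ :=
  ∑ G : SimpleGraph (Fin n), if A G then gnpWeight n p G else 0

/-- A sequence of graph properties holds with high probability in `G(n, p n)`. -/
def WHP (p : ℕ → ℝ) (A : ∀ n : ℕ, SimpleGraph (Fin n) → Prop) : Prop :=
  Tendsto (fun n => gnpProb n (p n) (A n)) atTop (nhds 1)

/-- Number of edges of a graph. -/
noncomputable def edgeCount {V : Type*} [Fintype V] (G : SimpleGraph V) : ℕ :=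
  G.edgeFinset.card

/-- Number of edges with both endpoints in `U`. -/
noncomputable def eIn {V : Type*} [Fintype V] (G : SimpleGraph V) (U : Finset V) : ℕ :=
  (G.edgeFinset.filter (fun e => ∀ v ∈ e, v ∈ U)).card

/-- Number of edges with one endpoint in `U` and the other in `Z` (for disjoint `U`, `Z`). -/
noncomputable def eBetween {V : Type*} [Fintype V] (G : SimpleGraph V) (U Z : Finset V) : ℕ :=
  ((U ×ˢ Z).filter (fun q => G.Adj q.1 q.2)).card

/-- External neighbourhood of a vertex set. -/
noncomputable def extNbhd {V : Type*} [Fintype V] (G : SimpleGraph V) (U : Finset V) : Finset V :=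
  Finset.univ.filter (fun v => v ∉ U ∧ ∃ u ∈ U, G.Adj u v)

/-- `G` is an `(R, f)`-expander: every set `U` with `|U| ≤ R` satisfies `|N(U)| ≥ f(|U|)·|U|`. -/
def IsExpander {V : Type*} [Fintype V] (G : SimpleGraph V) (R : ℝ) (f : ℕ → ℝ) : Prop :=
  ∀ U : Finset V, U.Nonempty → (U.card : ℝ) ≤ R →
    f U.card * U.card ≤ ((extNbhd G U).card : ℝ)

/-- The expansion function `f_β` on `{1, …, ⌊β n₁⌋}`. -/
noncomputable def fBeta (β : ℝ) (n1 : ℕ) (t : ℕ) : ℝ :=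
  if t = Nat.floor (β * n1) then 2 * (1 + 39 * β) / (3 * β)
  else if (t : ℝ) < (n1 : ℝ) ^ (0.1 : ℝ) then Real.log n1 ^ (0.8 : ℝ)
  else 11

/-- `G₁` is `(n₁, d, β)`-quasi-random. -/
def QuasiRandom {V : Type*} [Fintype V] (G1 : SimpleGraph V) (n1 : ℕ) (d β : ℝ) : Prop :=
  (∀ v : V, d / 150 ≤ (G1.degree v : ℝ)) ∧
  (∀ U : Finset V, (U.card : ℝ) < (n1 : ℝ) ^ (0.11 : ℝ) * Real.log n1 →
    (eIn G1 U : ℝ) ≤ d ^ (0.13 : ℝ) * U.card) ∧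
  (∀ U : Finset V, (U.card : ℝ) < 12 * β * n1 →
    (eIn G1 U : ℝ) ≤ 50 * β * d * U.card) ∧
  (∀ U Z : Finset V, Disjoint U Z → U.card = Nat.floor (β * n1) →
    Z.card = Nat.floor ((1 / 3 - 27 * β) * n1) →
    (n1 : ℝ) * Real.log (Real.log n1) ≤ (eBetween G1 U Z : ℝ))

/-- Longest path length in `G`. -/
noncomputable def longestPath {V : Type*} [Fintype V] (G : SimpleGraph V) : ℕ :=
  sSup {l : ℕ | ∃ (u v : V) (q : G.Walk u v), q.IsPath ∧ q.length = l}

/-- `{u, v}` is a booster with respect to `Γ`. -/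
def IsBooster {V : Type*} [Fintype V] (Γ : SimpleGraph V) (u v : V) : Prop :=
  u ≠ v ∧ ¬ Γ.Adj u v ∧
    ((Γ ⊔ fromEdgeSet {s(u, v)}).IsHamiltonian ∨
      longestPath Γ < longestPath (Γ ⊔ fromEdgeSet {s(u, v)}))

/-- The booster set `B_Γ(v)`. -/
noncomputable def boosterSet {V : Type*} [Fintype V] (Γ : SimpleGraph V) (v : V) : Finset V :=
  Finset.univ.filter (fun w => IsBooster Γ v w)

/-- Membership in the family `𝓛(n, β)` with witnessing partition `V = V₁ ∪ D`. -/
def InFamilyL (n : ℕ) (β : ℝ) (G : SimpleGraph (Fin n)) (V1 D : Finset (Fin n)) : Prop :=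
  Disjoint V1 D ∧ V1 ∪ D = Finset.univ ∧
  ((D.card : ℝ) ≤ (n : ℝ) ^ (0.09 : ℝ)) ∧
  (∀ u ∈ D, 2 ≤ (G.neighborFinset u ∩ V1).card) ∧
  (∀ u ∈ D, ∀ v ∈ D, ∀ q : G.Walk u v, q.IsPath → 0 < q.length →
    2 * Real.log n / (3 * Real.log (Real.log n)) < (q.length : ℝ)) ∧
  (∀ u ∈ D, ∀ q : G.Walk u u, q.IsCycle →
    2 * Real.log n / (3 * Real.log (Real.log n)) < (q.length : ℝ)) ∧
  IsExpander (G.induce (V1 : Set (Fin n))) (β * V1.card) (fBeta β V1.card)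

/-!
If `p n ≤ 0.9 log n`, then `G` has an isolated vertex by the second moment method, and there is
nothing to pack. Otherwise `G` typically has minimum degree at most `log n / 100`, which is tiny
compared with its average degree. Hamilton cycles are deleted one at a time. At each stage the
remaining graph `Γ` has minimum degree at least two, its vertices of small degree are far apart, and
outside them only a small fraction of the degrees has been lost. Hence `Γ` contains a sparse
expanding subgraph, with only a small fraction of the edges of `G`. By Pósa's rotation technique, a
non-Hamiltonian expander has quadratically many boosters. A union bound over all sparse graphs shows
that for each sparse subgraph of `G` many of its boosters are edges of `G`, more than were deleted.
So `Γ` contains a booster, and adding at most `n` boosters to the expander makes it Hamiltonian.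
-/

/-! ## Rotations of longest paths -/

section Rotation

variable {V : Type*} {Γ Γ' : SimpleGraph V} {l l' : List V} {a b c z w : V}

/-- A path of `Γ`, given as the list of its vertices; this encoding makes rotating a path a list
operation. The empty list is allowed. -/
structure IsPathList (Γ : SimpleGraph V) (l : List V) : Prop where
  isChain : l.IsChain Γ.Adj
  nodup : l.Nodup

lemma IsPathList.nil : IsPathList Γ [] := ⟨.nil, .nil⟩

lemma IsPathList.pair (h : Γ.Adj a b) : IsPathList Γ [a, b] := ⟨by simp [h], by simp [h.ne]⟩

lemma IsPathList.cons (hl : IsPathList Γ (z :: l)) (h : Γ.Adj w z) (hw : w ∉ z :: l) :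
    IsPathList Γ (w :: z :: l) :=
  ⟨List.isChain_cons_cons.2 ⟨h, hl.isChain⟩, List.nodup_cons.2 ⟨hw, hl.nodup⟩⟩

lemma IsPathList.reverse (hl : IsPathList Γ l) : IsPathList Γ l.reverse :=
  ⟨List.isChain_reverse.2 (hl.isChain.imp fun _ _ h => h.symm), List.nodup_reverse.2 hl.nodup⟩

lemma IsPathList.mono (hΓ : Γ ≤ Γ') (hl : IsPathList Γ l) : IsPathList Γ' l :=
  ⟨hl.isChain.imp fun _ _ h => hΓ h, hl.nodup⟩

/-- A path of maximum length. -/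
def IsLongestPathList (Γ : SimpleGraph V) (l : List V) : Prop :=
  IsPathList Γ l ∧ ∀ l', IsPathList Γ l' → l'.length ≤ l.length

lemma IsLongestPathList.reverse (hl : IsLongestPathList Γ l) : IsLongestPathList Γ l.reverse :=
  ⟨hl.1.reverse, by simpa using hl.2⟩

lemma exists_isLongestPathList [Finite V] (Γ : SimpleGraph V) : ∃ l, IsLongestPathList Γ l := by
  have := Fintype.ofFinite V
  let P (m : ℕ) : Prop := ∃ l, IsPathList Γ l ∧ l.length = m
  obtain ⟨l, hl, hlen⟩ : P (Nat.findGreatest P (Fintype.card V)) :=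
    Nat.findGreatest_spec (Nat.zero_le _) ⟨[], .nil, rfl⟩
  exact ⟨l, hl, fun l' hl' => hlen ▸ Nat.le_findGreatest hl'.nodup.length_le_card ⟨l', hl', rfl⟩⟩

lemma IsLongestPathList.mem_of_adj_head (hl : IsLongestPathList Γ (z :: l)) (h : Γ.Adj z w) :
    w ∈ z :: l := by
  by_contra hw
  exact absurd (hl.2 _ (hl.1.cons h.symm hw)) (by simp)

lemma pair_infix_iff_getElem? :
    [a, b] <:+: l ↔ ∃ i, l[i]? = some a ∧ l[i + 1]? = some b := by
  constructor
  · rintro ⟨s, t, rfl⟩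
    exact ⟨s.length, by simp⟩
  · rintro ⟨i, ha, hb⟩
    obtain ⟨_, rfl⟩ := List.getElem?_eq_some_iff.1 ha
    obtain ⟨_, rfl⟩ := List.getElem?_eq_some_iff.1 hb
    exact ⟨l.take i, l.drop (i + 2), by simp⟩

lemma eq_of_pair_infix_of_nodup (hl : l.Nodup) (h : [a, b] <:+: l) (h' : [a, c] <:+: l) :
    b = c := by
  obtain ⟨i, hi, hb⟩ := pair_infix_iff_getElem?.1 h
  obtain ⟨j, hj, hc⟩ := pair_infix_iff_getElem?.1 h'
  have hij : i = j := (List.getElem?_inj (List.getElem?_eq_some_iff.1 hi).1 hl).1 (hi.trans hj.symm)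
  subst hij
  exact Option.some.inj (hb.symm.trans hc)

lemma eq_of_pair_infix_of_nodup' (hl : l.Nodup) (h : [b, a] <:+: l) (h' : [c, a] <:+: l) :
    b = c :=
  eq_of_pair_infix_of_nodup (List.nodup_reverse.2 hl)
    (by simpa using List.reverse_infix.2 h) (by simpa using List.reverse_infix.2 h')

lemma not_pair_infix_head (hl : (z :: l).Nodup) : ¬ [a, z] <:+: z :: l := by
  intro h
  obtain ⟨i, -, hi⟩ := pair_infix_iff_getElem?.1 h
  rw [List.getElem?_cons_succ] at hi
  exact (List.nodup_cons.1 hl).1 (List.mem_of_getElem? hi)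

lemma pair_infix_append (h : [a, b] <:+: l ++ l') :
    [a, b] <:+: l ∨ [a, b] <:+: l' ∨ (l.getLast? = some a ∧ l'.head? = some b) := by
  obtain ⟨i, ha, hb⟩ := pair_infix_iff_getElem?.1 h
  simp only [pair_infix_iff_getElem?, List.getLast?_eq_getElem?, List.head?_eq_getElem?]
  rcases lt_trichotomy (i + 1) l.length with hi | hi | hi
  · exact .inl ⟨i, by grind, by grind⟩
  · exact .inr (.inr ⟨by grind, by grind⟩)
  · exact .inr (.inl ⟨i - l.length, by grind, by grind⟩)

/-- A Pósa rotation: the path `z … y x …`, whose end `z` is adjacent to `x`, becomes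
`y … z x …`. The last vertex stays fixed. -/
inductive IsRotation (Γ : SimpleGraph V) : List V → List V → Prop
  | mk {z x : V} {l₂ l₁ : List V} (hadj : Γ.Adj z x) :
    IsRotation Γ ((z :: l₂) ++ x :: l₁) ((z :: l₂).reverse ++ x :: l₁)

lemma IsRotation.perm (h : IsRotation Γ l l') : l'.Perm l := by
  obtain ⟨-⟩ := h
  exact (List.reverse_perm _).append_right _

lemma IsRotation.getLast?_eq (h : IsRotation Γ l l') : l'.getLast? = l.getLast? := by
  obtain ⟨-⟩ := h
  rw [List.getLast?_append_of_ne_nil _ (by simp), List.getLast?_append_of_ne_nil _ (by simp)]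

lemma IsRotation.isPathList (h : IsRotation Γ l l') (hl : IsPathList Γ l) : IsPathList Γ l' := by
  refine ⟨?_, h.perm.nodup_iff.2 hl.nodup⟩
  obtain ⟨hadj⟩ := h
  have hchain := List.isChain_append.1 hl.isChain
  refine List.isChain_append.2
    ⟨List.isChain_reverse.2 (hchain.1.imp fun _ _ h => h.symm), hchain.2.1, ?_⟩
  simpa using hadj

lemma IsLongestPathList.of_rotations (hl : IsLongestPathList Γ l)
    (h : Relation.ReflTransGen (IsRotation Γ) l l') :
    IsLongestPathList Γ l' ∧ l'.getLast? = l.getLast? := by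
  induction h with
  | refl => exact ⟨hl, rfl⟩
  | tail _ hrot ih =>
    exact ⟨⟨hrot.isPathList ih.1.1, hrot.perm.length_eq ▸ ih.1.2⟩, hrot.getLast?_eq.trans ih.2⟩

/-- `a` and `b` are neighbours on the path `l`. -/
def AreConsecutive (l : List V) (a b : V) : Prop := [a, b] <:+: l ∨ [b, a] <:+: l

lemma pair_infix_left (h : [a, b] <:+: l.reverse) : [b, a] <:+: l ++ l' := by
  simpa using (List.reverse_infix.2 h).trans (List.prefix_append _ _).isInfix

lemma AreConsecutive.of_reverse_append {l₂ l₁ : List V} {x : V}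
    (h : AreConsecutive ((z :: l₂).reverse ++ x :: l₁) b w) (hz : w ≠ z) (hx : w ≠ x) :
    AreConsecutive ((z :: l₂) ++ x :: l₁) b w := by
  have hright := (List.suffix_append (z :: l₂) (x :: l₁)).isInfix
  rcases h with h | h
  · rcases pair_infix_append h with h | h | ⟨-, h⟩
    · exact .inr (pair_infix_left h)
    · exact .inl (h.trans hright)
    · exact absurd (by simpa using h.symm) hx
  · rcases pair_infix_append h with h | h | ⟨h, -⟩
    · exact .inl (pair_infix_left h)
    · exact .inr (h.trans hright)
    · exact absurd (by simpa using h.symm) hz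

variable [Fintype V]

/-- The ends of `l` that can be produced by successive rotations keeping its last vertex fixed. -/
noncomputable def rotationEnds (Γ : SimpleGraph V) (l : List V) : Finset V :=
  univ.filter fun v => ∃ l', Relation.ReflTransGen (IsRotation Γ) l (v :: l')

lemma mem_rotationEnds :
    w ∈ rotationEnds Γ l ↔ ∃ l', Relation.ReflTransGen (IsRotation Γ) l (w :: l') := by
  simp [rotationEnds]

lemma head_mem_rotationEnds : z ∈ rotationEnds Γ (z :: l) := mem_rotationEnds.2 ⟨l, .refl⟩

lemma exists_mem_rotationEnds_pair_infix {l₂ l₁ : List V} {x : V}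
    (h : Relation.ReflTransGen (IsRotation Γ) l ((z :: l₂) ++ x :: l₁)) (hzx : Γ.Adj z x) :
    ∃ y ∈ rotationEnds Γ l, [y, x] <:+: (z :: l₂) ++ x :: l₁ := by
  obtain ⟨s, y, hs⟩ : ∃ s y, z :: l₂ = s ++ [y] :=
    ⟨_, _, (List.dropLast_append_getLast (List.cons_ne_nil z l₂)).symm⟩
  refine ⟨y, mem_rotationEnds.2 ⟨s.reverse ++ x :: l₁, h.tail ?_⟩, s, l₁, by simp [hs]⟩
  simpa [hs] using IsRotation.mk (l₂ := l₂) (l₁ := l₁) hzx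

lemma AreConsecutive.of_rotations (h : Relation.ReflTransGen (IsRotation Γ) l l')
    (hw : w ∉ rotationEnds Γ l) (hcon : ∀ y ∈ rotationEnds Γ l, ¬ AreConsecutive l y w)
    (hb : AreConsecutive l' b w) : AreConsecutive l b w := by
  induction h generalizing b with
  | refl => exact hb
  | tail hrots hrot ih =>
    obtain @⟨z, x, l₂, l₁, hzx⟩ := hrot
    obtain ⟨y, hyE, hyx⟩ := exists_mem_rotationEnds_pair_infix hrots hzx
    refine ih (hb.of_reverse_append ?_ ?_)
    · rintro rfl
      exact hw (mem_rotationEnds.2 ⟨_, hrots⟩)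
    · rintro rfl
      exact hcon y hyE (ih (.inl hyx))

lemma mem_extNbhd {U : Finset V} : w ∈ extNbhd Γ U ↔ w ∉ U ∧ ∃ u ∈ U, Γ.Adj u w := by
  simp [extNbhd]

lemma IsLongestPathList.exists_areConsecutive (hl : IsLongestPathList Γ l)
    (hw : w ∈ extNbhd Γ (rotationEnds Γ l)) : ∃ v ∈ rotationEnds Γ l, AreConsecutive l v w := by
  obtain ⟨hwE, z, hzE, hzw⟩ := mem_extNbhd.1 hw
  by_contra! hcon
  obtain ⟨l', hrots⟩ := mem_rotationEnds.1 hzE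
  have hwl' : w ∈ l' := by
    simpa [hzw.ne'] using (hl.of_rotations hrots).1.mem_of_adj_head hzw
  obtain ⟨l₂, l₁, rfl⟩ := List.append_of_mem hwl'
  obtain ⟨y, hyE, hyw⟩ := exists_mem_rotationEnds_pair_infix hrots hzw
  exact hcon y hyE (.of_rotations hrots hwE hcon (.inl hyw))

/-- **Pósa's lemma.** -/
theorem IsLongestPathList.card_extNbhd_rotationEnds_lt (hl : IsLongestPathList Γ (z :: l)) :
    #(extNbhd Γ (rotationEnds Γ (z :: l))) < 2 * #(rotationEnds Γ (z :: l)) := by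
  set E := rotationEnds Γ (z :: l)
  let next := univ.filter fun w => ∃ v ∈ E, [v, w] <:+: z :: l
  let prev := univ.filter fun w => ∃ v ∈ E.erase z, [w, v] <:+: z :: l
  have hsub : extNbhd Γ E ⊆ next ∪ prev := by
    intro w hw
    obtain ⟨v, hv, h | h⟩ := hl.exists_areConsecutive hw
    · exact mem_union_left _ (mem_filter.2 ⟨mem_univ w, v, hv, h⟩)
    · refine mem_union_right _ (mem_filter.2 ⟨mem_univ w, v, mem_erase.2 ⟨?_, hv⟩, h⟩)
      rintro rfl
      exact not_pair_infix_head hl.1.nodup h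
  have hnext : #next ≤ #E :=
    card_le_card_of_forall_subsingleton (fun w v => [v, w] <:+: z :: l)
      (fun w hw => (mem_filter.1 hw).2)
      fun v _ w hw w' hw' => eq_of_pair_infix_of_nodup hl.1.nodup hw.2 hw'.2
  have hprev : #prev ≤ #(E.erase z) :=
    card_le_card_of_forall_subsingleton (fun w v => [w, v] <:+: z :: l)
      (fun w hw => (mem_filter.1 hw).2)
      fun v _ w hw w' hw' => eq_of_pair_infix_of_nodup' hl.1.nodup hw.2 hw'.2
  have herase : #(E.erase z) + 1 = #E := card_erase_add_one head_mem_rotationEnds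
  have := card_le_card hsub
  have := card_union_le next prev
  lia

end Rotation

/-! ## Boosters -/

section Booster

variable {V : Type*} {Γ Γ' : SimpleGraph V} {l : List V} {a b : V}

lemma exists_adj_mem_notMem (hΓ : Γ.Connected) {S : Set V} (ha : a ∈ S) (hb : b ∉ S) :
    ∃ x ∈ S, ∃ y ∉ S, Γ.Adj x y := by
  obtain ⟨w⟩ := hΓ.preconnected a b
  obtain ⟨d, -, hx, hy⟩ := w.exists_boundary_dart S ha hb
  exact ⟨d.fst, hx, d.snd, hy, d.adj⟩

lemma IsPathList.exists_longer (hl : IsPathList Γ l) (hΓ : Γ.Connected) (hne : l ≠ [])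
    (hadj : Γ.Adj (l.getLast hne) (l.head hne)) (ha : a ∉ l) :
    ∃ l', IsPathList Γ l' ∧ l.length < l'.length := by
  obtain ⟨x, hx, y, hy, hxy⟩ :=
    exists_adj_mem_notMem hΓ (S := {v | v ∈ l}) (List.head_mem hne) ha
  obtain ⟨s, t, rfl⟩ := List.append_of_mem hx
  have hchain := List.isChain_append.1 hl.isChain
  have hperm : ((x :: t) ++ s).Perm (s ++ x :: t) := List.perm_append_comm
  have hcut : IsPathList Γ ((x :: t) ++ s) := by
    refine ⟨List.isChain_append.2 ⟨hchain.2.1, hchain.1, fun c hc d hd => ?_⟩,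
      hperm.nodup_iff.2 hl.nodup⟩
    convert hadj
    · simpa [List.getLast?_eq_some_getLast] using hc.symm
    · have hs : s ≠ [] := by rintro rfl; simp at hd
      simpa [List.head?_eq_some_head hs, List.head_append_of_ne_nil hs] using hd.symm
  exact ⟨_, hcut.cons hxy.symm fun h => hy (hperm.mem_iff.1 h), by simp; lia⟩

lemma head_ne_getLast (hl : l.Nodup) (hlen : 2 ≤ l.length) (hne : l ≠ []) :
    l.head hne ≠ l.getLast hne := by
  rw [List.head_eq_getElem, List.getLast_eq_getElem, ne_eq, hl.getElem_inj_iff]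
  lia

variable [Fintype V]

lemma IsPathList.isHamiltonian (hl : IsPathList Γ l) (hcard : 3 ≤ Fintype.card V)
    (hall : ∀ v, v ∈ l) (hne : l ≠ []) (hadj : Γ.Adj (l.getLast hne) (l.head hne)) :
    Γ.IsHamiltonian := by
  have hlen : l.length = Fintype.card V := by
    rw [← List.toFinset_card_of_nodup hl.nodup, (eq_univ_iff_forall (s := l.toFinset)).2
      (by simpa using hall), card_univ]
  have hpath : (Walk.ofSupport l hne hl.isChain).IsPath :=
    Walk.IsPath.mk' (by simpa using hl.nodup)
  refine fun _ => ⟨_, Walk.cons hadj (Walk.ofSupport l hne hl.isChain), ?_⟩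
  rw [Walk.isHamiltonianCycle_iff_isCycle_and_length_eq, Walk.cons_isCycle_iff, Walk.length_cons,
    Walk.length_ofSupport]
  refine ⟨⟨hpath, fun hmem => ?_⟩, by lia⟩
  have := hpath.length_eq_one_of_mem_edges (Sym2.eq_swap ▸ hmem)
  rw [Walk.length_ofSupport] at this
  lia

lemma bddAbove_path_lengths {V : Type*} [Finite V] (Γ : SimpleGraph V) :
    BddAbove {m : ℕ | ∃ (u v : V) (q : Γ.Walk u v), q.IsPath ∧ q.length = m} := by
  have := Fintype.ofFinite V
  refine ⟨Fintype.card V, ?_⟩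
  rintro _ ⟨u, v, q, hq, rfl⟩
  exact hq.length_lt.le

lemma IsPathList.length_le_longestPath (hl : IsPathList Γ l) : l.length ≤ longestPath Γ + 1 := by
  rcases eq_or_ne l [] with rfl | hne
  · simp
  have hpath : (Walk.ofSupport l hne hl.isChain).IsPath :=
    Walk.IsPath.mk' (by simpa using hl.nodup)
  have hle : _ ≤ longestPath Γ := le_csSup (bddAbove_path_lengths Γ) ⟨_, _, _, hpath, rfl⟩
  rw [Walk.length_ofSupport] at hle
  lia

lemma exists_isPath_length_eq_longestPath [Nonempty V] (Γ : SimpleGraph V) :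
    ∃ (u v : V) (q : Γ.Walk u v), q.IsPath ∧ q.length = longestPath Γ := by
  have hnil : (Walk.nil : Γ.Walk (Classical.arbitrary V) (Classical.arbitrary V)).IsPath := .nil
  exact Nat.sSup_mem (s := {m | ∃ (u v : V) (q : Γ.Walk u v), q.IsPath ∧ q.length = m})
    ⟨_, _, _, _, hnil, rfl⟩ (bddAbove_path_lengths Γ)

lemma longestPath_lt_card [Nonempty V] (Γ : SimpleGraph V) :
    longestPath Γ < Fintype.card V := by
  obtain ⟨u, v, q, hq, hlen⟩ := exists_isPath_length_eq_longestPath Γ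
  exact hlen ▸ hq.length_lt

lemma IsLongestPathList.length_eq [Nonempty V] (hl : IsLongestPathList Γ l) :
    l.length = longestPath Γ + 1 := by
  obtain ⟨u, v, q, hq, hlen⟩ := exists_isPath_length_eq_longestPath Γ
  refine hl.1.length_le_longestPath.antisymm ?_
  simpa [hlen] using hl.2 q.support ⟨q.isChain_adj_support, hq.support_nodup⟩

lemma IsLongestPathList.two_le_length (hl : IsLongestPathList Γ l) (hΓ : Γ.Connected)
    (hcard : 2 ≤ Fintype.card V) : 2 ≤ l.length := by
  have := Fintype.one_lt_card_iff_nontrivial.1 hcard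
  obtain ⟨x, y, hxy⟩ := exists_pair_ne V
  obtain ⟨a, -, b, -, hab⟩ := exists_adj_mem_notMem hΓ (Set.mem_singleton x) hxy.symm
  exact hl.2 _ (.pair hab)

lemma IsLongestPathList.isBooster (hl : IsLongestPathList Γ l) (hΓ : Γ.Connected)
    (hcard : 3 ≤ Fintype.card V) (hham : ¬ Γ.IsHamiltonian) (hne : l ≠ []) :
    IsBooster Γ (l.head hne) (l.getLast hne) := by
  have := hΓ.nonempty
  have hends := head_ne_getLast hl.1.nodup (hl.two_le_length hΓ (by lia)) hne
  refine ⟨hends, fun hadj => ?_, ?_⟩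
  · by_cases hall : ∀ v, v ∈ l
    · exact hham (hl.1.isHamiltonian hcard hall hne hadj.symm)
    · obtain ⟨v, hv⟩ := not_forall.1 hall
      obtain ⟨l', hl', hlt⟩ := hl.1.exists_longer hΓ hne hadj.symm hv
      exact (hl.2 l' hl').not_gt hlt
  · set Γ' := Γ ⊔ fromEdgeSet {s(l.head hne, l.getLast hne)}
    have hle : Γ ≤ Γ' := le_sup_left
    have hadj : Γ'.Adj (l.getLast hne) (l.head hne) := by
      simp [Γ', hends.symm, Sym2.eq_swap]
    by_cases hall : ∀ v, v ∈ l
    · exact .inl ((hl.1.mono hle).isHamiltonian hcard hall hne hadj)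
    · obtain ⟨v, hv⟩ := not_forall.1 hall
      obtain ⟨l', hl', hlt⟩ := (hl.1.mono hle).exists_longer (hΓ.mono hle) hne hadj hv
      have := hl'.length_le_longestPath
      have := hl.length_eq
      exact .inr (by lia)

/-- The graph on `V` whose edges are the boosters with respect to `Γ`. -/
def boosterGraph (Γ : SimpleGraph V) : SimpleGraph V where
  Adj := IsBooster Γ
  symm := ⟨fun u _ h => ⟨h.1.symm, fun hadj => h.2.1 hadj.symm, Sym2.eq_swap (a := u) ▸ h.2.2⟩⟩
  loopless := ⟨fun _ h => h.1 rfl⟩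

lemma degree_boosterGraph (v : V) : (boosterGraph Γ).degree v = #(boosterSet Γ v) := by
  rw [← card_neighborFinset_eq_degree]
  congr 1
  ext
  rw [mem_neighborFinset, boosterSet, mem_filter_univ]
  rfl

lemma edgeCount_eq_ncard (Γ : SimpleGraph V) : edgeCount Γ = Γ.edgeSet.ncard := by
  rw [edgeCount, ← coe_edgeFinset, Set.ncard_coe_finset]

lemma edgeCount_sup_fromEdgeSet_le (Γ : SimpleGraph V) (e : Sym2 V) :
    edgeCount (Γ ⊔ fromEdgeSet {e}) ≤ edgeCount Γ + 1 := by
  rw [edgeCount_eq_ncard, edgeCount_eq_ncard, edgeSet_sup, edgeSet_fromEdgeSet]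
  exact (Set.ncard_union_le _ _).trans
    (Nat.add_le_add_left ((Set.ncard_le_ncard Set.sdiff_subset).trans_eq (Set.ncard_singleton e)) _)

lemma isHamiltonian_of_exists_booster [Nonempty V] {Γ₀ G : SimpleGraph V} (hle : Γ₀ ≤ G)
    (h : ∀ Γ, Γ₀ ≤ Γ → Γ ≤ G → edgeCount Γ ≤ edgeCount Γ₀ + Fintype.card V → ¬ Γ.IsHamiltonian →
      ∃ u v, IsBooster Γ u v ∧ G.Adj u v) : G.IsHamiltonian := by
  by_contra hG
  have key (j : ℕ) (hj : j ≤ Fintype.card V) : ∃ Γ, Γ₀ ≤ Γ ∧ Γ ≤ G ∧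
      edgeCount Γ ≤ edgeCount Γ₀ + j ∧ j ≤ longestPath Γ := by
    induction j with
    | zero => exact ⟨Γ₀, le_rfl, hle, le_rfl, Nat.zero_le _⟩
    | succ j ih =>
      obtain ⟨Γ, hΓ₀, hΓG, hedges, hpath⟩ := ih (by lia)
      obtain ⟨u, v, hbooster, huv⟩ :=
        h Γ hΓ₀ hΓG (by lia) fun hΓ => hG (hΓ.mono hΓG)
      have hΓ'G : Γ ⊔ fromEdgeSet {s(u, v)} ≤ G := sup_le hΓG <| by
        simpa using Or.inr huv
      refine ⟨_, hΓ₀.trans le_sup_left, hΓ'G, ?_, ?_⟩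
      · exact (edgeCount_sup_fromEdgeSet_le Γ _).trans (by lia)
      · rcases hbooster.2.2 with hham | hlt
        · exact absurd (hham.mono hΓ'G) hG
        · lia
  obtain ⟨Γ, -, -, -, hpath⟩ := key _ le_rfl
  exact (longestPath_lt_card Γ).not_ge hpath

end Booster

section PosaExpander

variable {V : Type*} [Fintype V] {Γ Γ' : SimpleGraph V} {l : List V}

/-- The expansion used with Pósa's lemma: every set of at most a quarter of the vertices has at
least twice as many external neighbours. -/
def IsPosaExpander (Γ : SimpleGraph V) : Prop :=
  IsExpander Γ (Fintype.card V / 4) fun _ => 2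

lemma isPosaExpander_iff : IsPosaExpander Γ ↔
    ∀ U : Finset V, U.Nonempty → 4 * #U ≤ Fintype.card V → 2 * #U ≤ #(extNbhd Γ U) := by
  refine forall_congr' fun U => forall_congr' fun _ => ?_
  rw [le_div_iff₀' (by norm_num)]
  beta_reduce
  norm_cast

lemma extNbhd_mono (h : Γ ≤ Γ') (U : Finset V) : extNbhd Γ U ⊆ extNbhd Γ' U := fun v hv => by
  obtain ⟨hvU, u, hu, huv⟩ := mem_extNbhd.1 hv
  exact mem_extNbhd.2 ⟨hvU, u, hu, h huv⟩

lemma IsPosaExpander.mono (h : Γ ≤ Γ') (hΓ : IsPosaExpander Γ) : IsPosaExpander Γ' :=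
  isPosaExpander_iff.2 fun U hU hcard =>
    (isPosaExpander_iff.1 hΓ U hU hcard).trans (card_le_card (extNbhd_mono h U))

lemma IsPosaExpander.exists_adj (hΓ : IsPosaExpander Γ) (hcard : 8 ≤ Fintype.card V)
    {X : Finset V} (hX : X.Nonempty) (hhalf : 2 * #X ≤ Fintype.card V) :
    ∃ x ∈ X, ∃ y ∉ X, Γ.Adj x y := by
  obtain ⟨U, hUX, hU⟩ := exists_subset_card_eq (min_le_left #X (Fintype.card V / 4))
  have := hX.card_pos
  have hexp := isPosaExpander_iff.1 hΓ U (card_pos.1 (by lia)) (by lia)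
  by_contra! hno
  have hsub : extNbhd Γ U ⊆ X \ U := fun y hy => by
    obtain ⟨hyU, x, hx, hxy⟩ := mem_extNbhd.1 hy
    exact mem_sdiff.2 ⟨by_contra fun hyX => hno x (hUX hx) y hyX hxy, hyU⟩
  have := card_le_card hsub
  rw [card_sdiff_of_subset hUX] at this
  lia

lemma IsPosaExpander.connected (hΓ : IsPosaExpander Γ) (hcard : 8 ≤ Fintype.card V) :
    Γ.Connected := by
  have : Nonempty V := Fintype.card_pos_iff.1 (by lia)
  refine ⟨fun a b => by_contra fun hab => ?_⟩
  set X : Finset V := univ.filter (Γ.Reachable a)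
  have hX : ∀ x, x ∈ X ↔ Γ.Reachable a x := by simp [X]
  have hclosed {x y} (hxy : Γ.Adj x y) : x ∈ X ↔ y ∈ X := by
    rw [hX, hX]
    exact ⟨fun h => h.trans hxy.reachable, fun h => h.trans hxy.symm.reachable⟩
  have hcompl := card_compl_add_card X
  rcases le_total (2 * #X) (Fintype.card V) with h | h
  · obtain ⟨x, hx, y, hy, hxy⟩ := hΓ.exists_adj hcard ⟨a, (hX a).2 .rfl⟩ h
    exact hy ((hclosed hxy).1 hx)
  · obtain ⟨x, hx, y, hy, hxy⟩ := hΓ.exists_adj hcard (X := Xᶜ)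
      ⟨b, mem_compl.2 fun hb => hab ((hX b).1 hb)⟩ (by lia)
    exact mem_compl.1 hx ((hclosed hxy).2 (by simpa using hy))

lemma IsPosaExpander.card_lt_four_mul_card_rotationEnds (hΓ : IsPosaExpander Γ)
    (hl : IsLongestPathList Γ l) (hne : l ≠ []) : Fintype.card V < 4 * #(rotationEnds Γ l) := by
  obtain ⟨z, l, rfl⟩ := List.exists_cons_of_ne_nil hne
  by_contra! hle
  exact (isPosaExpander_iff.1 hΓ _ ⟨z, head_mem_rotationEnds⟩ hle).not_gt
    hl.card_extNbhd_rotationEnds_lt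

lemma IsPosaExpander.rotationEnds_subset_boosterSet (hΓ : IsPosaExpander Γ)
    (hcard : 8 ≤ Fintype.card V) (hham : ¬ Γ.IsHamiltonian) (hl : IsLongestPathList Γ l)
    (hne : l ≠ []) : rotationEnds Γ l ⊆ boosterSet Γ (l.getLast hne) := by
  intro a ha
  obtain ⟨l', hrots⟩ := mem_rotationEnds.1 ha
  obtain ⟨hl', hlast⟩ := hl.of_rotations hrots
  have hbooster := hl'.isBooster (hΓ.connected hcard) (by lia) hham (List.cons_ne_nil a l')
  rw [List.getLast?_eq_some_getLast (List.cons_ne_nil a l'), List.getLast?_eq_some_getLast hne,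
    Option.some_inj] at hlast
  rw [hlast] at hbooster
  exact mem_filter.2 ⟨mem_univ _, (boosterGraph Γ).adj_symm hbooster⟩

lemma IsPosaExpander.sq_card_le_card_boosters (hΓ : IsPosaExpander Γ)
    (hcard : 8 ≤ Fintype.card V) (hham : ¬ Γ.IsHamiltonian) :
    Fintype.card V ^ 2 ≤ 32 * edgeCount (boosterGraph Γ) := by
  have : Nonempty V := Fintype.card_pos_iff.1 (by lia)
  have hnil {l : List V} (hl : IsLongestPathList Γ l) : l ≠ [] :=
    List.ne_nil_of_length_eq_add_one hl.length_eq
  obtain ⟨l, hl⟩ := exists_isLongestPathList Γ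
  have hdegree : ∀ a ∈ rotationEnds Γ l, Fintype.card V ≤ 4 * (boosterGraph Γ).degree a := by
    intro a ha
    obtain ⟨l', hrots⟩ := mem_rotationEnds.1 ha
    have hl' := (hl.of_rotations hrots).1.reverse
    have hends := hΓ.card_lt_four_mul_card_rotationEnds hl' (hnil hl')
    have hsub := card_le_card (hΓ.rotationEnds_subset_boosterSet hcard hham hl' (hnil hl'))
    rw [degree_boosterGraph]
    simp only [List.getLast_reverse, List.head_cons] at hsub
    lia
  have hends := hΓ.card_lt_four_mul_card_rotationEnds hl (hnil hl)
  have hsum : #(rotationEnds Γ l) * Fintype.card V ≤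
      4 * ∑ a, (boosterGraph Γ).degree a := by
    rw [mul_sum, ← smul_eq_mul]
    exact (card_nsmul_le_sum _ _ _ hdegree).trans (sum_le_sum_of_subset (subset_univ _))
  rw [sum_degrees_eq_twice_card_edges] at hsum
  rw [edgeCount]
  nlinarith

end PosaExpander

/-! ## Sparse expanding subgraphs -/

section HittingSet

variable {ι α : Type*} {F : Finset ι} {X : Finset α} {f : ι → Finset α} {η : ℝ}

lemma exists_mem_mul_card_le_card_filter (hX : X.Nonempty) (hsub : ∀ i ∈ F, f i ⊆ X)
    (hη : ∀ i ∈ F, η * #X ≤ #(f i)) : ∃ x ∈ X, η * #F ≤ #{i ∈ F | x ∈ f i} := by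
  have hcount : ∑ x ∈ X, #{i ∈ F | x ∈ f i} = ∑ i ∈ F, #(f i) := by
    refine (sum_card_bipartiteAbove_eq_sum_card_bipartiteBelow (fun x i => x ∈ f i)).trans
      (sum_congr rfl fun i hi => congrArg card ?_)
    exact filter_mem_eq_inter.trans (inter_eq_right.2 (hsub i hi))
  refine exists_le_of_sum_le hX ?_
  have := sum_le_sum hη
  rw [← Nat.cast_sum, hcount, Nat.cast_sum]
  simp only [sum_const, nsmul_eq_mul] at this ⊢
  linarith

lemma exists_card_filter_disjoint_le (hη₁ : η ≤ 1) (hX : X.Nonempty) (hsub : ∀ i ∈ F, f i ⊆ X)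
    (hη : ∀ i ∈ F, η * #X ≤ #(f i)) (r : ℕ) :
    ∃ R ⊆ X, #R ≤ r ∧ (#{i ∈ F | Disjoint (f i) R} : ℝ) ≤ (1 - η) ^ r * #F := by
  induction r with
  | zero => exact ⟨∅, by simp⟩
  | succ r ih =>
    obtain ⟨R, hRX, hcard, hR⟩ := ih
    set F' := {i ∈ F | Disjoint (f i) R}
    have hF' {i} (hi : i ∈ F') : i ∈ F := filter_subset _ _ hi
    obtain ⟨x, hx, hxF⟩ := exists_mem_mul_card_le_card_filter (F := F') hX
      (fun i hi => hsub i (hF' hi)) fun i hi => hη i (hF' hi)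
    refine ⟨insert x R, insert_subset hx hRX, (card_insert_le _ _).trans (by lia), ?_⟩
    have hmiss : {i ∈ F | Disjoint (f i) (insert x R)} = {i ∈ F' | x ∉ f i} := by
      ext i
      simp only [F', mem_filter, disjoint_insert_right]
      tauto
    have hsplit : (#{i ∈ F' | x ∈ f i} + #{i ∈ F' | x ∉ f i} : ℝ) = #F' :=
      mod_cast card_filter_add_card_filter_not (s := F') (fun i => x ∈ f i)
    calc (#{i ∈ F | Disjoint (f i) (insert x R)} : ℝ)
        ≤ (1 - η) * #F' := by rw [hmiss]; linarith
      _ ≤ (1 - η) * ((1 - η) ^ r * #F) := mul_le_mul_of_nonneg_left hR (by linarith)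
      _ = (1 - η) ^ (r + 1) * #F := by ring

lemma exists_hittingSet (hη₁ : η ≤ 1) (hX : X.Nonempty) (hsub : ∀ i ∈ F, f i ⊆ X)
    (hη : ∀ i ∈ F, η * #X ≤ #(f i)) {r : ℕ} (hr : (1 - η) ^ r * #F < 1) :
    ∃ R ⊆ X, #R ≤ r ∧ ∀ i ∈ F, ¬ Disjoint (f i) R := by
  obtain ⟨R, hRX, hcard, hR⟩ := exists_card_filter_disjoint_le hη₁ hX hsub hη r
  have hempty := hR.trans_lt hr
  rw [Nat.cast_lt_one, card_eq_zero, filter_eq_empty_iff] at hempty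
  exact ⟨R, hRX, hcard, hempty⟩

end HittingSet

section WellSeparated

variable {V : Type*} [Fintype V] {G Γ : SimpleGraph V} {S A B : Finset V} {a b u x y : V}

lemma mem_eIn_edges {T : Finset V} {e : Sym2 V} :
    e ∈ G.edgeFinset.filter (fun e => ∀ v ∈ e, v ∈ T) ↔ e ∈ G.edgeSet ∧ ∀ v ∈ e, v ∈ T := by
  rw [mem_filter, mem_edgeFinset]

lemma eIn_mono (h : Γ ≤ G) (T : Finset V) : eIn Γ T ≤ eIn G T :=
  card_le_card (filter_subset_filter _ (edgeFinset_mono h))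

lemma length_le_eIn_support {p : G.Walk a b} (hp : p.IsTrail) :
    p.length ≤ eIn G p.support.toFinset := by
  rw [← p.length_edges, ← List.toFinset_card_of_nodup hp.edges_nodup]
  refine card_le_card fun e he => ?_
  rw [List.mem_toFinset] at he
  refine mem_eIn_edges.2 ⟨p.edges_subset_edgeSet he, fun v hv => ?_⟩
  exact List.mem_toFinset.2 (p.mem_support_of_mem_edges he hv)

/-- Few edges lie near the vertices of `S`. This forces these vertices to be far apart and away
from short cycles. -/
def IsWellSeparated (G : SimpleGraph V) (S : Finset V) : Prop :=
  ∀ T Q : Finset V, #T ≤ 5 → #Q ≤ 2 → Q ⊆ T → Q ⊆ S → eIn G T + #Q ≤ #T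

lemma IsWellSeparated.anti (h : Γ ≤ G) (hS : IsWellSeparated G S) : IsWellSeparated Γ S :=
  fun T Q hT hQ hQT hQS => (Nat.add_le_add_right (eIn_mono h T) _).trans (hS T Q hT hQ hQT hQS)

lemma IsWellSeparated.eq_of_walk (hS : IsWellSeparated G S) (ha : a ∈ S) (hb : b ∈ S)
    (p : G.Walk a b) (hp : p.length ≤ 4) : a = b := by
  by_contra hab
  have hpath := p.bypass_isPath
  have hlen := p.length_bypass_le_length
  have hcard := List.toFinset_card_of_nodup hpath.support_nodup
  rw [Walk.length_support] at hcard
  have := hS p.bypass.support.toFinset {a, b} (by lia) card_le_two (by simp [insert_subset_iff])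
    (by simp [insert_subset_iff, ha, hb])
  rw [card_pair hab] at this
  have := length_le_eIn_support hpath.isTrail
  lia

lemma IsWellSeparated.not_isCycle (hS : IsWellSeparated G S) (ha : a ∈ S) (p : G.Walk a a)
    (hp : p.length ≤ 4) : ¬ p.IsCycle := by
  intro hcyc
  have hcard : #p.support.toFinset = p.length := by
    rw [← p.cons_tail_support, List.toFinset_cons,
      insert_eq_of_mem (List.mem_toFinset.2 (Walk.end_mem_tail_support hcyc.not_nil)),
      List.toFinset_card_of_nodup hcyc.support_nodup, List.length_tail, p.length_support]
    rfl
  have := hS p.support.toFinset {a} (by lia) (by simp) (by simp) (by simpa)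
  rw [card_singleton] at this
  have := length_le_eIn_support hcyc.isTrail
  lia

lemma IsWellSeparated.not_triangle (hS : IsWellSeparated G S) (ha : a ∈ S) (hax : G.Adj a x)
    (hxy : G.Adj x y) : ¬ G.Adj y a := by
  intro hya
  refine hS.not_isCycle ha (.cons hax (.cons hxy (.cons hya .nil))) (by simp) ?_
  simp [Walk.cons_isCycle_iff, hax.ne', hax.ne, hxy.ne, hya.ne, hya.ne']

lemma IsWellSeparated.eq_of_adj_of_adj (hS : IsWellSeparated G S) (ha : a ∈ S) (hua : u ≠ a)
    (hax : G.Adj a x) (hxu : G.Adj x u) (huy : G.Adj u y) (hya : G.Adj y a) : x = y := by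
  by_contra hxy
  refine hS.not_isCycle ha (.cons hax (.cons hxu (.cons huy (.cons hya .nil)))) (by simp) ?_
  simp [Walk.cons_isCycle_iff, hax.ne', hax.ne, hxu.ne, huy.ne, hya.ne, hua, hua.symm, hxy]

lemma IsWellSeparated.eq_of_adj_left (hS : IsWellSeparated G S) (hA : A ⊆ S) (hu : u ∉ S)
    (hx : x ∈ A ∪ extNbhd G A) (hy : y ∈ A ∪ extNbhd G A) (hux : G.Adj u x) (huy : G.Adj u y) :
    x = y := by
  have hnear {x} (hx : x ∈ A ∪ extNbhd G A) :
      ∃ a ∈ A, (x = a ∨ G.Adj a x) ∧ ∃ p : G.Walk a x, p.length ≤ 1 := by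
    rcases mem_union.1 hx with hx | hx
    · exact ⟨x, hx, .inl rfl, .nil, by simp⟩
    · obtain ⟨-, a, ha, hax⟩ := mem_extNbhd.1 hx
      exact ⟨a, ha, .inr hax, hax.toWalk, by simp⟩
  obtain ⟨a, ha, hax, p, hp⟩ := hnear hx
  obtain ⟨b, hb, hby, q, hq⟩ := hnear hy
  obtain rfl : a = b := hS.eq_of_walk (hA ha) (hA hb)
    ((p.append (.cons hux.symm (.cons huy .nil))).append q.reverse) (by simp; lia)
  have hua : u ≠ a := fun h => hu (h ▸ hA ha)
  rcases hax with rfl | hax <;> rcases hby with rfl | hay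
  · rfl
  · exact absurd hay.symm (hS.not_triangle (hA ha) hux.symm huy)
  · exact absurd huy (hS.not_triangle (hA ha) hax hux.symm)
  · exact hS.eq_of_adj_of_adj (hA ha) hua hax hux.symm huy hay.symm

lemma extNbhd_eq_biUnion_neighborFinset_sdiff (A : Finset V) :
    extNbhd Γ A = (A.biUnion fun v => Γ.neighborFinset v) \ A := by
  ext v
  simp [mem_extNbhd, and_comm]

lemma IsWellSeparated.two_mul_card_le_card_extNbhd (hS : IsWellSeparated Γ S) (hA : A ⊆ S)
    (hdeg : ∀ v ∈ A, 2 ≤ Γ.degree v) : 2 * #A ≤ #(extNbhd Γ A) := by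
  have hdisj : Disjoint (A.biUnion fun v => Γ.neighborFinset v) A := by
    refine disjoint_left.2 fun x hx hxA => ?_
    obtain ⟨a, ha, hax⟩ := mem_biUnion.1 hx
    rw [mem_neighborFinset] at hax
    exact hax.ne (hS.eq_of_walk (hA ha) (hA hxA) hax.toWalk (by simp))
  rw [extNbhd_eq_biUnion_neighborFinset_sdiff, sdiff_eq_self_of_disjoint hdisj, card_biUnion]
  · simpa [mul_comm] using card_nsmul_le_sum A _ 2 hdeg
  · refine fun a ha b hb hab => disjoint_left.2 fun x hx hx' => hab ?_
    rw [mem_neighborFinset] at hx hx'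
    exact hS.eq_of_walk (hA ha) (hA hb) (.cons hx hx'.symm.toWalk) (by simp)

lemma IsWellSeparated.card_extNbhd_inter_le (hS : IsWellSeparated Γ S) (hA : A ⊆ S)
    (hB : Disjoint B S) : #(extNbhd Γ B ∩ (A ∪ extNbhd Γ A)) ≤ #B := by
  refine card_le_card_of_forall_subsingleton (fun x b => Γ.Adj b x)
    (fun x hx => (mem_extNbhd.1 (mem_inter.1 hx).1).2) fun b hb x hx y hy => ?_
  exact hS.eq_of_adj_left hA (disjoint_left.1 hB hb) (mem_inter.1 hx.1).2 (mem_inter.1 hy.1).2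
    hx.2 hy.2

lemma IsWellSeparated.two_mul_card_union_le_card_extNbhd (hS : IsWellSeparated Γ S) (hA : A ⊆ S)
    (hB : Disjoint B S) (hdeg : ∀ v ∈ A, 2 ≤ Γ.degree v) (hexp : 4 * #B ≤ #(extNbhd Γ B)) :
    2 * #(A ∪ B) ≤ #(extNbhd Γ (A ∪ B)) := by
  have hsub : (extNbhd Γ A \ B) ∪ (extNbhd Γ B \ (A ∪ extNbhd Γ A)) ⊆ extNbhd Γ (A ∪ B) := by
    intro x hx
    rcases mem_union.1 hx with hx | hx <;> obtain ⟨hx, hxN⟩ := mem_sdiff.1 hx <;>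
      obtain ⟨hxU, u, hu, hux⟩ := mem_extNbhd.1 hx
    · exact mem_extNbhd.2 ⟨by simp [hxU, hxN], u, mem_union_left _ hu, hux⟩
    · exact mem_extNbhd.2 ⟨by grind, u, mem_union_right _ hu, hux⟩
  have hdisj : Disjoint (extNbhd Γ A \ B) (extNbhd Γ B \ (A ∪ extNbhd Γ A)) :=
    disjoint_left.2 fun x hx hx' =>
      (mem_sdiff.1 hx').2 (mem_union_right _ (mem_sdiff.1 hx).1)
  have hcard := card_le_card hsub
  rw [card_union_of_disjoint hdisj] at hcard
  have hA₂ := hS.two_mul_card_le_card_extNbhd hA hdeg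
  have hinter := hS.card_extNbhd_inter_le hA hB
  have := card_inter_add_card_sdiff (extNbhd Γ A) B
  have := card_inter_add_card_sdiff (extNbhd Γ B) (A ∪ extNbhd Γ A)
  have := card_le_card (inter_subset_right (s₁ := extNbhd Γ A) (s₂ := B))
  have := card_union_le A B
  lia

end WellSeparated

section Expansion

variable {V : Type*} [Fintype V] {G G' H Γ : SimpleGraph V} {S U T : Finset V} {d s : ℕ}

lemma sum_degree_le_two_mul_eIn (hT : U ∪ extNbhd Γ U ⊆ T) :
    ∑ v ∈ U, Γ.degree v ≤ 2 * eIn Γ T := by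
  set F := Γ.edgeFinset.filter fun e => ∀ v ∈ e, v ∈ T
  have hsub (v) (hv : v ∈ U) : Γ.incidenceFinset v ⊆ {e ∈ F | v ∈ e} := by
    intro e he
    rw [incidenceFinset_eq_filter, mem_filter, mem_edgeFinset] at he
    refine mem_filter.2 ⟨mem_eIn_edges.2 ⟨he.1, fun w hw => hT ?_⟩, he.2⟩
    by_cases hwU : w ∈ U
    · exact mem_union_left _ hwU
    · have hvw : v ≠ w := fun h => hwU (h ▸ hv)
      obtain rfl := (Sym2.mem_and_mem_iff hvw).1 ⟨he.2, hw⟩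
      exact mem_union_right _ (mem_extNbhd.2 ⟨hwU, v, hv, he.1⟩)
  calc ∑ v ∈ U, Γ.degree v ≤ ∑ v ∈ U, #{e ∈ F | v ∈ e} :=
        sum_le_sum fun v hv => card_incidenceFinset_eq_degree Γ v ▸ card_le_card (hsub v hv)
    _ = ∑ e ∈ F, #{v ∈ U | v ∈ e} :=
        sum_card_bipartiteAbove_eq_sum_card_bipartiteBelow fun v e => v ∈ e
    _ ≤ ∑ e ∈ F, 2 := by
        refine sum_le_sum fun e _ => (card_le_card (t := e.toFinset) fun v hv => ?_).trans ?_
        · exact Sym2.mem_toFinset.2 (mem_filter.1 hv).2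
        · rw [Sym2.card_toFinset]
          split_ifs <;> lia
    _ = 2 * eIn Γ T := by rw [sum_const, smul_eq_mul, mul_comm]; rfl

lemma four_mul_card_le_card_extNbhd (hd : 0 < d) (hdeg : ∀ v ∈ U, d ≤ Γ.degree v)
    (hspan : ∀ T : Finset V, #T ≤ 5 * s → 10 * eIn Γ T ≤ d * #T) (hU : #U ≤ s) :
    4 * #U ≤ #(extNbhd Γ U) := by
  by_contra! hlt
  have hT := card_union_le U (extNbhd Γ U)
  have hupper := hspan (U ∪ extNbhd Γ U) (by lia)
  have hlower : #U * d ≤ 2 * eIn Γ (U ∪ extNbhd Γ U) :=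
    (card_nsmul_le_sum U _ d hdeg).trans (sum_degree_le_two_mul_eIn Subset.rfl)
  have : d * #(U ∪ extNbhd Γ U) < d * (5 * #U) := Nat.mul_lt_mul_of_pos_left (by lia) hd
  nlinarith

lemma isPosaExpander_of_isWellSeparated (hS : IsWellSeparated Γ S) (hd : 0 < d)
    (hdeg₂ : ∀ v, 2 ≤ Γ.degree v) (hdeg : ∀ v ∉ S, d ≤ Γ.degree v)
    (hspan : ∀ T : Finset V, #T ≤ 5 * s → 10 * eIn Γ T ≤ d * #T)
    (hcross : ∀ A B : Finset V, Disjoint A B → s ≤ #A → Fintype.card V ≤ 4 * #B →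
      ∃ a ∈ A, ∃ b ∈ B, Γ.Adj a b) : IsPosaExpander Γ := by
  refine isPosaExpander_iff.2 fun U _ h4U => ?_
  rcases le_or_gt s #U with hs | hs
  · by_contra! hlt
    have hcompl := card_compl_add_card (U ∪ extNbhd Γ U)
    have hunion := card_union_le U (extNbhd Γ U)
    obtain ⟨a, ha, b, hb, hab⟩ := hcross U (U ∪ extNbhd Γ U)ᶜ
      (disjoint_compl_right.mono_left subset_union_left) hs (by lia)
    rw [mem_compl, mem_union, not_or] at hb
    exact hb.2 (mem_extNbhd.2 ⟨hb.1, a, ha, hab⟩)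
  · have hexp : 4 * #(U \ S) ≤ #(extNbhd Γ (U \ S)) :=
      four_mul_card_le_card_extNbhd hd (fun v hv => hdeg v (mem_sdiff.1 hv).2) hspan
        ((card_le_card sdiff_subset).trans hs.le)
    have := hS.two_mul_card_union_le_card_extNbhd inter_subset_right sdiff_disjoint
      (fun v _ => hdeg₂ v) hexp (A := U ∩ S)
    rwa [union_comm, sdiff_union_inter] at this

lemma edgeCount_sup_le (G H : SimpleGraph V) : edgeCount (G ⊔ H) ≤ edgeCount G + edgeCount H := by
  simpa only [edgeCount_eq_ncard, edgeSet_sup] using Set.ncard_union_le _ _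

lemma edgeCount_fromEdgeSet_le (E : Finset (Sym2 V)) :
    edgeCount (fromEdgeSet (E : Set (Sym2 V))) ≤ #E := by
  rw [edgeCount_eq_ncard, edgeSet_fromEdgeSet, ← Set.ncard_coe_finset]
  exact Set.ncard_le_ncard Set.sdiff_subset

lemma exists_le_degree_edgeCount_le (G : SimpleGraph V) (k : V → ℕ) (hk : ∀ v, k v ≤ G.degree v) :
    ∃ Γ ≤ G, (∀ v, k v ≤ Γ.degree v) ∧ edgeCount Γ ≤ ∑ v, k v := by
  have hchoose (v) : ∃ N ⊆ G.neighborFinset v, #N = k v := exists_subset_card_eq (hk v)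
  choose N hN hcard using hchoose
  set E : Finset (Sym2 V) := univ.biUnion fun v => (N v).image fun w => s(v, w)
  obtain ⟨Γ, hΓ⟩ : ∃ Γ, Γ = fromEdgeSet (E : Set (Sym2 V)) := ⟨_, rfl⟩
  have hadj {v w} (hw : w ∈ N v) : G.Adj v w := (mem_neighborFinset _ _ _).1 (hN v hw)
  refine ⟨Γ, fun u v huv => ?_, fun v => ?_, hΓ ▸ (edgeCount_fromEdgeSet_le E).trans ?_⟩
  · rw [hΓ, fromEdgeSet_adj, mem_coe, mem_biUnion] at huv
    obtain ⟨⟨x, -, hx⟩, -⟩ := huv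
    obtain ⟨w, hw, hxw⟩ := mem_image.1 hx
    rw [← mem_edgeSet, ← hxw]
    exact hadj hw
  · rw [← hcard v, ← card_neighborFinset_eq_degree]
    refine card_le_card fun w hw => (mem_neighborFinset _ _ _).2 ?_
    rw [hΓ, fromEdgeSet_adj, mem_coe]
    exact ⟨mem_biUnion.2 ⟨v, mem_univ v, mem_image_of_mem _ hw⟩, (hadj hw).ne⟩
  · exact card_biUnion_le.trans (sum_le_sum fun v _ => hcard v ▸ card_image_le)

/-- The subgraph consists of `H` together with a bounded number of edges at each vertex. -/
lemma exists_isPosaExpander_edgeCount_le (hS : IsWellSeparated G S) (hd : 0 < d)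
    (hdeg₂ : ∀ v, 2 ≤ G.degree v) (hdeg : ∀ v ∉ S, d + 2 ≤ G.degree v)
    (hspan : ∀ T : Finset V, #T ≤ 5 * s → 10 * eIn G T ≤ d * #T) (hH : H ≤ G)
    (hcross : ∀ A B : Finset V, Disjoint A B → s ≤ #A → Fintype.card V ≤ 4 * #B →
      ∃ a ∈ A, ∃ b ∈ B, H.Adj a b) :
    ∃ Γ ≤ G, IsPosaExpander Γ ∧ edgeCount Γ ≤ edgeCount H + Fintype.card V * (d + 2) := by
  obtain ⟨Γ, hΓ, hk, hcount⟩ := exists_le_degree_edgeCount_le G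
    (fun v => if v ∈ S then 2 else d + 2) fun v => by split_ifs with h; exacts [hdeg₂ v, hdeg v h]
  have hle : H ⊔ Γ ≤ G := sup_le hH hΓ
  have hdegree (v) : Γ.degree v ≤ (H ⊔ Γ).degree v := degree_le_of_le le_sup_right
  refine ⟨H ⊔ Γ, hle, isPosaExpander_of_isWellSeparated (hS.anti hle) hd ?_ ?_
    (fun T hT => (Nat.mul_le_mul_left _ (eIn_mono hle T)).trans (hspan T hT)) ?_, ?_⟩
  · intro v
    have := hk v
    have := hdegree v
    grind
  · intro v hv
    have := hk v
    have := hdegree v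
    grind
  · intro A B hAB hA hB
    obtain ⟨a, ha, b, hb, hab⟩ := hcross A B hAB hA hB
    exact ⟨a, ha, b, hb, .inl hab⟩
  · refine (edgeCount_sup_le H Γ).trans (Nat.add_le_add_left (hcount.trans ?_) _)
    refine (sum_le_card_nsmul univ _ (d + 2) fun v _ => ?_).trans_eq (by simp)
    split_ifs <;> lia

end Expansion

/-! ## Edge-disjoint Hamilton cycles -/

section Crossing

lemma exists_of_mem_edgeSet_between {V : Type*} {G : SimpleGraph V} {A B : Set V} {e : Sym2 V}
    (he : e ∈ (G.between A B).edgeSet) :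
    ∃ a ∈ A, ∃ b ∈ B, e = s(a, b) := by
  induction e with
  | h a b =>
    rcases (between_adj.1 he).2 with ⟨ha, hb⟩ | ⟨ha, hb⟩
    · exact ⟨a, ha, b, hb, rfl⟩
    · exact ⟨b, hb, a, ha, Sym2.eq_swap⟩

variable {V : Type*} [Fintype V] {G Γ H : SimpleGraph V} {s r i : ℕ} {η : ℝ}

lemma edgeCount_eq_card_edgeFinset (G : SimpleGraph V) [Fintype G.edgeSet] :
    edgeCount G = #G.edgeFinset := by
  rw [edgeCount_eq_ncard, ← coe_edgeFinset, Set.ncard_coe_finset]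

lemma exists_subgraph_crossing (hG : G.edgeFinset.Nonempty) (hη₁ : η ≤ 1)
    (hr : (1 - η) ^ r * 4 ^ Fintype.card V < 1)
    (hcross : ∀ A B : Finset V, Disjoint A B → s ≤ #A → Fintype.card V ≤ 4 * #B →
      η * edgeCount G ≤ edgeCount (G.between A B)) :
    ∃ H ≤ G, edgeCount H ≤ r ∧ ∀ A B : Finset V, Disjoint A B → s ≤ #A →
      Fintype.card V ≤ 4 * #B → ∃ a ∈ A, ∃ b ∈ B, H.Adj a b := by
  set F : Finset (Finset V × Finset V) :=
    {q | Disjoint q.1 q.2 ∧ s ≤ #q.1 ∧ Fintype.card V ≤ 4 * #q.2}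
  have hsub (q : Finset V × Finset V) : (G.between q.1 q.2).edgeFinset ⊆ G.edgeFinset := by
    rw [edgeFinset_subset_edgeFinset]
    exact between_le
  have hF : (#F : ℝ) ≤ 4 ^ Fintype.card V := by
    have h := card_le_univ F
    rw [Fintype.card_prod, Fintype.card_finset, ← mul_pow, show 2 * 2 = 4 from rfl] at h
    exact mod_cast h
  obtain ⟨R, hRG, hcard, hR⟩ := exists_hittingSet (F := F) hη₁ hG (fun q _ => hsub q)
    (fun q hq => by
      obtain ⟨-, hdisj, hA, hB⟩ := mem_filter.1 hq
      rw [← edgeCount_eq_card_edgeFinset, ← edgeCount_eq_card_edgeFinset]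
      exact hcross q.1 q.2 hdisj hA hB)
    ((mul_le_mul_of_nonneg_left hF (pow_nonneg (sub_nonneg.2 hη₁) r)).trans_lt hr)
  refine ⟨fromEdgeSet (R : Set (Sym2 V)), fun a b hab => ?_,
    (edgeCount_fromEdgeSet_le R).trans hcard, fun A B hAB hA hB => ?_⟩
  · exact mem_edgeFinset.1 (hRG ((fromEdgeSet_adj _).1 hab).1)
  · obtain ⟨e, he, heR⟩ := not_disjoint_iff.1
      (hR (A, B) (mem_filter.2 ⟨mem_univ _, hAB, hA, hB⟩))
    rw [mem_edgeFinset] at he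
    obtain ⟨a, ha, b, hb, rfl⟩ := exists_of_mem_edgeSet_between he
    exact ⟨a, ha, b, hb, (fromEdgeSet_adj _).2 ⟨heR, fun h => disjoint_left.1 hAB ha (h ▸ hb)⟩⟩

lemma degree_le_degree_add (h : G ≤ Γ ⊔ H) (v : V) : G.degree v ≤ Γ.degree v + H.degree v := by
  simp only [← card_neighborFinset_eq_degree]
  refine (card_le_card fun w hw => ?_).trans (card_union_le _ _)
  simp only [mem_union, mem_neighborFinset] at hw ⊢
  exact h hw

lemma edgeCount_mono (h : Γ ≤ G) : edgeCount Γ ≤ edgeCount G := by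
  rw [edgeCount_eq_ncard, edgeCount_eq_ncard]
  exact Set.ncard_le_ncard (edgeSet_mono h)

lemma edgeCount_between_le_sum_degree (G : SimpleGraph V) (A B : Finset V) :
    edgeCount (G.between A B) ≤ ∑ a ∈ A, G.degree a := by
  have hsub : (G.between A B).edgeFinset ⊆ A.biUnion fun a => G.incidenceFinset a := by
    intro e he
    rw [mem_edgeFinset] at he
    obtain ⟨a, ha, b, -, rfl⟩ := exists_of_mem_edgeSet_between he
    exact mem_biUnion.2 ⟨a, ha, (mem_incidenceFinset _ _ _).2
      ((mk'_mem_incidenceSet_left_iff _).2 (between_le he))⟩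
  rw [edgeCount_eq_card_edgeFinset]
  refine (card_le_card hsub).trans (card_biUnion_le.trans_eq ?_)
  simp only [card_incidenceFinset_eq_degree]

lemma edgeCount_between_le (h : G ≤ Γ ⊔ H) (hH : ∀ v, H.degree v ≤ 2 * i) (A B : Finset V) :
    edgeCount (G.between A B) ≤ edgeCount (Γ.between A B) + 2 * i * #A := by
  have hsup : G.between A B ≤ Γ.between A B ⊔ H.between A B := fun u v huv =>
    (h (between_le huv)).imp (fun hΓ => ⟨hΓ, huv.2⟩) fun hH => ⟨hH, huv.2⟩
  have hsum : ∑ a ∈ A, H.degree a ≤ #A * (2 * i) := sum_le_card_nsmul _ _ _ fun a _ => hH a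
  have := (edgeCount_mono hsup).trans (edgeCount_sup_le _ _)
  have := edgeCount_between_le_sum_degree H A B
  lia

lemma edgeCount_le_card_mul (hH : ∀ v, H.degree v ≤ 2 * i) :
    edgeCount H ≤ Fintype.card V * i := by
  have h := sum_le_card_nsmul univ _ _ fun v _ => hH v
  rw [sum_degrees_eq_twice_card_edges, card_univ, smul_eq_mul] at h
  rw [edgeCount]
  lia

end Crossing

section Hamiltonicity

variable {V : Type*} [Fintype V] {G Γ H : SimpleGraph V} {S : Finset V} {d s r i : ℕ} {η : ℝ}

lemma isHamiltonian_of_boosters (hcard : 8 ≤ Fintype.card V) (hS : IsWellSeparated G S)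
    (hd : 0 < d) (hdeg₂ : ∀ v, 2 ≤ G.degree v) (hdeg : ∀ v ∉ S, d + 2 ≤ G.degree v)
    (hspan : ∀ T : Finset V, #T ≤ 5 * s → 10 * eIn G T ≤ d * #T)
    (hη₁ : η ≤ 1) (hr : (1 - η) ^ r * 4 ^ Fintype.card V < 1)
    (hcross : ∀ A B : Finset V, Disjoint A B → s ≤ #A → Fintype.card V ≤ 4 * #B →
      η * edgeCount G ≤ edgeCount (G.between A B))
    (hboost : ∀ Γ ≤ G, edgeCount Γ ≤ r + Fintype.card V * (d + 3) →
      Fintype.card V ^ 2 ≤ 32 * edgeCount (boosterGraph Γ) → ∃ u v, IsBooster Γ u v ∧ G.Adj u v) :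
    G.IsHamiltonian := by
  have : Nonempty V := Fintype.card_pos_iff.1 (by lia)
  have hG : G.edgeFinset.Nonempty := by
    obtain ⟨v⟩ := ‹Nonempty V›
    obtain ⟨w, hw⟩ := (degree_pos_iff_exists_adj G v).1 (by have := hdeg₂ v; lia)
    exact ⟨s(v, w), mem_edgeFinset.2 hw⟩
  obtain ⟨H, hHG, hHr, hH⟩ := exists_subgraph_crossing hG hη₁ hr hcross
  obtain ⟨Γ₀, hΓ₀, hexp, hcount⟩ :=
    exists_isPosaExpander_edgeCount_le hS hd hdeg₂ hdeg hspan hHG hH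
  refine isHamiltonian_of_exists_booster hΓ₀ fun Γ hle hΓ hΓcount hham => hboost Γ hΓ (by lia) ?_
  exact (hexp.mono hle).sq_card_le_card_boosters hcard hham

lemma isHamiltonian_of_le_sup (hcard : 8 ≤ Fintype.card V) (hΓ : Γ ≤ G) (hG : G ≤ Γ ⊔ H)
    (hH : ∀ v, H.degree v ≤ 2 * i) (hS : IsWellSeparated G S) (hd : 0 < d)
    (hdeg₂ : ∀ v, 2 * i + 2 ≤ G.degree v) (hdeg : ∀ v ∉ S, d + 2 + 2 * i ≤ G.degree v)
    (hspan : ∀ T : Finset V, #T ≤ 5 * s → 10 * eIn G T ≤ d * #T)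
    (hη₀ : 0 ≤ η) (hη₁ : η ≤ 1) (hr : (1 - η) ^ r * 4 ^ Fintype.card V < 1)
    (hcross : ∀ A B : Finset V, Disjoint A B → s ≤ #A → Fintype.card V ≤ 4 * #B →
      η * edgeCount G + 2 * i * #A ≤ edgeCount (G.between A B))
    (hboost : ∀ Γ ≤ G, edgeCount Γ ≤ r + Fintype.card V * (d + 3) →
      Fintype.card V ^ 2 ≤ 32 * edgeCount (boosterGraph Γ) →
      Fintype.card V * i < edgeCount (boosterGraph Γ ⊓ G)) :
    Γ.IsHamiltonian := by
  have hloss (v) : G.degree v ≤ Γ.degree v + 2 * i :=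
    (degree_le_degree_add hG v).trans (Nat.add_le_add_left (hH v) _)
  refine isHamiltonian_of_boosters hcard (hS.anti hΓ) hd
    (fun v => by have := hloss v; have := hdeg₂ v; lia)
    (fun v hv => by have := hloss v; have := hdeg v hv; lia)
    (fun T hT => (Nat.mul_le_mul_left _ (eIn_mono hΓ T)).trans (hspan T hT)) hη₁ hr
    (fun A B hAB hA hB => ?_) fun Γ' hΓ' hcount hsq => ?_
  · have hlt : (edgeCount (G.between A B) : ℝ) ≤ edgeCount (Γ.between A B) + 2 * i * #A :=
      mod_cast edgeCount_between_le hG hH A B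
    have hedges : (edgeCount Γ : ℝ) ≤ edgeCount G := mod_cast edgeCount_mono hΓ
    have := hcross A B hAB hA hB
    have := mul_le_mul_of_nonneg_left hedges hη₀
    linarith
  · by_contra! hnone
    have hle : boosterGraph Γ' ⊓ G ≤ H := fun u v huv =>
      (hG huv.2).resolve_left (hnone u v huv.1)
    have hlt := hboost Γ' (hΓ'.trans hΓ) hcount hsq
    have hmono : edgeCount (boosterGraph Γ' ⊓ G) ≤ edgeCount H := by
      simpa only [edgeCount_eq_ncard] using Set.ncard_le_ncard (edgeSet_mono hle)
    exact absurd (hlt.trans_le (hmono.trans (edgeCount_le_card_mul hH))) (lt_irrefl _)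

/-- `G` contains `k` pairwise edge-disjoint Hamilton cycles. -/
def HasDisjointHamiltonianCycles {V : Type*} [DecidableEq V] (G : SimpleGraph V) (k : ℕ) : Prop :=
  ∃ c : Fin k → Σ v : V, G.Walk v v, (∀ i, (c i).2.IsHamiltonianCycle) ∧
    ∀ i j, i ≠ j → List.Disjoint (c i).2.edges (c j).2.edges

lemma hasDisjointHamiltonianCycles_zero {V : Type*} [DecidableEq V] (G : SimpleGraph V) :
    HasDisjointHamiltonianCycles G 0 :=
  ⟨Fin.elim0, fun i => i.elim0, fun i => i.elim0⟩

lemma degree_iSup_spanningCoe_le [DecidableEq V] {k : ℕ} {c : Fin k → Σ v : V, G.Walk v v}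
    (hc : ∀ i, (c i).2.IsHamiltonianCycle) (v : V) :
    (⨆ i, (c i).2.toSubgraph.spanningCoe).degree v ≤ 2 * k := by
  have hsub : (⨆ i, (c i).2.toSubgraph.spanningCoe).neighborFinset v ⊆
      univ.biUnion fun i => ((c i).2.toSubgraph.neighborSet v).toFinset := fun w hw => by
    simpa [iSup_adj] using hw
  rw [← card_neighborFinset_eq_degree, mul_comm]
  refine (card_le_card hsub).trans
    ((card_biUnion_le_card_mul _ _ 2 fun i _ => ?_).trans_eq (by simp))
  rw [← Set.ncard_eq_toFinset_card',
    (hc i).isCycle.ncard_neighborSet_toSubgraph_eq_two ((hc i).mem_support v)]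

lemma hasDisjointHamiltonianCycles_of_sdiff [DecidableEq V] (hcard : Fintype.card V ≠ 1) (k : ℕ)
    (h : ∀ i < k, ∀ H : SimpleGraph V, (∀ v, H.degree v ≤ 2 * i) → (G \ H).IsHamiltonian) :
    HasDisjointHamiltonianCycles G k := by
  induction k with
  | zero => exact hasDisjointHamiltonianCycles_zero G
  | succ k ih =>
    obtain ⟨c, hc, hdisj⟩ := ih fun i hi => h i (by lia)
    set H : SimpleGraph V := ⨆ i, (c i).2.toSubgraph.spanningCoe
    obtain ⟨v, q, hq⟩ := h k k.lt_succ_self H (degree_iSup_spanningCoe_le hc) hcard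
    have hnew (i) : List.Disjoint (c i).2.edges (q.mapLe sdiff_le).edges := by
      intro e he heq
      rw [Walk.edges_mapLe_eq_edges] at heq
      have heH := q.edges_subset_edgeSet heq
      rw [edgeSet_sdiff] at heH
      refine heH.2 (edgeSet_mono (le_iSup _ i) ?_)
      rwa [Subgraph.edgeSet_spanningCoe, Walk.mem_edges_toSubgraph]
    obtain ⟨c', hlast, hcast⟩ : ∃ c' : Fin (k + 1) → Σ v : V, G.Walk v v,
        c' (Fin.last k) = ⟨v, q.mapLe sdiff_le⟩ ∧ ∀ i : Fin k, c' i.castSucc = c i :=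
      ⟨Fin.snoc (α := fun _ => Σ v : V, G.Walk v v) c _, Fin.snoc_last _ _,
        Fin.snoc_castSucc (α := fun _ => Σ v : V, G.Walk v v) _ _⟩
    refine ⟨c', ?_, ?_⟩
    · refine Fin.lastCases ?_ fun i => ?_
      · rw [hlast]
        exact hq.map (f := Hom.ofLE sdiff_le) Function.bijective_id
      · rw [hcast]
        exact hc i
    · refine Fin.lastCases (Fin.lastCases (absurd rfl) fun j _ => ?_)
        fun i => Fin.lastCases (fun _ => ?_) fun j hij => ?_
      · rw [hlast, hcast]
        exact (hnew j).symm
      · rw [hlast, hcast]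
        exact hnew i
      · rw [hcast, hcast]
        exact hdisj i j fun h => hij (h ▸ rfl)

end Hamiltonicity

/-! ## Binomial random graphs -/

section EdgeProducts

variable {V : Type*} [Fintype V]

/-- The pairs of distinct vertices, that is, the possible edges of a graph on `V`. -/
noncomputable def vertexPairs (V : Type*) [Fintype V] : Finset (Sym2 V) :=
  (⊤ : SimpleGraph V).edgeFinset

lemma mem_vertexPairs {G : SimpleGraph V} {e : Sym2 V} (he : e ∈ G.edgeSet) : e ∈ vertexPairs V :=
  mem_edgeFinset.2 (edgeSet_mono le_top he)

lemma card_vertexPairs (V : Type*) [Fintype V] :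
    #(vertexPairs V) = (Fintype.card V).choose 2 := by
  rw [vertexPairs, ← card_edgeFinset_top_eq_card_choose_two, ← edgeCount_eq_card_edgeFinset,
    edgeCount]

lemma edgeSet_fromEdgeSet_of_subset {V : Type*} {E : Finset (Sym2 V)} {K : SimpleGraph V}
    (hE : ∀ e ∈ E, e ∈ K.edgeSet) : (fromEdgeSet (E : Set (Sym2 V))).edgeSet = E := by
  rw [edgeSet_fromEdgeSet, sdiff_eq_left, Set.disjoint_left]
  exact fun e he => K.not_isDiag_of_mem_edgeSet (hE e he)

lemma filter_mem_edgeSet (K : SimpleGraph V) :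
    {e ∈ vertexPairs V | e ∈ K.edgeSet} = K.edgeFinset := by
  ext e
  rw [mem_filter, mem_edgeFinset]
  exact and_iff_right_of_imp mem_vertexPairs

lemma sum_prod_ite_mem_edgeSet [Fintype (SimpleGraph V)] (a b : Sym2 V → ℝ) :
    ∑ G : SimpleGraph V, ∏ e ∈ vertexPairs V,
      (if e ∈ G.edgeSet then a e else b e) =
    ∏ e ∈ vertexPairs V, (a e + b e) := by
  rw [prod_add]
  refine sum_bij' (fun G _ => {e ∈ vertexPairs V | e ∈ G.edgeSet})
    (fun E _ => fromEdgeSet (E : Set (Sym2 V))) (fun G _ => mem_powerset.2 (filter_subset _ _))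
    (fun _ _ => mem_univ _) (fun G _ => ?_) (fun E hE => ?_) fun G _ => ?_
  · rw [filter_mem_edgeSet, coe_edgeFinset, fromEdgeSet_edgeSet]
  · ext e
    have hE' (e) (he : e ∈ E) := mem_powerset.1 hE he
    simp only [mem_filter, edgeSet_fromEdgeSet_of_subset fun e he => mem_edgeFinset.1 (hE' e he),
      mem_coe]
    exact and_iff_right_of_imp (hE' e)
  · rw [prod_ite, filter_not]

lemma prod_ite_mem_edgeSet (K : SimpleGraph V) (x : ℝ) :
    ∏ e ∈ vertexPairs V, (if e ∈ K.edgeSet then x else 1) =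
      x ^ edgeCount K := by
  rw [prod_ite, prod_const, prod_const_one, mul_one, filter_mem_edgeSet, edgeCount]

lemma sum_pow_edgeCount [Fintype (SimpleGraph V)] (x : ℝ) :
    ∑ G : SimpleGraph V, x ^ edgeCount G = (x + 1) ^ (Fintype.card V).choose 2 := by
  simp only [← prod_ite_mem_edgeSet]
  rw [sum_prod_ite_mem_edgeSet, prod_const, card_vertexPairs]

lemma edgeCount_add_of_disjoint {Γ K : SimpleGraph V} (h : Disjoint Γ K) :
    edgeCount (Γ ⊔ K) = edgeCount Γ + edgeCount K := by
  rw [edgeCount_eq_ncard, edgeCount_eq_ncard, edgeCount_eq_ncard, edgeSet_sup,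
    Set.ncard_union_eq (disjoint_edgeSet.2 h)]

lemma edgeCount_bot : edgeCount (⊥ : SimpleGraph V) = 0 := by
  rw [edgeCount_eq_ncard, edgeSet_bot, Set.ncard_empty]

end EdgeProducts

section Expectation

variable {n : ℕ} {p : ℝ} {A B : SimpleGraph (Fin n) → Prop} {f g : SimpleGraph (Fin n) → ℝ}
  {Γ K : SimpleGraph (Fin n)}

lemma gnpWeight_eq_prod (n : ℕ) (p : ℝ) (G : SimpleGraph (Fin n)) :
    gnpWeight n p G = ∏ e ∈ vertexPairs (Fin n),
      if e ∈ G.edgeSet then p else 1 - p := by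
  have hcard := card_filter_add_card_filter_not (s := vertexPairs (Fin n)) (· ∈ G.edgeSet)
  rw [filter_mem_edgeSet, card_vertexPairs, Fintype.card_fin] at hcard
  rw [prod_ite, prod_const, prod_const, filter_mem_edgeSet, gnpWeight, ← hcard,
    Nat.add_sub_cancel_left]

/-- The expectation of the graph parameter `f` under `G(n, p)`. -/
noncomputable def gnpExp (n : ℕ) (p : ℝ) (f : SimpleGraph (Fin n) → ℝ) : ℝ :=
  ∑ G, gnpWeight n p G * f G

lemma gnpWeight_nonneg (hp₀ : 0 ≤ p) (hp₁ : p ≤ 1) (G : SimpleGraph (Fin n)) :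
    0 ≤ gnpWeight n p G :=
  mul_nonneg (pow_nonneg hp₀ _) (pow_nonneg (sub_nonneg.2 hp₁) _)

lemma gnpExp_mono (hp₀ : 0 ≤ p) (hp₁ : p ≤ 1) (h : ∀ G, f G ≤ g G) :
    gnpExp n p f ≤ gnpExp n p g :=
  sum_le_sum fun G _ => mul_le_mul_of_nonneg_left (h G) (gnpWeight_nonneg hp₀ hp₁ G)

lemma gnpExp_const_mul (c : ℝ) (f : SimpleGraph (Fin n) → ℝ) :
    gnpExp n p (fun G => c * f G) = c * gnpExp n p f := by
  simp only [gnpExp, mul_sum, mul_left_comm]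

lemma gnpExp_sum {ι : Type*} (s : Finset ι) (f : ι → SimpleGraph (Fin n) → ℝ) :
    gnpExp n p (fun G => ∑ i ∈ s, f i G) = ∑ i ∈ s, gnpExp n p (f i) := by
  simp only [gnpExp, mul_sum]
  exact sum_comm

/-- The edges of `G(n, p)` are independent. -/
lemma gnpExp_prod (n : ℕ) (p : ℝ) (a b : Sym2 (Fin n) → ℝ) :
    gnpExp n p (fun G => ∏ e ∈ vertexPairs (Fin n),
      if e ∈ G.edgeSet then a e else b e) =
    ∏ e ∈ vertexPairs (Fin n), (p * a e + (1 - p) * b e) := by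
  rw [← sum_prod_ite_mem_edgeSet, gnpExp]
  refine sum_congr rfl fun G _ => ?_
  rw [gnpWeight_eq_prod, ← prod_mul_distrib]
  exact prod_congr rfl fun e _ => by split_ifs <;> rfl

lemma gnpProb_eq_gnpExp (n : ℕ) (p : ℝ) (A : SimpleGraph (Fin n) → Prop) :
    gnpProb n p A = gnpExp n p fun G => if A G then 1 else 0 :=
  sum_congr rfl fun G _ => by rw [mul_ite, mul_one, mul_zero]

lemma gnpExp_one (n : ℕ) (p : ℝ) : gnpExp n p (fun _ => 1) = 1 := by
  have := gnpExp_prod n p (fun _ => 1) fun _ => 1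
  simpa only [ite_self, prod_const_one, mul_one, add_sub_cancel] using this

lemma gnpProb_le_gnpExp (hp₀ : 0 ≤ p) (hp₁ : p ≤ 1) (hf : ∀ G, 0 ≤ f G)
    (h : ∀ G, A G → 1 ≤ f G) : gnpProb n p A ≤ gnpExp n p f := by
  rw [gnpProb_eq_gnpExp]
  refine gnpExp_mono hp₀ hp₁ fun G => ?_
  split_ifs with hA
  exacts [h G hA, hf G]

lemma gnpProb_mono (hp₀ : 0 ≤ p) (hp₁ : p ≤ 1) (h : ∀ G, A G → B G) :
    gnpProb n p A ≤ gnpProb n p B := by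
  rw [gnpProb_eq_gnpExp n p B]
  exact gnpProb_le_gnpExp hp₀ hp₁ (fun G => by split_ifs <;> norm_num)
    fun G hA => by rw [if_pos (h G hA)]

lemma gnpProb_nonneg (hp₀ : 0 ≤ p) (hp₁ : p ≤ 1) (A : SimpleGraph (Fin n) → Prop) :
    0 ≤ gnpProb n p A :=
  sum_nonneg fun G _ => by split_ifs; exacts [gnpWeight_nonneg hp₀ hp₁ G, le_rfl]

lemma gnpProb_not (n : ℕ) (p : ℝ) (A : SimpleGraph (Fin n) → Prop) :
    gnpProb n p (fun G => ¬ A G) = 1 - gnpProb n p A := by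
  rw [eq_sub_iff_add_eq, ← gnpExp_one n p, gnpProb, gnpProb, gnpExp, ← sum_add_distrib]
  exact sum_congr rfl fun G _ => by split_ifs <;> simp

lemma gnpProb_le_sum {ι : Type*} (hp₀ : 0 ≤ p) (hp₁ : p ≤ 1) (s : Finset ι)
    (B : ι → SimpleGraph (Fin n) → Prop) (h : ∀ G, A G → ∃ i ∈ s, B i G) :
    gnpProb n p A ≤ ∑ i ∈ s, gnpProb n p (B i) := by
  simp only [gnpProb_eq_gnpExp _ _ (B _), ← gnpExp_sum]
  refine gnpProb_le_gnpExp hp₀ hp₁ (fun G => sum_nonneg fun i _ => by split_ifs <;> norm_num)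
    fun G hA => ?_
  obtain ⟨i, hi, hB⟩ := h G hA
  refine le_of_eq_of_le (if_pos hB).symm
    (single_le_sum (f := fun i => if B i G then (1 : ℝ) else 0) (fun i _ => ?_) hi)
  split_ifs <;> norm_num

lemma gnpProb_or_le (hp₀ : 0 ≤ p) (hp₁ : p ≤ 1) (A B : SimpleGraph (Fin n) → Prop) :
    gnpProb n p (fun G => A G ∨ B G) ≤ gnpProb n p A + gnpProb n p B := by
  rw [gnpProb, gnpProb, gnpProb, ← sum_add_distrib]
  refine sum_le_sum fun G _ => ?_
  have := gnpWeight_nonneg hp₀ hp₁ G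
  split_ifs <;> first | tauto | linarith

lemma gnpExp_pow_edgeCount_inf (h : Disjoint Γ K) (p x : ℝ) :
    gnpExp n p (fun G => if Γ ≤ G then x ^ edgeCount (G ⊓ K) else 0) =
      p ^ edgeCount Γ * (1 - p + p * x) ^ edgeCount K := by
  have hdisj {e} (hΓ : e ∈ Γ.edgeSet) : e ∉ K.edgeSet :=
    Set.disjoint_left.1 (disjoint_edgeSet.2 h) hΓ
  have hprod := gnpExp_prod n p (fun e => if e ∈ K.edgeSet then x else 1)
    (fun e => if e ∈ Γ.edgeSet then 0 else 1)
  rw [← prod_ite_mem_edgeSet, ← prod_ite_mem_edgeSet, ← prod_mul_distrib]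
  refine (congrArg (gnpExp n p) (funext fun G => ?_)).trans (hprod.trans ?_)
  · split_ifs with hG
    · rw [← prod_ite_mem_edgeSet]
      refine prod_congr rfl fun e _ => ?_
      have : e ∈ (G ⊓ K).edgeSet ↔ e ∈ G.edgeSet ∧ e ∈ K.edgeSet := by rw [edgeSet_inf]; rfl
      have (he : e ∈ Γ.edgeSet) := edgeSet_mono hG he
      grind
    · rw [← edgeSet_subset_edgeSet, Set.not_subset] at hG
      obtain ⟨e, heΓ, heG⟩ := hG
      refine (prod_eq_zero (mem_vertexPairs heΓ) ?_).symm
      rw [if_neg heG, if_pos heΓ]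
  · refine prod_congr rfl fun e _ => ?_
    have := @hdisj e
    split_ifs <;> first | tauto | ring

lemma gnpProb_le_and_edgeCount_inf_le (hp₀ : 0 ≤ p) (hp₁ : p ≤ 1) (h : Disjoint Γ K) {x : ℝ}
    (hx₀ : 0 < x) (hx₁ : x ≤ 1) (k : ℝ) :
    gnpProb n p (fun G => Γ ≤ G ∧ edgeCount (G ⊓ K) ≤ k) ≤
      p ^ edgeCount Γ * Real.exp (-k * Real.log x - p * (1 - x) * edgeCount K) := by
  have hmarkov : gnpProb n p (fun G => Γ ≤ G ∧ edgeCount (G ⊓ K) ≤ k) ≤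
      x ^ (-k) * gnpExp n p (fun G => if Γ ≤ G then x ^ edgeCount (G ⊓ K) else 0) := by
    rw [← gnpExp_const_mul]
    refine gnpProb_le_gnpExp hp₀ hp₁ (fun G => by split_ifs <;> positivity) fun G hG => ?_
    rw [if_pos hG.1, ← Real.rpow_natCast, ← Real.rpow_add hx₀]
    exact Real.one_le_rpow_of_pos_of_le_one_of_nonpos hx₀ hx₁ (by linarith [hG.2])
  have hexp : (1 - p + p * x) ^ edgeCount K ≤ Real.exp (-(p * (1 - x) * edgeCount K)) := by
    rw [show -(p * (1 - x) * edgeCount K) = edgeCount K * (p * x - p) by ring, Real.exp_nat_mul]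
    exact pow_le_pow_left₀ (by nlinarith) (by linarith [Real.add_one_le_exp (p * x - p)]) _
  refine hmarkov.trans ?_
  rw [gnpExp_pow_edgeCount_inf h, Real.rpow_def_of_pos hx₀, mul_left_comm,
    sub_eq_add_neg (-k * Real.log x), Real.exp_add, mul_comm (Real.log x)]
  gcongr

lemma gnpProb_le_edgeCount_inf (hp₀ : 0 ≤ p) (hp₁ : p ≤ 1) (K : SimpleGraph (Fin n)) {x : ℝ}
    (hx : 1 ≤ x) (k : ℝ) :
    gnpProb n p (fun G => k ≤ edgeCount (G ⊓ K)) ≤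
      Real.exp (p * (x - 1) * edgeCount K - k * Real.log x) := by
  have hx₀ : 0 < x := by linarith
  have hmarkov : gnpProb n p (fun G => k ≤ edgeCount (G ⊓ K)) ≤
      x ^ (-k) * gnpExp n p (fun G => if ⊥ ≤ G then x ^ edgeCount (G ⊓ K) else 0) := by
    rw [← gnpExp_const_mul]
    refine gnpProb_le_gnpExp hp₀ hp₁ (fun G => by split_ifs <;> positivity) fun G hG => ?_
    rw [if_pos bot_le, ← Real.rpow_natCast, ← Real.rpow_add hx₀]
    exact Real.one_le_rpow hx (by linarith)
  have hexp : (1 - p + p * x) ^ edgeCount K ≤ Real.exp (p * (x - 1) * edgeCount K) := by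
    rw [show p * (x - 1) * edgeCount K = edgeCount K * (p * x - p) by ring, Real.exp_nat_mul]
    exact pow_le_pow_left₀ (by nlinarith) (by linarith [Real.add_one_le_exp (p * x - p)]) _
  refine hmarkov.trans ?_
  rw [gnpExp_pow_edgeCount_inf disjoint_bot_left, edgeCount_bot, pow_zero, one_mul,
    Real.rpow_def_of_pos hx₀, sub_eq_neg_add (_ * _), Real.exp_add, mul_neg, mul_comm (Real.log x)]
  gcongr

end Expectation

/-! ## Pseudorandomness near the connectivity threshold -/

section Between

lemma between_eq_inf {V : Type*} (G : SimpleGraph V) (A B : Set V) :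
    G.between A B = G ⊓ (⊤ : SimpleGraph V).between A B := by
  ext u v
  simp only [between_adj, inf_adj, top_adj]
  exact ⟨fun h => ⟨h.1, h.1.ne, h.2⟩, fun h => ⟨h.1, h.2.2⟩⟩

variable {V : Type*} [Fintype V]

lemma edgeCount_between_le_card_mul (G : SimpleGraph V) (A B : Finset V) :
    edgeCount (G.between A B) ≤ #A * #B := by
  rw [edgeCount_eq_card_edgeFinset, ← card_product]
  refine (card_le_card fun e he => ?_).trans (card_image_le (f := fun q => s(q.1, q.2)))
  obtain ⟨a, ha, b, hb, rfl⟩ := exists_of_mem_edgeSet_between (mem_edgeFinset.1 he)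
  exact mem_image.2 ⟨(a, b), mem_product.2 ⟨ha, hb⟩, rfl⟩

lemma card_mul_card_le_edgeCount_between {A B : Finset V} (h : Disjoint A B) :
    #A * #B ≤ edgeCount ((⊤ : SimpleGraph V).between A B) := by
  rw [edgeCount_eq_card_edgeFinset, ← card_product]
  refine card_le_card_of_injOn (fun q => s(q.1, q.2)) (fun q hq => ?_) fun q hq q' hq' heq => ?_
  · rw [mem_coe, mem_product] at hq
    rw [mem_coe, mem_edgeFinset, mem_edgeSet]
    exact ⟨fun h' => disjoint_left.1 h hq.1 (h' ▸ hq.2), .inl hq⟩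
  · rw [mem_coe, mem_product] at hq hq'
    rcases Sym2.eq_iff.1 heq with h' | h'
    · exact Prod.ext h'.1 h'.2
    · exact absurd hq'.2 (disjoint_left.1 h (h'.1 ▸ hq.1))

lemma eIn_eq_edgeCount_between (G : SimpleGraph V) (T : Finset V) :
    eIn G T = edgeCount (G.between T T) := by
  rw [edgeCount_eq_card_edgeFinset]
  refine congrArg card (ext fun e => ?_)
  rw [mem_eIn_edges, mem_edgeFinset]
  induction e with
  | h u v => simp [between_adj]

lemma sum_le_eq_sum_choose (K : SimpleGraph V) (f : ℕ → ℝ) [Fintype (SimpleGraph V)] :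
    ∑ Γ : SimpleGraph V with Γ ≤ K, f (edgeCount Γ) =
      ∑ m ∈ range (edgeCount K + 1), (edgeCount K).choose m * f m := by
  simp only [← nsmul_eq_mul]
  refine Eq.trans ?_ (sum_powerset_apply_card f)
  refine sum_bij' (fun Γ _ => Γ.edgeFinset) (fun E _ => fromEdgeSet (E : Set (Sym2 V)))
    (fun Γ hΓ => mem_powerset.2 (edgeFinset_mono (mem_filter.1 hΓ).2)) (fun E hE => ?_)
    (fun Γ _ => ?_) (fun E hE => ?_) fun Γ _ => ?_
  · refine mem_filter.2 ⟨mem_univ _, fun u v huv => ?_⟩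
    exact mem_edgeFinset.1 (mem_powerset.1 hE ((fromEdgeSet_adj _).1 huv).1)
  · rw [coe_edgeFinset, fromEdgeSet_edgeSet]
  · have hE' (e) (he : e ∈ E) := mem_edgeFinset.1 (mem_powerset.1 hE he)
    ext e
    simp only [mem_edgeFinset, edgeSet_fromEdgeSet_of_subset hE', mem_coe]
  · rfl

end Between

section Unlikely

variable {A B : ∀ n : ℕ, SimpleGraph (Fin n) → Prop} {f : ℕ → ℝ}

/-- The probability of the sequence of events `A` under `G(n, p)` vanishes as `n` grows, uniformly
over all edge probabilities `p` with `0.9 log n ≤ p n ≤ 1.02 log n`. -/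
def IsUnlikely (A : ∀ n : ℕ, SimpleGraph (Fin n) → Prop) : Prop :=
  ∀ ε > 0, ∀ᶠ n : ℕ in atTop, ∀ p : ℝ, 0.9 * Real.log n ≤ p * n → p * n ≤ 1.02 * Real.log n →
    gnpProb n p (A n) ≤ ε

lemma tendsto_log_natCast : Tendsto (fun n : ℕ => Real.log n) atTop atTop :=
  Real.tendsto_log_atTop.comp tendsto_natCast_atTop_atTop

lemma eventually_log_le_mul {c : ℝ} (hc : 0 < c) : ∀ᶠ n : ℕ in atTop, Real.log n ≤ c * n := by
  filter_upwards [tendsto_natCast_atTop_atTop.eventually (Real.isLittleO_log_id_atTop.bound hc),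
    eventually_ge_atTop 1] with n hn hn₁
  have hlog := Real.log_nonneg (Nat.one_le_cast.2 hn₁)
  rwa [Real.norm_of_nonneg hlog, id, Real.norm_of_nonneg n.cast_nonneg] at hn

lemma tendsto_exp_neg_mul_log {c : ℝ} (hc : 0 < c) :
    Tendsto (fun n : ℕ => Real.exp (-(c * Real.log n))) atTop (nhds 0) :=
  Real.tendsto_exp_neg_atTop_nhds_zero.comp (tendsto_log_natCast.const_mul_atTop hc)

lemma isUnlikely_of_eventually_le (hf : Tendsto f atTop (nhds 0))
    (h : ∀ᶠ n : ℕ in atTop, ∀ p : ℝ, 0 ≤ p → p ≤ 1 → 0.9 * Real.log n ≤ p * n →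
      p * n ≤ 1.02 * Real.log n → gnpProb n p (A n) ≤ f n) : IsUnlikely A := by
  intro ε hε
  filter_upwards [h, hf.eventually (eventually_le_nhds hε), eventually_ge_atTop 1,
    eventually_log_le_mul (c := 0.9) (by norm_num)] with n hn hfn hn₁ hlog p hp hp'
  have hn₀ : (1 : ℝ) ≤ n := Nat.one_le_cast.2 hn₁
  exact (hn p (by nlinarith) (by nlinarith) hp hp').trans hfn

lemma IsUnlikely.or (hA : IsUnlikely A) (hB : IsUnlikely B) :
    IsUnlikely fun n G => A n G ∨ B n G := by
  intro ε hε
  filter_upwards [hA (ε / 2) (half_pos hε), hB (ε / 2) (half_pos hε), eventually_ge_atTop 1,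
    eventually_log_le_mul (c := 0.9) (by norm_num)] with n hnA hnB hn₁ hlog p hp hp'
  have hn₀ : (1 : ℝ) ≤ n := Nat.one_le_cast.2 hn₁
  have := gnpProb_or_le (p := p) (by nlinarith) (by nlinarith) (A n) (B n)
  linarith [hnA p hp hp', hnB p hp hp']

end Unlikely

section Concentration

lemma isUnlikely_edgeCount : IsUnlikely fun n G => 2 * n * Real.log n ≤ edgeCount G := by
  refine isUnlikely_of_eventually_le (tendsto_exp_neg_mul_log one_pos) ?_
  filter_upwards [eventually_ge_atTop 2] with n hn p hp₀ hp₁ _ hp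
  have hn₀ : (2 : ℝ) ≤ n := Nat.ofNat_le_cast.2 hn
  have htail := gnpProb_le_edgeCount_inf hp₀ hp₁ (⊤ : SimpleGraph (Fin n)) one_le_two
    (2 * n * Real.log n)
  simp only [inf_top_eq] at htail
  refine htail.trans (Real.exp_le_exp.2 ?_)
  have hpairs : (edgeCount (⊤ : SimpleGraph (Fin n)) : ℝ) ≤ n * n / 2 := by
    rw [← sq, edgeCount_eq_card_edgeFinset, card_edgeFinset_top_eq_card_choose_two,
      Fintype.card_fin]
    simpa using Nat.choose_le_pow_div (α := ℝ) 2 n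
  have hlog_two := Real.log_two_gt_d9
  have hmean : p * (2 - 1) * edgeCount (⊤ : SimpleGraph (Fin n)) ≤ 0.51 * (n * Real.log n) := by
    nlinarith
  have hn_log : 2 * Real.log n ≤ n * Real.log n := by gcongr
  nlinarith

lemma gnpProb_edgeCount_between_le {n : ℕ} {p : ℝ} (hp₀ : 0 ≤ p) (hp₁ : p ≤ 1)
    (hp : 0.9 * Real.log n ≤ p * n) {A B : Finset (Fin n)} (hAB : Disjoint A B)
    (hB : n ≤ 4 * #B) :
    gnpProb n p (fun G => edgeCount (G.between A B) ≤ 0.05 * Real.log n * #A) ≤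
      Real.exp (-(0.07 * Real.log n * #A)) := by
  have htail := gnpProb_le_and_edgeCount_inf_le hp₀ hp₁ (Γ := ⊥)
    (K := (⊤ : SimpleGraph (Fin n)).between A B) disjoint_bot_left (x := 1 / 2) (by norm_num)
    (by norm_num) (0.05 * Real.log n * #A)
  simp only [bot_le, true_and, ← between_eq_inf, edgeCount_bot, pow_zero, one_mul] at htail
  refine htail.trans (Real.exp_le_exp.2 ?_)
  rw [one_div, Real.log_inv]
  have hmean : 0.225 * Real.log n * #A ≤
      p * edgeCount ((⊤ : SimpleGraph (Fin n)).between A B) := by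
    have hcard : (#A * #B : ℝ) ≤ edgeCount ((⊤ : SimpleGraph (Fin n)).between A B) :=
      mod_cast card_mul_card_le_edgeCount_between hAB
    have hB' : (n : ℝ) ≤ 4 * #B := mod_cast hB
    have hpB : 0.225 * Real.log n ≤ p * #B := by nlinarith
    nlinarith [mul_le_mul_of_nonneg_right hpB (Nat.cast_nonneg (α := ℝ) #A)]
  have hlog_two := Real.log_two_lt_d9
  have : 0 ≤ Real.log n * #A := mul_nonneg (Real.log_natCast_nonneg n) (Nat.cast_nonneg _)
  nlinarith

lemma isUnlikely_edgeCount_between : IsUnlikely fun n G => ∃ A B : Finset (Fin n),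
    Disjoint A B ∧ 1e-8 * (n : ℝ) ≤ #A ∧ n ≤ 4 * #B ∧
      edgeCount (G.between A B) ≤ 0.05 * Real.log n * #A := by
  refine isUnlikely_of_eventually_le (tendsto_exp_neg_mul_log one_pos) ?_
  filter_upwards [tendsto_log_natCast.eventually_ge_atTop 5e9,
    eventually_log_le_mul one_pos] with n hlog hlog_n p hp₀ hp₁ hp _
  set s : Finset (Finset (Fin n) × Finset (Fin n)) :=
    {q | Disjoint q.1 q.2 ∧ 1e-8 * (n : ℝ) ≤ (#q.1 : ℝ) ∧ n ≤ 4 * #q.2}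
  have hs : (#s : ℝ) ≤ Real.exp (2 * n) := by
    have hcard := card_le_univ s
    rw [Fintype.card_prod, Fintype.card_finset, Fintype.card_fin, ← mul_pow] at hcard
    rw [mul_comm, Real.exp_nat_mul]
    refine (Nat.cast_le.2 hcard).trans ?_
    push_cast
    gcongr
    rw [show (2 : ℝ) = 1 + 1 by norm_num, Real.exp_add]
    nlinarith [Real.add_one_le_exp 1]
  have hbound : ∀ q ∈ s, gnpProb n p (fun G => edgeCount (G.between q.1 q.2) ≤
      0.05 * Real.log n * #q.1) ≤ Real.exp (-(3 * n)) := by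
    intro q hq
    obtain ⟨-, hdisj, hA, hB⟩ := mem_filter.1 hq
    refine (gnpProb_edgeCount_between_le hp₀ hp₁ hp hdisj hB).trans (Real.exp_le_exp.2 ?_)
    nlinarith
  calc _ ≤ ∑ q ∈ s, gnpProb n p (fun G => edgeCount (G.between q.1 q.2) ≤
        0.05 * Real.log n * #q.1) := by
        refine gnpProb_le_sum hp₀ hp₁ s _ fun G ⟨A, B, hAB, hA, hB, h⟩ => ⟨(A, B), ?_, h⟩
        exact mem_filter.2 ⟨mem_univ _, hAB, hA, hB⟩
    _ ≤ Real.exp (2 * n) * Real.exp (-(3 * n)) := by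
        refine (sum_le_card_nsmul s _ _ hbound).trans ?_
        rw [nsmul_eq_mul]
        gcongr
    _ ≤ Real.exp (-(1 * Real.log n)) := by
        rw [← Real.exp_add]
        exact Real.exp_le_exp.2 (by linarith)

end Concentration

section Boosters

lemma disjoint_boosterGraph {V : Type*} [Fintype V] (Γ : SimpleGraph V) :
    Disjoint Γ (boosterGraph Γ) :=
  SimpleGraph.disjoint_left.2 fun _ _ hΓ hboost => hboost.2.1 hΓ

lemma sum_pow_edgeCount_le {V : Type*} [Fintype V] [Fintype (SimpleGraph V)] {p x m : ℝ}
    (hp : 0 ≤ p) (hx : 1 ≤ x) :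
    ∑ Γ : SimpleGraph V with edgeCount Γ ≤ m, p ^ edgeCount Γ ≤
      Real.exp (m * Real.log x + (Fintype.card V).choose 2 * (p / x)) := by
  have hx₀ : 0 < x := by linarith
  calc ∑ Γ : SimpleGraph V with edgeCount Γ ≤ m, p ^ edgeCount Γ
      ≤ ∑ Γ : SimpleGraph V, x ^ m * (p / x) ^ edgeCount Γ := by
        refine (sum_le_sum fun Γ hΓ => ?_).trans
          (sum_le_sum_of_subset_of_nonneg (filter_subset _ _) fun _ _ _ => by positivity)
        rw [div_pow, mul_div_left_comm]
        refine le_mul_of_one_le_right (by positivity) ((one_le_div (by positivity)).2 ?_)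
        rw [← Real.rpow_natCast]
        exact Real.rpow_le_rpow_of_exponent_le hx (mem_filter.1 hΓ).2
    _ = x ^ m * (p / x + 1) ^ (Fintype.card V).choose 2 := by
        rw [← mul_sum, sum_pow_edgeCount]
    _ ≤ _ := by
        rw [Real.exp_add, Real.rpow_def_of_pos hx₀, mul_comm m, Real.exp_nat_mul]
        gcongr
        exact Real.add_one_le_exp _

lemma log_ten_lt : Real.log 10 < 2.32 := by
  have hpow : (10 : ℝ) ^ 3 ≤ 2 ^ 10 := by norm_num
  have hlog := Real.log_le_log (by norm_num) hpow
  rw [Real.log_pow, Real.log_pow] at hlog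
  push_cast at hlog
  linarith [Real.log_two_lt_d9]

lemma gnpProb_le_and_few_boosters_le {n : ℕ} {p : ℝ} (hp₀ : 0 ≤ p) (hp₁ : p ≤ 1)
    (hp : 0.9 * Real.log n ≤ p * n) {Γ : SimpleGraph (Fin n)}
    (hΓ : n ^ 2 ≤ 32 * edgeCount (boosterGraph Γ)) :
    gnpProb n p (fun G => Γ ≤ G ∧ edgeCount (G ⊓ boosterGraph Γ) ≤ n * Real.log n / 200) ≤
      p ^ edgeCount Γ * Real.exp (-(0.01 * (n * Real.log n))) := by
  refine (gnpProb_le_and_edgeCount_inf_le hp₀ hp₁ (disjoint_boosterGraph Γ) (x := 1 / 2)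
    (by norm_num) (by norm_num) _).trans ?_
  gcongr
  rw [one_div, Real.log_inv]
  have hlog_two := Real.log_two_lt_d9
  have hΓ' : (n : ℝ) ^ 2 ≤ 32 * edgeCount (boosterGraph Γ) := mod_cast hΓ
  have hnlog : 0 ≤ n * Real.log n := mul_nonneg n.cast_nonneg (Real.log_natCast_nonneg n)
  have hmean : 0.9 * (n * Real.log n) ≤ 32 * (p * edgeCount (boosterGraph Γ)) := by
    nlinarith [mul_le_mul_of_nonneg_right hp n.cast_nonneg, mul_le_mul_of_nonneg_left hΓ' hp₀]
  nlinarith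

lemma isUnlikely_few_boosters : IsUnlikely fun n G => ∃ Γ ≤ G,
    edgeCount Γ ≤ n * Real.log n / 5000 ∧ n ^ 2 ≤ 32 * edgeCount (boosterGraph Γ) ∧
      edgeCount (boosterGraph Γ ⊓ G) ≤ n * Real.log n / 200 := by
  refine isUnlikely_of_eventually_le (tendsto_exp_neg_mul_log one_pos) ?_
  filter_upwards [eventually_ge_atTop 1000] with n hn p hp₀ hp₁ hp hp'
  have hn₀ : (1000 : ℝ) ≤ n := Nat.ofNat_le_cast.2 hn
  set m := n * Real.log n / 5000 with hm
  set s : Finset (SimpleGraph (Fin n)) :=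
    {Γ | edgeCount Γ ≤ m ∧ n ^ 2 ≤ 32 * edgeCount (boosterGraph Γ)}
  calc _ ≤ ∑ Γ ∈ s, gnpProb n p (fun G => Γ ≤ G ∧
        edgeCount (G ⊓ boosterGraph Γ) ≤ n * Real.log n / 200) := by
        refine gnpProb_le_sum hp₀ hp₁ s _ fun G ⟨Γ, hΓ, hedges, hmany, hfew⟩ => ⟨Γ, ?_, hΓ, ?_⟩
        · exact mem_filter.2 ⟨mem_univ _, hedges, hmany⟩
        · rwa [inf_comm]
    _ ≤ (∑ Γ : SimpleGraph (Fin n) with edgeCount Γ ≤ m, p ^ edgeCount Γ) *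
          Real.exp (-(0.01 * (n * Real.log n))) := by
        rw [sum_mul]
        refine (sum_le_sum fun Γ hΓ => gnpProb_le_and_few_boosters_le hp₀ hp₁ hp
          (mem_filter.1 hΓ).2.2).trans (sum_le_sum_of_subset_of_nonneg ?_ fun _ _ _ => ?_)
        · exact monotone_filter_right _ fun Γ _ h => h.1
        · positivity
    _ ≤ Real.exp (m * Real.log (10 ^ 3) + n.choose 2 * (p / 10 ^ 3)) *
          Real.exp (-(0.01 * (n * Real.log n))) := by
        gcongr
        simpa only [Fintype.card_fin] using
          sum_pow_edgeCount_le (V := Fin n) (m := m) (x := 10 ^ 3) hp₀ (by norm_num)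
    _ ≤ Real.exp (-(1 * Real.log n)) := by
        rw [← Real.exp_add, Real.log_pow]
        refine Real.exp_le_exp.2 ?_
        have hchoose : (n.choose 2 : ℝ) ≤ n ^ 2 / 2 := by
          simpa using Nat.choose_le_pow_div (α := ℝ) 2 n
        have hpairs : n.choose 2 * p ≤ 0.51 * (n * Real.log n) := by nlinarith
        have hnlog : 1000 * Real.log n ≤ n * Real.log n :=
          mul_le_mul_of_nonneg_right hn₀ (Real.log_natCast_nonneg n)
        have hlog_ten : m * Real.log 10 ≤ m * 2.32 := by gcongr; exact log_ten_lt.le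
        push_cast
        linarith

end Boosters

section LocalDensity

lemma gnpProb_exists_card_eq_le {n : ℕ} {p : ℝ} (hp₀ : 0 ≤ p) (hp₁ : p ≤ 1) {t : ℕ} {c : ℝ}
    {B : Finset (Fin n) → SimpleGraph (Fin n) → Prop}
    (h : ∀ T : Finset (Fin n), #T = t → gnpProb n p (B T) ≤ c) :
    gnpProb n p (fun G => ∃ T, #T = t ∧ B T G) ≤ n.choose t * c := by
  calc _ ≤ ∑ T ∈ powersetCard t univ, gnpProb n p (B T) :=
        gnpProb_le_sum hp₀ hp₁ _ _ fun G ⟨T, hT, hB⟩ =>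
          ⟨T, mem_powersetCard.2 ⟨subset_univ T, hT⟩, hB⟩
    _ ≤ #(powersetCard t (univ : Finset (Fin n))) • c :=
        sum_le_card_nsmul _ _ _ fun T hT => h T (mem_powersetCard.1 hT).2
    _ = n.choose t * c := by rw [card_powersetCard, card_univ, Fintype.card_fin, nsmul_eq_mul]

lemma choose_le_exp {n t : ℕ} (hn : 0 < n) (ht : 0 < t) :
    (n.choose t : ℝ) ≤ Real.exp (t * (1 + Real.log (n / t))) := by
  have ht' : (0 : ℝ) < t := Nat.cast_pos.2 ht
  have hfact := Real.pow_div_factorial_le_exp (t : ℝ) t.cast_nonneg t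
  rw [mul_add, Real.exp_add, mul_one, Real.exp_nat_mul (Real.log _),
    Real.exp_log (div_pos (Nat.cast_pos.2 hn) ht')]
  calc (n.choose t : ℝ) ≤ (n : ℝ) ^ t / t.factorial := Nat.choose_le_pow_div t n
    _ = (t : ℝ) ^ t / t.factorial * (n / t : ℝ) ^ t := by
        rw [div_pow]
        field_simp
    _ ≤ Real.exp t * (n / t : ℝ) ^ t := by gcongr

lemma gnpProb_le_eIn_le {n : ℕ} {p : ℝ} (hp₀ : 0 ≤ p) (hp₁ : p ≤ 1)
    (hp : p * n ≤ 1.02 * Real.log n) {T : Finset (Fin n)} (hT : 0 < #T)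
    (hTn : 200000 * #T ≤ n) :
    gnpProb n p (fun G => Real.log n * #T / 200000 ≤ eIn G T) ≤
      Real.exp (Real.log n * #T / 200000 * (1.02 - Real.log (n / (200000 * #T)))) := by
  have : (0 : ℝ) < #T := Nat.cast_pos.2 hT
  have hx : (1 : ℝ) ≤ n / (200000 * #T) := (one_le_div (by positivity)).2 (mod_cast hTn)
  have htail := gnpProb_le_edgeCount_inf hp₀ hp₁ ((⊤ : SimpleGraph (Fin n)).between T T) hx
    (Real.log n * #T / 200000)
  simp only [← between_eq_inf, ← eIn_eq_edgeCount_between] at htail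
  refine htail.trans (Real.exp_le_exp.2 ?_)
  have hcard : (eIn (⊤ : SimpleGraph (Fin n)) T : ℝ) ≤ #T * #T := by
    rw [eIn_eq_edgeCount_between]
    exact mod_cast edgeCount_between_le_card_mul ⊤ T T
  have hmean : p * (n / (200000 * #T) - 1) * eIn (⊤ : SimpleGraph (Fin n)) T ≤
      Real.log n * #T / 200000 * 1.02 := by
    calc _ ≤ p * (n / (200000 * #T)) * (#T * #T) := by gcongr; linarith
      _ = p * n * (#T / 200000) := by field_simp
      _ ≤ 1.02 * Real.log n * (#T / 200000) := by gcongr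
      _ = _ := by ring
  linarith

lemma gnpProb_exists_dense_le {n t : ℕ} {p : ℝ} (hp₀ : 0 ≤ p) (hp₁ : p ≤ 1)
    (hp : p * n ≤ 1.02 * Real.log n) (hlog : 1e8 ≤ Real.log n) (ht : 0 < t)
    (htn : 10 ^ 7 * t ≤ n) :
    gnpProb n p (fun G => ∃ T : Finset (Fin n), #T = t ∧ Real.log n * #T / 200000 ≤ eIn G T) ≤
      Real.exp (-(1 / 200000 * Real.log n)) ^ t := by
  have hn : 0 < n := by lia
  have : (0 : ℝ) < n := Nat.cast_pos.2 hn
  have ht' : (0 : ℝ) < t := Nat.cast_pos.2 ht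
  set L := Real.log n
  set y := Real.log (n / (200000 * t)) with hy
  have hlevel : ∀ T : Finset (Fin n), #T = t → gnpProb n p
      (fun G => L * #T / 200000 ≤ eIn G T) ≤ Real.exp (L * t / 200000 * (1.02 - y)) := by
    rintro T rfl
    exact gnpProb_le_eIn_le hp₀ hp₁ hp ht (by lia)
  have hy₃ : 3 ≤ y := by
    rw [Real.le_log_iff_exp_le (by positivity), le_div_iff₀ (by positivity),
      show (3 : ℝ) = (3 : ℕ) * 1 by norm_num, Real.exp_nat_mul]
    have hexp : Real.exp 1 ^ 3 ≤ 2.7182818286 ^ 3 := by gcongr; exact Real.exp_one_lt_d9.le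
    have htn' : (10 ^ 7 : ℝ) * t ≤ n := mod_cast htn
    nlinarith
  have hsplit : Real.log (n / t) ≤ y + 13 := by
    have hpow : Real.log 200000 ≤ Real.log (2 ^ 18) := by gcongr; norm_num
    rw [Real.log_pow, Nat.cast_ofNat] at hpow
    rw [show (n / t : ℝ) = n / (200000 * t) * 200000 by field_simp,
      Real.log_mul (by positivity) (by norm_num)]
    linarith [Real.log_two_lt_d9]
  refine (gnpProb_exists_card_eq_le hp₀ hp₁ hlevel).trans ?_
  rw [← Real.exp_nat_mul]
  refine (mul_le_mul_of_nonneg_right (choose_le_exp hn ht) (Real.exp_pos _).le).trans ?_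
  rw [← Real.exp_add]
  refine Real.exp_le_exp.2 ?_
  have hexponent : 1 + Real.log (n / t) + L / 200000 * (1.02 - y) ≤ -(1 / 200000 * L) := by
    nlinarith
  linarith [mul_le_mul_of_nonneg_left hexponent ht'.le]

lemma isUnlikely_dense : IsUnlikely fun n G => ∃ T : Finset (Fin n), 10 ^ 7 * #T ≤ n ∧
    ⌊Real.log n / 10 ^ 4⌋₊ * #T < 10 * eIn G T := by
  have hlim := (tendsto_exp_neg_mul_log (c := 1 / 200000) (by norm_num)).const_mul 2
  rw [mul_zero] at hlim
  refine isUnlikely_of_eventually_le hlim ?_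
  filter_upwards [tendsto_log_natCast.eventually_ge_atTop 1e8,
    (tendsto_exp_neg_mul_log (c := 1 / 200000) (by norm_num)).eventually
      (eventually_le_nhds one_half_pos)] with n hlog hexp p hp₀ hp₁ _ hp
  set x := Real.exp (-(1 / 200000 * Real.log n))
  have hx : 0 < x := Real.exp_pos _
  set s : Finset ℕ := {t ∈ Ico 1 (n + 1) | 10 ^ 7 * t ≤ n}
  calc _ ≤ ∑ t ∈ s, gnpProb n p (fun G => ∃ T : Finset (Fin n), #T = t ∧
        Real.log n * #T / 200000 ≤ eIn G T) := by
        refine gnpProb_le_sum hp₀ hp₁ s _ fun G ⟨T, hTn, hT⟩ => ⟨#T, ?_, T, rfl, ?_⟩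
        · have hpos : 0 < #T := by
            by_contra! h
            have := edgeCount_between_le_card_mul G T T
            rw [← eIn_eq_edgeCount_between] at this
            simp_all
          exact mem_filter.2 ⟨mem_Ico.2 ⟨hpos, by lia⟩, hTn⟩
        · have hfloor := Nat.lt_floor_add_one (Real.log n / 10 ^ 4)
          have hT' : (⌊Real.log n / 10 ^ 4⌋₊ * #T : ℝ) ≤ 10 * eIn G T := mod_cast hT.le
          nlinarith [Nat.cast_nonneg (α := ℝ) #T]
    _ ≤ ∑ t ∈ s, x ^ t := by
        refine sum_le_sum fun t ht => ?_
        obtain ⟨ht, htn⟩ := mem_filter.1 ht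
        exact gnpProb_exists_dense_le hp₀ hp₁ hp hlog (mem_Ico.1 ht).1 htn
    _ ≤ ∑ t ∈ Ico 1 (n + 1), x ^ t :=
        sum_le_sum_of_subset_of_nonneg (filter_subset _ _) fun _ _ _ => by positivity
    _ ≤ x ^ 1 / (1 - x) := geom_sum_Ico_le_of_lt_one hx.le (by linarith)
    _ ≤ 2 * x := by
        rw [pow_one, div_le_iff₀ (by linarith)]
        nlinarith

end LocalDensity

section Separation

lemma card_subgraphs {V : Type*} [Fintype V] [Fintype (SimpleGraph V)] (K : SimpleGraph V) :
    #{Γ : SimpleGraph V | Γ ≤ K} = 2 ^ edgeCount K := by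
  have h := sum_le_eq_sum_choose K fun _ => 1
  simp only [mul_one, sum_const, nsmul_one] at h
  rw [← Nat.sum_range_choose]
  exact mod_cast h

lemma gnpProb_le_and_edgeCount_between_compl_le {n : ℕ} {p : ℝ} (hp₀ : 0 ≤ p) (hp₁ : p ≤ 1)
    (hp : 0.9 * Real.log n ≤ p * n) (hn : 1000 ≤ n) {Q T : Finset (Fin n)} (hT : #T ≤ 5)
    (hQT : Q ⊆ T) {Γ : SimpleGraph (Fin n)} (hΓ : Γ ≤ (⊤ : SimpleGraph (Fin n)).between T T) :
    gnpProb n p (fun G => Γ ≤ G ∧ edgeCount (G.between Q Tᶜ) ≤ Real.log n / 50 * #Q) ≤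
      p ^ edgeCount Γ * Real.exp (-(0.7 * Real.log n * #Q)) := by
  have hdisj : Disjoint Γ ((⊤ : SimpleGraph (Fin n)).between Q Tᶜ) := by
    refine SimpleGraph.disjoint_left.2 fun u v huv huv' => ?_
    have h₁ := (hΓ huv).2
    have h₂ := huv'.2
    simp only [mem_coe, Set.mem_compl_iff] at h₁ h₂
    tauto
  have htail := gnpProb_le_and_edgeCount_inf_le hp₀ hp₁ hdisj (x := 1 / 8) (by norm_num)
    (by norm_num) (Real.log n / 50 * #Q)
  simp only [← between_eq_inf] at htail
  refine htail.trans (mul_le_mul_of_nonneg_left (Real.exp_le_exp.2 ?_) (by positivity))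
  have hedges : (#Q * (n - 5) : ℝ) ≤ edgeCount ((⊤ : SimpleGraph (Fin n)).between Q Tᶜ) := by
    have h := card_mul_card_le_edgeCount_between (disjoint_compl_right.mono_left hQT)
    have hcompl : #T + #Tᶜ = n := by rw [card_add_card_compl, Fintype.card_fin]
    have hTc : (n : ℝ) - 5 ≤ #Tᶜ := by
      rw [sub_le_iff_le_add]
      exact mod_cast (by lia : n ≤ #Tᶜ + 5)
    have h' : (#Q * #Tᶜ : ℝ) ≤ edgeCount ((⊤ : SimpleGraph (Fin n)).between Q (Tᶜ : Finset _)) :=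
      mod_cast h
    rw [coe_compl] at h'
    exact (mul_le_mul_of_nonneg_left hTc (Nat.cast_nonneg _)).trans h'
  have hlog : Real.log (1 / 8) = -(3 * Real.log 2) := by
    rw [one_div, Real.log_inv, show (8 : ℝ) = 2 ^ 3 by norm_num, Real.log_pow, Nat.cast_ofNat]
  have hmean : 0.89 * Real.log n * #Q ≤
      p * edgeCount ((⊤ : SimpleGraph (Fin n)).between Q Tᶜ) := by
    have hn' : (1000 : ℝ) ≤ n := Nat.ofNat_le_cast.2 hn
    have hpn : 0.89 * Real.log n ≤ p * (n - 5) := by nlinarith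
    nlinarith [mul_le_mul_of_nonneg_left hedges hp₀,
      mul_le_mul_of_nonneg_right hpn (Nat.cast_nonneg (α := ℝ) #Q)]
  have hlogQ : 0 ≤ Real.log n * #Q := mul_nonneg (Real.log_natCast_nonneg n) (Nat.cast_nonneg _)
  rw [hlog]
  nlinarith [Real.log_two_lt_d9]

lemma pow_mul_exp_le {n t q m : ℕ} {p : ℝ} (hp₀ : 0 ≤ p) (hp₁ : p ≤ 1)
    (hp : p * n ≤ 1.02 * Real.log n) (hlog : 1 ≤ Real.log n) (ht : t ≤ 5) (hq : q ≤ 2)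
    (hqt : q ≤ t) (hm : t < m + q) :
    p ^ m * Real.exp (-(0.7 * Real.log n * q)) ≤
      (2 * Real.log n) ^ 6 * Real.exp (-(0.4 * Real.log n)) / n ^ t := by
  have hn : (0 : ℝ) < n := Nat.cast_pos.2 (Nat.pos_of_ne_zero fun h => by norm_num [h] at hlog)
  obtain ⟨j, hj⟩ := Nat.exists_eq_add_of_le (hqt.trans (Nat.le_add_right t 1))
  have hexp : Real.exp (-(0.7 * Real.log n * q)) * n ^ q ≤ Real.exp (-(0.4 * Real.log n)) * n := by
    have hq' : (q : ℝ) ≤ 2 := Nat.cast_le_ofNat.2 hq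
    rw [← Real.exp_log hn, ← Real.exp_nat_mul, ← Real.exp_add, ← Real.exp_add,
      Real.exp_log hn]
    exact Real.exp_le_exp.2 (by nlinarith)
  have hpow : (p * n) ^ j ≤ (2 * Real.log n) ^ 6 :=
    (pow_le_pow_left₀ (by positivity) (by linarith) j).trans
      (pow_le_pow_right₀ (by linarith) (by lia))
  rw [le_div_iff₀ (by positivity)]
  refine le_of_mul_le_mul_right ?_ hn
  calc p ^ m * Real.exp (-(0.7 * Real.log n * q)) * n ^ t * n
      = p ^ m * n ^ j * (Real.exp (-(0.7 * Real.log n * q)) * n ^ q) := by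
        rw [mul_assoc _ (_ ^ t), ← pow_succ, hj]
        ring
    _ ≤ p ^ j * n ^ j * (Real.exp (-(0.4 * Real.log n)) * n) := by
        have := pow_le_pow_of_le_one hp₀ hp₁ (by lia : j ≤ m)
        gcongr
    _ ≤ (2 * Real.log n) ^ 6 * (Real.exp (-(0.4 * Real.log n)) * n) := by
        rw [← mul_pow]
        gcongr
    _ = _ := by ring

lemma gnpProb_exists_subset_degree_le_le {n : ℕ} {p : ℝ} (hp₀ : 0 ≤ p) (hp₁ : p ≤ 1)
    (hp : 0.9 * Real.log n ≤ p * n) (hp' : p * n ≤ 1.02 * Real.log n) (hn : 1000 ≤ n)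
    (hlog : 1 ≤ Real.log n) {T : Finset (Fin n)} (hT : #T ≤ 5) :
    gnpProb n p (fun G => ∃ Q ⊆ T, #Q ≤ 2 ∧ (∀ v ∈ Q, G.degree v ≤ Real.log n / 50) ∧
        #T < eIn G T + #Q) ≤
      2 ^ 30 * ((2 * Real.log n) ^ 6 * Real.exp (-(0.4 * Real.log n)) / n ^ #T) := by
  set K := (⊤ : SimpleGraph (Fin n)).between T T
  set s : Finset (Finset (Fin n) × SimpleGraph (Fin n)) :=
    {q ∈ T.powerset ×ˢ ({Γ | Γ ≤ K} : Finset (SimpleGraph (Fin n))) |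
      #q.1 ≤ 2 ∧ #T < edgeCount q.2 + #q.1}
  have hs : #s ≤ 2 ^ 30 := by
    refine (card_filter_le _ _).trans ?_
    rw [card_product, card_powerset, card_subgraphs, ← pow_add]
    have := edgeCount_between_le_card_mul (⊤ : SimpleGraph (Fin n)) T T
    exact Nat.pow_le_pow_right two_pos (by nlinarith)
  calc _ ≤ ∑ q ∈ s, gnpProb n p (fun G => q.2 ≤ G ∧
        edgeCount (G.between q.1 Tᶜ) ≤ Real.log n / 50 * #q.1) := by
        refine gnpProb_le_sum hp₀ hp₁ s _ fun G ⟨Q, hQT, hQ, hdeg, hlt⟩ =>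
          ⟨(Q, G.between T T), ?_, between_le, ?_⟩
        · rw [eIn_eq_edgeCount_between] at hlt
          refine mem_filter.2 ⟨mem_product.2 ⟨mem_powerset.2 hQT, ?_⟩, hQ, hlt⟩
          exact mem_filter.2 ⟨mem_univ _, fun u v huv => ⟨huv.1.ne, huv.2⟩⟩
        · have hedges : (edgeCount (G.between Q (Tᶜ : Finset _)) : ℝ) ≤ ∑ v ∈ Q, (G.degree v : ℝ) :=
            mod_cast edgeCount_between_le_sum_degree G Q Tᶜ
          rw [coe_compl] at hedges
          refine hedges.trans ((sum_le_card_nsmul _ _ _ hdeg).trans_eq ?_)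
          rw [nsmul_eq_mul, mul_comm]
    _ ≤ #s • ((2 * Real.log n) ^ 6 * Real.exp (-(0.4 * Real.log n)) / n ^ #T) := by
        refine sum_le_card_nsmul _ _ _ fun q hq => ?_
        obtain ⟨hprod, hcard, hlt⟩ := mem_filter.1 hq
        obtain ⟨hQT, hΓ⟩ := mem_product.1 hprod
        rw [mem_powerset] at hQT
        exact (gnpProb_le_and_edgeCount_between_compl_le hp₀ hp₁ hp hn hT hQT
          (mem_filter.1 hΓ).2).trans (pow_mul_exp_le hp₀ hp₁ hp' hlog hT hcard
            (card_le_card hQT) hlt)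
    _ ≤ _ := by
        rw [nsmul_eq_mul]
        gcongr
        exact mod_cast hs

lemma tendsto_log_pow_mul_exp_neg {c : ℝ} (hc : 0 < c) (k : ℕ) :
    Tendsto (fun n : ℕ => Real.log n ^ k * Real.exp (-(c * Real.log n))) atTop (nhds 0) := by
  have h := ((Real.tendsto_pow_mul_exp_neg_atTop_nhds_zero k).comp
    (tendsto_log_natCast.const_mul_atTop hc)).const_mul (c ^ k)⁻¹
  rw [mul_zero] at h
  refine h.congr fun n => ?_
  simp only [Function.comp]
  rw [mul_pow]
  field_simp

lemma isUnlikely_not_isWellSeparated : IsUnlikely fun n G =>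
    ¬ IsWellSeparated G ({v | G.degree v ≤ Real.log n / 50} : Finset (Fin n)) := by
  have hlim := (tendsto_log_pow_mul_exp_neg (c := 0.4) (by norm_num) 6).const_mul (6 * 2 ^ 36)
  rw [mul_zero] at hlim
  refine isUnlikely_of_eventually_le hlim ?_
  filter_upwards [eventually_ge_atTop 1000, tendsto_log_natCast.eventually_ge_atTop 1]
    with n hn hlog p hp₀ hp₁ hp hp'
  set c := 2 ^ 30 * ((2 * Real.log n) ^ 6 * Real.exp (-(0.4 * Real.log n))) with hc
  have hlevel : ∀ t ∈ range 6, gnpProb n p (fun G => ∃ T : Finset (Fin n), #T = t ∧ ∃ Q ⊆ T,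
      #Q ≤ 2 ∧ (∀ v ∈ Q, G.degree v ≤ Real.log n / 50) ∧ #T < eIn G T + #Q) ≤ c := by
    intro t ht
    refine (gnpProb_exists_card_eq_le (c := c / n ^ t) hp₀ hp₁ ?_).trans ?_
    · rintro T rfl
      rw [hc, mul_div_assoc]
      exact gnpProb_exists_subset_degree_le_le hp₀ hp₁ hp hp' hn hlog
        (Nat.lt_succ_iff.1 (mem_range.1 ht))
    · have hchoose : (n.choose t : ℝ) ≤ n ^ t := mod_cast Nat.choose_le_pow n t
      rw [mul_div_left_comm]
      exact mul_le_of_le_one_right (by positivity) (div_le_one_of_le₀ hchoose (by positivity))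
  calc _ ≤ ∑ t ∈ range 6, gnpProb n p (fun G => ∃ T : Finset (Fin n), #T = t ∧ ∃ Q ⊆ T,
        #Q ≤ 2 ∧ (∀ v ∈ Q, G.degree v ≤ Real.log n / 50) ∧ #T < eIn G T + #Q) := by
        refine gnpProb_le_sum hp₀ hp₁ (range 6) _ fun G hG => ?_
        simp only [IsWellSeparated, not_forall, not_le, exists_prop] at hG
        obtain ⟨T, Q, hT, hQ, hQT, hQS, hlt⟩ := hG
        exact ⟨#T, mem_range.2 (Nat.lt_succ_of_le hT), T, rfl, Q, hQT, hQ,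
          fun v hv => (mem_filter.1 (hQS hv)).2, hlt⟩
    _ ≤ #(range 6) • c := sum_le_card_nsmul _ _ _ hlevel
    _ = 6 * 2 ^ 36 * (Real.log n ^ 6 * Real.exp (-(0.4 * Real.log n))) := by
        rw [card_range, hc, nsmul_eq_mul]
        push_cast
        ring

end Separation

/-! ## Minimum degree -/

section Independence

variable {n d : ℕ} {p : ℝ} {Γ Γ' K L : SimpleGraph (Fin n)}

lemma edgeCount_eq_zero {V : Type*} [Fintype V] {G : SimpleGraph V} : edgeCount G = 0 ↔ G = ⊥ := by
  rw [edgeCount, Finset.card_eq_zero, edgeFinset_eq_empty]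

lemma inf_eq_iff_le_and_inf_sdiff_eq_bot {α : Type*} [GeneralizedBooleanAlgebra α] {a b c : α}
    (h : b ≤ c) : a ⊓ c = b ↔ b ≤ a ∧ a ⊓ (c \ b) = ⊥ := by
  rw [← inf_sdiff_assoc, sdiff_eq_bot_iff]
  exact ⟨fun h' => ⟨h' ▸ inf_le_left, h'.le⟩, fun h' => le_antisymm h'.2 (le_inf h'.1 h)⟩

lemma gnpProb_inf_eq (p : ℝ) (h : Γ ≤ K) : gnpProb n p (fun G => G ⊓ K = Γ) =
    p ^ edgeCount Γ * (1 - p) ^ (edgeCount K - edgeCount Γ) := by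
  have hadd := edgeCount_add_of_disjoint (disjoint_sdiff_self_right (x := Γ) (y := K))
  rw [sup_sdiff_cancel_right h] at hadd
  have hexp := gnpExp_pow_edgeCount_inf (disjoint_sdiff_self_right (x := Γ) (y := K)) p 0
  rw [mul_zero, add_zero] at hexp
  rw [hadd, Nat.add_sub_cancel_left, ← hexp, gnpProb_eq_gnpExp]
  refine congrArg (gnpExp n p) (funext fun G => ?_)
  simp only [inf_eq_iff_le_and_inf_sdiff_eq_bot h, zero_pow_eq, edgeCount_eq_zero, ite_and]

lemma sup_inf_cancel_of_disjoint {α : Type*} [DistribLattice α] [OrderBot α] {a b c d : α}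
    (ha : a ≤ c) (hb : b ≤ d) (h : Disjoint c d) : (a ⊔ b) ⊓ c = a := by
  rw [inf_sup_right, inf_eq_left.2 ha, (h.symm.mono_left hb).eq_bot, sup_bot_eq]

lemma gnpProb_inf_eq_and_inf_eq (p : ℝ) (hΓ : Γ ≤ K) (hΓ' : Γ' ≤ L) (h : Disjoint K L) :
    gnpProb n p (fun G => G ⊓ K = Γ ∧ G ⊓ L = Γ') =
      gnpProb n p (fun G => G ⊓ K = Γ) * gnpProb n p (fun G => G ⊓ L = Γ') := by
  have hiff (G : SimpleGraph (Fin n)) :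
      (G ⊓ K = Γ ∧ G ⊓ L = Γ') ↔ G ⊓ (K ⊔ L) = Γ ⊔ Γ' := by
    rw [inf_sup_left]
    refine ⟨fun hG => by rw [hG.1, hG.2], fun hG => ⟨?_, ?_⟩⟩
    · rw [← sup_inf_cancel_of_disjoint hΓ hΓ' h, ← hG,
        sup_inf_cancel_of_disjoint inf_le_right inf_le_right h]
    · rw [← sup_inf_cancel_of_disjoint hΓ' hΓ h.symm, sup_comm Γ', ← hG, sup_comm,
        sup_inf_cancel_of_disjoint inf_le_right inf_le_right h.symm]
  have hsub : edgeCount K + edgeCount L - (edgeCount Γ + edgeCount Γ') =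
      edgeCount K - edgeCount Γ + (edgeCount L - edgeCount Γ') := by
    have := edgeCount_mono hΓ
    have := edgeCount_mono hΓ'
    lia
  simp only [hiff]
  rw [gnpProb_inf_eq p (sup_le_sup hΓ hΓ'), gnpProb_inf_eq p hΓ, gnpProb_inf_eq p hΓ',
    edgeCount_add_of_disjoint h, edgeCount_add_of_disjoint (h.mono hΓ hΓ'), hsub, pow_add, pow_add,
    mul_mul_mul_comm]

lemma gnpProb_and_eq_gnpExp (n : ℕ) (p : ℝ) (A B : SimpleGraph (Fin n) → Prop) :
    gnpProb n p (fun G => A G ∧ B G) =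
      gnpExp n p fun G => (if A G then 1 else 0) * if B G then 1 else 0 := by
  rw [gnpProb_eq_gnpExp]
  refine congrArg (gnpExp n p) (funext fun G => ?_)
  split_ifs <;> first | tauto | norm_num

lemma apply_inf_eq_sum (f : SimpleGraph (Fin n) → ℝ) (G K : SimpleGraph (Fin n)) :
    f (G ⊓ K) = ∑ Γ : SimpleGraph (Fin n) with Γ ≤ K, f Γ * if G ⊓ K = Γ then 1 else 0 := by
  have hmem : G ⊓ K ∈ ({Γ | Γ ≤ K} : Finset (SimpleGraph (Fin n))) :=
    mem_filter.2 ⟨mem_univ _, inf_le_right⟩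
  refine ((sum_eq_single_of_mem (G ⊓ K) hmem fun Γ _ hΓ => ?_).trans ?_).symm
  · rw [if_neg hΓ.symm, mul_zero]
  · rw [if_pos rfl, mul_one]

lemma gnpExp_apply_inf (p : ℝ) (f : SimpleGraph (Fin n) → ℝ) (K : SimpleGraph (Fin n)) :
    gnpExp n p (fun G => f (G ⊓ K)) =
      ∑ Γ : SimpleGraph (Fin n) with Γ ≤ K, f Γ * gnpProb n p fun G => G ⊓ K = Γ := by
  simp only [apply_inf_eq_sum f, gnpExp_sum, gnpExp_const_mul, ← gnpProb_eq_gnpExp]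

lemma gnpExp_apply_inf_mul_apply_inf (p : ℝ) (f g : SimpleGraph (Fin n) → ℝ) (h : Disjoint K L) :
    gnpExp n p (fun G => f (G ⊓ K) * g (G ⊓ L)) =
      gnpExp n p (fun G => f (G ⊓ K)) * gnpExp n p fun G => g (G ⊓ L) := by
  rw [gnpExp_apply_inf, gnpExp_apply_inf, sum_mul_sum]
  simp only [apply_inf_eq_sum f _ K, apply_inf_eq_sum g _ L, sum_mul_sum, gnpExp_sum]
  refine sum_congr rfl fun Γ hΓ => sum_congr rfl fun Γ' hΓ' => ?_
  rw [mul_mul_mul_comm, ← gnpProb_inf_eq_and_inf_eq p (mem_filter.1 hΓ).2 (mem_filter.1 hΓ').2 h,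
    gnpProb_and_eq_gnpExp, ← gnpExp_const_mul]
  simp only [mul_mul_mul_comm]

lemma gnpProb_inf_and_inf (p : ℝ) (h : Disjoint K L) (A B : SimpleGraph (Fin n) → Prop) :
    gnpProb n p (fun G => A (G ⊓ K) ∧ B (G ⊓ L)) =
      gnpProb n p (fun G => A (G ⊓ K)) * gnpProb n p fun G => B (G ⊓ L) := by
  rw [gnpProb_and_eq_gnpExp, gnpProb_eq_gnpExp, gnpProb_eq_gnpExp,
    ← gnpExp_apply_inf_mul_apply_inf p (fun Γ => if A Γ then 1 else 0)
      (fun Γ => if B Γ then 1 else 0) h]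

lemma gnpProb_inf (p : ℝ) (A : SimpleGraph (Fin n) → Prop) (K : SimpleGraph (Fin n)) :
    gnpProb n p (fun G => A (G ⊓ K)) =
      ∑ Γ : SimpleGraph (Fin n) with Γ ≤ K,
        if A Γ then p ^ edgeCount Γ * (1 - p) ^ (edgeCount K - edgeCount Γ) else 0 := by
  rw [gnpProb_eq_gnpExp, gnpExp_apply_inf p fun Γ => if A Γ then 1 else 0]
  exact sum_congr rfl fun Γ hΓ => by
    rw [gnpProb_inf_eq p (mem_filter.1 hΓ).2, ite_mul, one_mul, zero_mul]

/-- The probability that a binomial random variable with `m` trials and success probability `p` is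
at most `d`. -/
noncomputable def binomialCDF (p : ℝ) (m d : ℕ) : ℝ :=
  ∑ j ∈ range (m + 1), m.choose j * if j ≤ d then p ^ j * (1 - p) ^ (m - j) else 0

lemma gnpProb_edgeCount_inf_le (p : ℝ) (K : SimpleGraph (Fin n)) (d : ℕ) :
    gnpProb n p (fun G => edgeCount (G ⊓ K) ≤ d) = binomialCDF p (edgeCount K) d := by
  rw [gnpProb_inf p (edgeCount · ≤ d), binomialCDF, ← sum_le_eq_sum_choose K
    fun j => if j ≤ d then p ^ j * (1 - p) ^ (edgeCount K - j) else 0]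
  exact sum_congr rfl fun Γ _ => by congr

lemma gnpProb_edgeCount_inf_le_and (p : ℝ) (h : Disjoint K L) (d : ℕ) :
    gnpProb n p (fun G => edgeCount (G ⊓ K) ≤ d ∧ edgeCount (G ⊓ L) ≤ d) =
      binomialCDF p (edgeCount K) d * binomialCDF p (edgeCount L) d := by
  rw [gnpProb_inf_and_inf p h (edgeCount · ≤ d) (edgeCount · ≤ d), gnpProb_edgeCount_inf_le,
    gnpProb_edgeCount_inf_le]

lemma binomialCDF_nonneg (hp₀ : 0 ≤ p) (hp₁ : p ≤ 1) (m d : ℕ) : 0 ≤ binomialCDF p m d := by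
  have : 0 ≤ 1 - p := by linarith
  exact sum_nonneg fun j _ => by split_ifs <;> positivity

lemma mul_binomialCDF_le_succ (hp₀ : 0 ≤ p) (hp₁ : p ≤ 1) (m d : ℕ) :
    (1 - p) * binomialCDF p m d ≤ binomialCDF p (m + 1) d := by
  have : 0 ≤ 1 - p := by linarith
  rw [binomialCDF, binomialCDF, mul_sum, sum_range_succ _ (m + 1)]
  refine le_add_of_le_of_nonneg (sum_le_sum fun j hj => ?_) (by split_ifs <;> positivity)
  rw [Nat.sub_add_comm (mem_range_succ_iff.1 hj), mul_left_comm, mul_ite, mul_zero, pow_succ',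
    mul_left_comm]
  gcongr
  exact Nat.le_succ m

lemma choose_mul_le_binomialCDF (hp₀ : 0 ≤ p) (hp₁ : p ≤ 1) {m : ℕ} (hd : d ≤ m) :
    m.choose d * (p ^ d * (1 - p) ^ (m - d)) ≤ binomialCDF p m d := by
  have : 0 ≤ 1 - p := by linarith
  refine le_of_eq_of_le (by rw [if_pos le_rfl]) (single_le_sum
    (f := fun j => (m.choose j : ℝ) * if j ≤ d then p ^ j * (1 - p) ^ (m - j) else 0)
    (fun j _ => ?_) (mem_range_succ_iff.2 hd))
  split_ifs <;> positivity

end Independence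

section SecondMoment

variable {n d : ℕ} {p : ℝ}

lemma gnpExp_add (f g : SimpleGraph (Fin n) → ℝ) :
    gnpExp n p (fun G => f G + g G) = gnpExp n p f + gnpExp n p g := by
  simp only [gnpExp, mul_add, sum_add_distrib]

lemma gnpProb_eq_zero_le (hp₀ : 0 ≤ p) (hp₁ : p ≤ 1) {W : SimpleGraph (Fin n) → ℝ}
    (hW : 0 < gnpExp n p W) :
    gnpProb n p (fun G => W G = 0) ≤ gnpExp n p (fun G => W G * W G) / gnpExp n p W ^ 2 - 1 := by
  set μ := gnpExp n p W
  have hchebyshev : gnpProb n p (fun G => W G = 0) ≤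
      gnpExp n p fun G => (μ ^ 2)⁻¹ * (W G - μ) ^ 2 := by
    refine gnpProb_le_gnpExp hp₀ hp₁ (fun G => by positivity) fun G hG => ?_
    rw [hG, zero_sub, neg_sq, inv_mul_cancel₀ (by positivity)]
  have hvar : gnpExp n p (fun G => (W G - μ) ^ 2) = gnpExp n p (fun G => W G * W G) - μ ^ 2 := by
    calc _ = gnpExp n p fun G => W G * W G + (-2 * μ * W G + μ ^ 2 * 1) :=
          congrArg (gnpExp n p) (funext fun G => by ring)
      _ = _ := by
          rw [gnpExp_add, gnpExp_add, gnpExp_const_mul, gnpExp_const_mul, gnpExp_one]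
          ring
  rw [gnpExp_const_mul, hvar] at hchebyshev
  refine hchebyshev.trans_eq ?_
  field_simp

lemma gnpProb_forall_not_le {ι : Type*} [Fintype ι] (hp₀ : 0 ≤ p) (hp₁ : p ≤ 1)
    {A : ι → SimpleGraph (Fin n) → Prop} {q r : ℝ} (hμ : 0 < Fintype.card ι * q)
    (hq : ∀ i, gnpProb n p (A i) = q)
    (hr : ∀ i j, i ≠ j → gnpProb n p (fun G => A i G ∧ A j G) ≤ r) (hr₀ : 0 ≤ r) :
    gnpProb n p (fun G => ∀ i, ¬ A i G) ≤
      (Fintype.card ι * q + Fintype.card ι ^ 2 * r) / (Fintype.card ι * q) ^ 2 - 1 := by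
  have hmean : gnpExp n p (fun G => ∑ i, if A i G then 1 else 0) = Fintype.card ι * q := by
    simp only [gnpExp_sum, ← gnpProb_eq_gnpExp, hq, sum_const, card_univ, nsmul_eq_mul]
  have hpair (i) : ∑ j, gnpProb n p (fun G => A i G ∧ A j G) ≤ q + Fintype.card ι * r := by
    rw [← add_sum_erase _ _ (mem_univ i)]
    refine add_le_add (by simp only [and_self, hq, le_refl]) ?_
    refine (sum_le_card_nsmul _ _ r fun j hj => hr i j (ne_of_mem_erase hj).symm).trans ?_
    rw [nsmul_eq_mul]
    gcongr
    exact card_le_univ _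
  have hsq : gnpExp n p (fun G => (∑ i, if A i G then 1 else 0) * ∑ i, if A i G then 1 else 0) ≤
      Fintype.card ι * q + Fintype.card ι ^ 2 * r := by
    simp only [sum_mul_sum, gnpExp_sum, ← gnpProb_and_eq_gnpExp]
    refine (sum_le_card_nsmul _ _ _ fun i _ => hpair i).trans_eq ?_
    rw [card_univ, nsmul_eq_mul]
    ring
  have h := gnpProb_eq_zero_le hp₀ hp₁ (hmean.symm ▸ hμ)
  rw [hmean] at h
  refine (gnpProb_mono hp₀ hp₁ fun G hG => ?_).trans
    (h.trans (sub_le_sub_right (div_le_div_of_nonneg_right hsq (sq_nonneg _)) 1))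
  exact sum_eq_zero fun i _ => if_neg (hG i)

lemma edgeCount_between_singleton_compl {V : Type*} [Fintype V] (G : SimpleGraph V) (v : V) :
    edgeCount (G.between {v} {v}ᶜ) = G.degree v := by
  rw [edgeCount_eq_card_edgeFinset, ← card_incidenceFinset_eq_degree]
  refine congrArg card (ext fun e => ?_)
  rw [mem_edgeFinset, mem_incidenceFinset]
  induction e with
  | h a b =>
    rw [mem_edgeSet, between_adj, mk'_mem_incidenceSet_iff]
    simp only [Set.mem_singleton_iff, Set.mem_compl_iff]
    have (h : G.Adj a b) : a ≠ b := h.ne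
    grind

lemma edgeCount_top_between {V : Type*} [Fintype V] {A B : Finset V} (h : Disjoint A B) :
    edgeCount ((⊤ : SimpleGraph V).between A B) = #A * #B :=
  (edgeCount_between_le_card_mul ⊤ A B).antisymm (card_mul_card_le_edgeCount_between h)

lemma gnpProb_degree_le (p : ℝ) (v : Fin n) (d : ℕ) :
    gnpProb n p (fun G => G.degree v ≤ d) = binomialCDF p (n - 1) d := by
  have hcard := edgeCount_top_between (disjoint_compl_right (a := ({v} : Finset (Fin n))))
  rw [card_compl, Fintype.card_fin, card_singleton, one_mul, coe_compl, coe_singleton] at hcard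
  rw [← hcard, ← gnpProb_edgeCount_inf_le]
  simp only [← edgeCount_between_singleton_compl, ← between_eq_inf]

lemma gnpProb_degree_le_and_le (hp₀ : 0 ≤ p) (hp₁ : p ≤ 1) {u v : Fin n} (huv : u ≠ v) (d : ℕ) :
    gnpProb n p (fun G => G.degree u ≤ d ∧ G.degree v ≤ d) ≤ binomialCDF p (n - 2) d ^ 2 := by
  have hle (G : SimpleGraph (Fin n)) (w : Fin n) :
      edgeCount (G ⊓ (⊤ : SimpleGraph (Fin n)).between ({w} : Finset (Fin n))
        ({u, v}ᶜ : Finset (Fin n))) ≤ G.degree w := by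
    rw [← between_eq_inf]
    exact (edgeCount_between_le_sum_degree G _ _).trans_eq (sum_singleton _ _)
  have hcard (w) (hw : w ∈ ({u, v} : Finset (Fin n))) :
      edgeCount ((⊤ : SimpleGraph (Fin n)).between ({w} : Finset (Fin n))
        ({u, v}ᶜ : Finset (Fin n))) = n - 2 := by
    rw [edgeCount_top_between (disjoint_compl_right_iff.2 (singleton_subset_iff.2 hw)), card_compl,
      Fintype.card_fin, card_pair huv, card_singleton, one_mul]
  have hdisj : Disjoint
      ((⊤ : SimpleGraph (Fin n)).between ({u} : Finset (Fin n)) ({u, v}ᶜ : Finset (Fin n)))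
      ((⊤ : SimpleGraph (Fin n)).between ({v} : Finset (Fin n)) ({u, v}ᶜ : Finset (Fin n))) := by
    refine SimpleGraph.disjoint_left.2 fun a b hab hab' => ?_
    have h₁ := hab.2
    have h₂ := hab'.2
    simp only [mem_coe, mem_singleton, mem_compl, mem_insert] at h₁ h₂
    grind
  have hprod := gnpProb_edgeCount_inf_le_and p hdisj d
  rw [hcard u (by simp), hcard v (by simp), ← sq] at hprod
  rw [← hprod]
  exact gnpProb_mono hp₀ hp₁ fun G hG => ⟨(hle G u).trans hG.1, (hle G v).trans hG.2⟩

lemma gnpProb_forall_lt_degree_le (hp₀ : 0 ≤ p) (hp₁ : p < 1) (hn : 2 ≤ n)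
    (hd : 0 < binomialCDF p (n - 1) d) :
    gnpProb n p (fun G => ∀ v, d < G.degree v) ≤
      1 / (n * binomialCDF p (n - 1) d) + 1 / (1 - p) ^ 2 - 1 := by
  have : (0 : ℝ) < n := Nat.cast_pos.2 (by lia)
  have hp : 0 < 1 - p := by linarith
  have hratio : binomialCDF p (n - 2) d ^ 2 ≤ (binomialCDF p (n - 1) d / (1 - p)) ^ 2 := by
    refine pow_le_pow_left₀ (binomialCDF_nonneg hp₀ hp₁.le _ _) ?_ 2
    rw [le_div_iff₀' hp]
    exact (mul_binomialCDF_le_succ hp₀ hp₁.le (n - 2) d).trans_eq (by congr 1; lia)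
  have h := gnpProb_forall_not_le (A := fun (v : Fin n) G => G.degree v ≤ d) hp₀ hp₁.le
    (by rw [Fintype.card_fin]; positivity) (gnpProb_degree_le p · d)
    (fun u v huv => (gnpProb_degree_le_and_le hp₀ hp₁.le huv d).trans hratio) (sq_nonneg _)
  simp only [not_le, Fintype.card_fin] at h
  refine h.trans_eq ?_
  field_simp

end SecondMoment

section MinDegree

variable {n m d : ℕ} {p ε : ℝ}

lemma eventually_gnpProb_forall_lt_degree_le (hε : 0 < ε) :
    ∀ᶠ n : ℕ in atTop, ∀ (p : ℝ) (d : ℕ), 0 ≤ p → p * n ≤ 1.02 * Real.log n →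
      Real.exp (0.01 * Real.log n) ≤ n * binomialCDF p (n - 1) d →
      gnpProb n p (fun G => ∀ v, d < G.degree v) ≤ ε := by
  filter_upwards [(tendsto_exp_neg_mul_log (c := 0.01) (by norm_num)).eventually
    (eventually_le_nhds (half_pos hε)), eventually_log_le_mul (c := ε / 7) (by positivity),
    eventually_log_le_mul (c := 1 / 7) (by norm_num), eventually_ge_atTop 2] with
    n hexp hlog_ε hlog hn p d hp₀ hp hμ
  have hn₀ : (0 : ℝ) < n := Nat.cast_pos.2 (by lia)
  have hp₁ : p ≤ 1 / 6 := le_of_mul_le_mul_right (by linarith) hn₀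
  have hpε : p ≤ ε / 6 := by
    refine le_of_mul_le_mul_right (hp.trans ?_) hn₀
    nlinarith
  have hμ₀ : 0 < n * binomialCDF p (n - 1) d := (Real.exp_pos _).trans_le hμ
  have hfirst : 1 / (n * binomialCDF p (n - 1) d) ≤ ε / 2 := by
    refine (one_div_le_one_div_of_le (Real.exp_pos _) hμ).trans ?_
    rwa [one_div, ← Real.exp_neg]
  have hsecond : 1 / (1 - p) ^ 2 ≤ 1 + 3 * p := by
    rw [div_le_iff₀ (by nlinarith)]
    nlinarith [mul_nonneg hp₀ hp₀, mul_nonneg (mul_nonneg hp₀ hp₀) hp₀]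
  linarith [gnpProb_forall_lt_degree_le hp₀ (by linarith) hn (pos_of_mul_pos_right hμ₀ hn₀.le)]

lemma exp_neg_le_one_sub_pow (hp₀ : 0 ≤ p) (hp₁ : p ≤ 1 / 1000) (hm : m ≤ n) :
    Real.exp (-(1.002 * (p * n))) ≤ (1 - p) ^ m := by
  have hq : 0 < 1 - p := by linarith
  have hexp : Real.exp (-(1.002 * p)) ≤ 1 - p := by
    rw [Real.exp_neg, inv_le_comm₀ (Real.exp_pos _) hq]
    refine le_trans ?_ (Real.add_one_le_exp (1.002 * p))
    rw [inv_le_iff_one_le_mul₀ hq]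
    nlinarith
  calc Real.exp (-(1.002 * (p * n))) = Real.exp (-(1.002 * p)) ^ n := by
        rw [← Real.exp_nat_mul]
        congr 1
        ring
    _ ≤ (1 - p) ^ n := pow_le_pow_left₀ (Real.exp_pos _).le hexp _
    _ ≤ (1 - p) ^ m := pow_le_pow_of_le_one hq.le (by linarith) hm

lemma eventually_gnpProb_forall_degree_pos_le (hε : 0 < ε) :
    ∀ᶠ n : ℕ in atTop, ∀ p : ℝ, 0 ≤ p → p * n ≤ 0.9 * Real.log n →
      gnpProb n p (fun G => ∀ v, 0 < G.degree v) ≤ ε := by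
  filter_upwards [eventually_gnpProb_forall_lt_degree_le hε,
    eventually_log_le_mul (c := 1 / 1000) (by norm_num), eventually_ge_atTop 2] with
    n hmoment hlog hn p hp₀ hp
  have hn₀ : (0 : ℝ) < n := Nat.cast_pos.2 (by lia)
  have hlog₀ := Real.log_natCast_nonneg n
  have hp₁ : p ≤ 1 / 1000 := le_of_mul_le_mul_right (by linarith) hn₀
  refine hmoment p 0 hp₀ (by linarith) ?_
  have hcdf := choose_mul_le_binomialCDF hp₀ (by linarith) (Nat.zero_le (n - 1))
  rw [Nat.choose_zero_right, Nat.cast_one, pow_zero, one_mul, one_mul, Nat.sub_zero] at hcdf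
  calc Real.exp (0.01 * Real.log n)
      ≤ Real.exp (Real.log n) * Real.exp (-(1.002 * (p * n))) := by
        rw [← Real.exp_add]
        exact Real.exp_le_exp.2 (by linarith)
    _ ≤ n * binomialCDF p (n - 1) 0 := by
        rw [Real.exp_log hn₀]
        gcongr
        exact (exp_neg_le_one_sub_pow hp₀ hp₁ n.pred_le).trans hcdf

lemma exp_four_le : Real.exp 4 ≤ 89 := by
  rw [show (4 : ℝ) = (4 : ℕ) * 1 by norm_num, Real.exp_nat_mul]
  exact (pow_le_pow_left₀ (Real.exp_pos _).le Real.exp_one_lt_d9.le 4).trans (by norm_num)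

lemma div_pow_le_choose (hd : d ≤ m) : ((m + 1 - d) / d : ℝ) ^ d ≤ m.choose d := by
  refine le_trans ?_ (Nat.pow_le_choose (α := ℝ) d m)
  rw [Nat.cast_sub (by lia), Nat.cast_succ, div_pow]
  have hd' : (d : ℝ) ≤ m := Nat.cast_le.2 hd
  have : 0 ≤ (m + 1 - d : ℝ) := by linarith
  gcongr
  exact mod_cast d.factorial_le_pow

lemma exp_le_mul_binomialCDF (hp₀ : 0 ≤ p) (hp : 0.9 * Real.log n ≤ p * n)
    (hp' : p * n ≤ 1.02 * Real.log n) (hlog : 1000 ≤ Real.log n)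
    (hlog_n : Real.log n ≤ 1 / 2000 * n) :
    Real.exp (0.01 * Real.log n) ≤ n * binomialCDF p (n - 1) ⌊Real.log n / 100⌋₊ := by
  set d := ⌊Real.log n / 100⌋₊
  have hn₀ : (0 : ℝ) < n := by linarith
  have hd_le : (d : ℝ) ≤ Real.log n / 100 := Nat.floor_le (by linarith)
  have hd_ge : Real.log n / 100 - 1 < d := Nat.sub_one_lt_floor _
  have hd₀ : (0 : ℝ) < d := by linarith
  have hn : d + 1 ≤ n := by
    have : (d : ℝ) + 1 ≤ n := by linarith
    exact mod_cast this
  have hp₁ : p ≤ 1 / 1000 := le_of_mul_le_mul_right (by linarith) hn₀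
  have hbase : Real.exp 4 ≤ ((n - 1 : ℕ) + 1 - d) / d * p := by
    refine exp_four_le.trans ?_
    rw [Nat.cast_pred (by lia), div_mul_eq_mul_div, le_div_iff₀ hd₀]
    nlinarith
  have hchoose : Real.exp 4 ^ d ≤ (n - 1).choose d * p ^ d := by
    refine (pow_le_pow_left₀ (Real.exp_pos _).le hbase d).trans ?_
    rw [mul_pow]
    gcongr
    exact div_pow_le_choose (by lia)
  calc Real.exp (0.01 * Real.log n)
      ≤ Real.exp (Real.log n) * (Real.exp 4 ^ d * Real.exp (-(1.002 * (p * n)))) := by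
        rw [← Real.exp_nat_mul, ← Real.exp_add, ← Real.exp_add]
        exact Real.exp_le_exp.2 (by linarith)
    _ ≤ n * ((n - 1).choose d * p ^ d * (1 - p) ^ (n - 1 - d)) := by
        rw [Real.exp_log hn₀]
        gcongr
        exact exp_neg_le_one_sub_pow hp₀ hp₁ (by lia)
    _ ≤ n * binomialCDF p (n - 1) d := by
        rw [mul_assoc (Nat.cast _)]
        gcongr
        exact choose_mul_le_binomialCDF hp₀ (by linarith) (by lia)

lemma isUnlikely_forall_lt_degree :
    IsUnlikely fun n G => ∀ v, Real.log n / 100 < G.degree v := by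
  intro ε hε
  filter_upwards [eventually_gnpProb_forall_lt_degree_le hε,
    tendsto_log_natCast.eventually_ge_atTop 1000,
    eventually_log_le_mul (c := 1 / 2000) (by norm_num)] with n hmoment hlog hlog_n p hp hp'
  have hn₀ : (0 : ℝ) < n := by linarith
  have hp₀ : 0 ≤ p := nonneg_of_mul_nonneg_left ((by linarith : (0 : ℝ) ≤ _).trans hp) hn₀
  refine (gnpProb_mono hp₀ (le_of_mul_le_mul_right (by linarith) hn₀) fun G hG v => ?_).trans
    (hmoment p _ hp₀ hp' (exp_le_mul_binomialCDF hp₀ hp hp' hlog hlog_n))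
  exact (Nat.floor_lt (by linarith)).2 (hG v)

end MinDegree

/-! ## Packing Hamilton cycles -/

section Pseudorandom

variable {n i : ℕ} {G H : SimpleGraph (Fin n)}

/-- The typical properties of `G(n, p)` for `0.9 log n ≤ p n ≤ 1.02 log n` which make it contain
half as many edge-disjoint Hamilton cycles as its minimum degree. The threshold `log n / 50` for
small degrees exceeds the minimum degree by a constant factor, and the numerical constants leave
room for deleting all the edges of fewer than `log n / 200` Hamilton cycles. -/
structure IsPseudorandom (G : SimpleGraph (Fin n)) : Prop where
  exists_degree_le : ∃ v, G.degree v ≤ Real.log n / 100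
  edgeCount_lt : edgeCount G < 2 * n * Real.log n
  lt_edgeCount_between : ∀ A B : Finset (Fin n), Disjoint A B → 1e-8 * (n : ℝ) ≤ #A →
    n ≤ 4 * #B → 0.05 * Real.log n * #A < edgeCount (G.between A B)
  lt_edgeCount_boosterGraph_inf : ∀ Γ ≤ G, edgeCount Γ ≤ n * Real.log n / 5000 →
    n ^ 2 ≤ 32 * edgeCount (boosterGraph Γ) →
      n * Real.log n / 200 < edgeCount (boosterGraph Γ ⊓ G)
  eIn_le : ∀ T : Finset (Fin n), 10 ^ 7 * #T ≤ n → 10 * eIn G T ≤ ⌊Real.log n / 10 ^ 4⌋₊ * #T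
  isWellSeparated : IsWellSeparated G ({v | G.degree v ≤ Real.log n / 50} : Finset (Fin n))

lemma isUnlikely_not_isPseudorandom : IsUnlikely fun n G => ¬ IsPseudorandom (n := n) G := by
  have hor := isUnlikely_forall_lt_degree.or <| isUnlikely_edgeCount.or <|
    isUnlikely_edgeCount_between.or <| isUnlikely_few_boosters.or <|
    isUnlikely_dense.or isUnlikely_not_isWellSeparated
  convert hor using 3 with n G
  rw [← not_iff_not]
  push Not
  exact ⟨fun h => ⟨h.1, h.2, h.3, h.4, h.5, h.6⟩,
    fun ⟨h₁, h₂, h₃, h₄, h₅, h₆⟩ => ⟨h₁, h₂, h₃, h₄, h₅, h₆⟩⟩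

lemma one_sub_pow_mul_four_pow_lt_one (hn : n ≠ 0) :
    (1 - 1e-10 : ℝ) ^ (2 * 10 ^ 10 * n) * 4 ^ n < 1 := by
  have hfour : (4 : ℝ) < Real.exp 2 := by
    rw [show (2 : ℝ) = 1 + 1 by norm_num, Real.exp_add]
    nlinarith [Real.exp_one_gt_d9]
  have hpow : (1 - 1e-10 : ℝ) ^ (2 * 10 ^ 10) ≤ Real.exp (-2) := by
    refine (pow_le_pow_left₀ (by norm_num) (Real.one_sub_le_exp_neg _) _).trans_eq ?_
    rw [← Real.exp_nat_mul]
    norm_num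
  rw [pow_mul, ← mul_pow]
  refine pow_lt_one₀ (by positivity) ?_ hn
  calc (1 - 1e-10 : ℝ) ^ (2 * 10 ^ 10) * 4 < Real.exp (-2) * Real.exp 2 :=
        mul_lt_mul' hpow hfour (by norm_num) (Real.exp_pos _)
    _ = 1 := by rw [← Real.exp_add, neg_add_cancel, Real.exp_zero]

namespace IsPseudorandom

lemma minDegree_le (hG : IsPseudorandom G) : G.minDegree ≤ Real.log n / 100 := by
  obtain ⟨v, hv⟩ := hG.exists_degree_le
  exact (Nat.cast_le.2 (G.minDegree_le_degree v)).trans hv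

lemma eIn_le_of_card_le (hG : IsPseudorandom G) (hn : 10 ^ 10 ≤ n) {T : Finset (Fin n)}
    (hT : #T ≤ 5 * ⌈1e-8 * (n : ℝ)⌉₊) : 10 * eIn G T ≤ ⌊Real.log n / 10 ^ 4⌋₊ * #T := by
  refine hG.eIn_le T ?_
  have hn' : (10 ^ 10 : ℝ) ≤ n := mod_cast hn
  have hceil : (⌈1e-8 * (n : ℝ)⌉₊ : ℝ) < 1e-8 * n + 1 := Nat.ceil_lt_add_one (by positivity)
  have hT' : (#T : ℝ) ≤ 5 * ⌈1e-8 * (n : ℝ)⌉₊ := mod_cast hT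
  have : (10 ^ 7 * #T : ℝ) ≤ n := by linarith
  exact mod_cast this

lemma le_edgeCount_between (hG : IsPseudorandom G) (hlog : 0 ≤ Real.log n)
    (hi : 2 * i ≤ Real.log n / 100) {A B : Finset (Fin n)} (hAB : Disjoint A B)
    (hA : ⌈1e-8 * (n : ℝ)⌉₊ ≤ #A) (hB : n ≤ 4 * #B) :
    1e-10 * edgeCount G + 2 * i * #A ≤ (edgeCount (G.between A B) : ℝ) := by
  have hA' := Nat.ceil_le.1 hA
  calc 1e-10 * edgeCount G + 2 * i * #A
      ≤ 1e-10 * (2 * n * Real.log n) + Real.log n / 100 * #A := by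
        gcongr
        exact hG.edgeCount_lt.le
    _ ≤ 0.05 * Real.log n * #A := by
        linarith [mul_le_mul_of_nonneg_right hA' hlog, mul_nonneg hlog (#A).cast_nonneg]
    _ ≤ edgeCount (G.between A B) := (hG.lt_edgeCount_between A B hAB hA' hB).le

lemma mul_lt_edgeCount_boosterGraph_inf (hG : IsPseudorandom G) (hlog : 10 ^ 15 ≤ Real.log n)
    (hi : 2 * i ≤ Real.log n / 100) {Γ : SimpleGraph (Fin n)} (hΓ : Γ ≤ G)
    (hcount : edgeCount Γ ≤ 2 * 10 ^ 10 * n + n * (⌊Real.log n / 10 ^ 4⌋₊ + 3))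
    (hsq : n ^ 2 ≤ 32 * edgeCount (boosterGraph Γ)) :
    n * i < edgeCount (boosterGraph Γ ⊓ G) := by
  have hcount' : (edgeCount Γ : ℝ) ≤ n * Real.log n / 5000 :=
    calc (edgeCount Γ : ℝ) ≤ 2 * 10 ^ 10 * n + n * (⌊Real.log n / 10 ^ 4⌋₊ + 3) := mod_cast hcount
      _ ≤ 2 * 10 ^ 10 * n + n * (Real.log n / 10 ^ 4 + 3) := by
        gcongr
        exact Nat.floor_le (by positivity)
      _ = n * (2 * 10 ^ 10 + (Real.log n / 10 ^ 4 + 3)) := by ring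
      _ ≤ n * (Real.log n / 5000) := by
        gcongr
        linarith
      _ = n * Real.log n / 5000 := by ring
  have hlt : (n * i : ℝ) < edgeCount (boosterGraph Γ ⊓ G) :=
    calc (n * i : ℝ) ≤ n * (Real.log n / 200) := by
          gcongr
          linarith
      _ = n * Real.log n / 200 := by ring
      _ < _ := hG.lt_edgeCount_boosterGraph_inf Γ hΓ hcount' hsq
  exact mod_cast hlt

lemma isHamiltonian_sdiff (hG : IsPseudorandom G) (hlog : 10 ^ 15 ≤ Real.log n)
    (hi : 2 * i + 2 ≤ Real.log n / 100) (hdeg : ∀ v, 2 * i + 2 ≤ G.degree v)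
    (hH : ∀ v, H.degree v ≤ 2 * i) : (G \ H).IsHamiltonian := by
  have hn : 10 ^ 10 ≤ n := by
    have : (10 ^ 10 : ℝ) ≤ n := by linarith [Real.log_le_self (Nat.cast_nonneg (α := ℝ) n)]
    exact mod_cast this
  have hlog₀ : 0 ≤ Real.log n := by linarith
  have hi' : 2 * (i : ℝ) ≤ Real.log n / 100 := by linarith
  have hd : 0 < ⌊Real.log n / 10 ^ 4⌋₊ := Nat.floor_pos.2 (by linarith)
  have hlarge (v) (hv : v ∉ ({v | G.degree v ≤ Real.log n / 50} : Finset (Fin n))) :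
      ⌊Real.log n / 10 ^ 4⌋₊ + 2 + 2 * i ≤ G.degree v := by
    rw [mem_filter_univ, not_le] at hv
    have hfloor : (⌊Real.log n / 10 ^ 4⌋₊ : ℝ) ≤ Real.log n / 10 ^ 4 :=
      Nat.floor_le (by positivity)
    have : (⌊Real.log n / 10 ^ 4⌋₊ + 2 + 2 * i : ℝ) ≤ G.degree v := by linarith
    exact mod_cast this
  convert isHamiltonian_of_le_sup (s := ⌈1e-8 * (n : ℝ)⌉₊) (η := 1e-10) (r := 2 * 10 ^ 10 * n)
    ?_ sdiff_le le_sdiff_sup hH hG.isWellSeparated hd hdeg hlarge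
    (fun T => hG.eIn_le_of_card_le hn) (by norm_num) (by norm_num) ?_ ?_ ?_ <;>
    rw [Fintype.card_fin]
  · lia
  · exact one_sub_pow_mul_four_pow_lt_one (by lia)
  · exact fun A B => hG.le_edgeCount_between hlog₀ hi'
  · exact fun Γ => hG.mul_lt_edgeCount_boosterGraph_inf hlog hi'

lemma hasDisjointHamiltonianCycles (hG : IsPseudorandom G) (hlog : 10 ^ 15 ≤ Real.log n) :
    HasDisjointHamiltonianCycles G (G.minDegree / 2) := by
  have hcard : Fintype.card (Fin n) ≠ 1 := by
    intro h
    rw [Fintype.card_fin] at h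
    norm_num [h] at hlog
  refine hasDisjointHamiltonianCycles_of_sdiff hcard _ fun i hi H hH => ?_
  have hi' : 2 * i + 2 ≤ G.minDegree := by lia
  exact hG.isHamiltonian_sdiff hlog (le_trans (mod_cast hi') hG.minDegree_le)
    (fun v => hi'.trans (G.minDegree_le_degree v)) hH

end IsPseudorandom

end Pseudorandom

section Threshold

variable {p : ℕ → ℝ} {A : ∀ n : ℕ, SimpleGraph (Fin n) → Prop} {ε : ℝ}

lemma whp_of_eventually_gnpProb_not_le (hp₀ : ∀ n, 0 ≤ p n) (hp₁ : ∀ᶠ n in atTop, p n ≤ 1)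
    (h : ∀ ε > 0, ∀ᶠ n in atTop, gnpProb n (p n) (fun G => ¬ A n G) ≤ ε) : WHP p A := by
  refine tendsto_order.2 ⟨fun a ha => ?_, fun a ha => ?_⟩
  · filter_upwards [h ((1 - a) / 2) (by linarith)] with n hn
    rw [gnpProb_not] at hn
    linarith
  · filter_upwards [hp₁] with n hn
    have hnot := gnpProb_nonneg (hp₀ n) hn fun G => ¬ A n G
    rw [gnpProb_not] at hnot
    linarith

lemma eventually_gnpProb_not_hasDisjointHamiltonianCycles_le (hε : 0 < ε) :
    ∀ᶠ n : ℕ in atTop, ∀ p : ℝ, 0 ≤ p → p ≤ 1 → p * n ≤ 1.02 * Real.log n →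
      gnpProb n p (fun G => ¬ HasDisjointHamiltonianCycles G (G.minDegree / 2)) ≤ ε := by
  filter_upwards [eventually_gnpProb_forall_degree_pos_le hε, isUnlikely_not_isPseudorandom ε hε,
    tendsto_log_natCast.eventually_ge_atTop (10 ^ 15)] with n hsparse hdense hlog p hp₀ hp₁ hp
  rcases le_total (p * n) (0.9 * Real.log n) with hlow | hlow
  · refine (gnpProb_mono hp₀ hp₁ fun G hG v => ?_).trans (hsparse p hp₀ hlow)
    contrapose! hG
    have hmin : G.minDegree / 2 = 0 := by
      have := G.minDegree_le_degree v
      lia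
    rw [hmin]
    exact hasDisjointHamiltonianCycles_zero G
  · exact (gnpProb_mono hp₀ hp₁ fun G => mt fun hG => hG.hasDisjointHamiltonianCycles hlog).trans
      (hdense p hlow hp)

end Threshold

/-- Theorem 4: for `p ≤ 1.02 ln n / n`, w.h.p. `G ~ G(n,p)` contains `⌊δ(G)/2⌋`
pairwise edge-disjoint Hamilton cycles. -/
theorem stmt3 (p : ℕ → ℝ) (hp0 : ∀ n, 0 ≤ p n)
    (hhigh : ∀ n : ℕ, p n ≤ 1.02 * Real.log n / n) :
    WHP p (fun n G => ∀ hn : 0 < n,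
      haveI : Nonempty (Fin n) := ⟨⟨0, hn⟩⟩
      ∃ c : Fin (G.minDegree / 2) → Σ v : Fin n, G.Walk v v,
        (∀ i, (c i).2.IsHamiltonianCycle) ∧
        (∀ i j, i ≠ j → List.Disjoint ((c i).2.edges) ((c j).2.edges))) := by
  have hmul : ∀ᶠ n : ℕ in atTop, p n * n ≤ 1.02 * Real.log n := by
    filter_upwards [eventually_gt_atTop 0] with n hn
    exact (le_div_iff₀ (Nat.cast_pos.2 hn)).1 (hhigh n)
  have hle_one : ∀ᶠ n in atTop, p n ≤ 1 := by
    filter_upwards [hmul, eventually_log_le_mul (c := 0.9) (by norm_num),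
      eventually_gt_atTop 0] with n hn hlog hn₀
    have : (0 : ℝ) < n := Nat.cast_pos.2 hn₀
    exact le_of_mul_le_mul_right (by linarith) this
  refine whp_of_eventually_gnpProb_not_le hp0 hle_one fun ε hε => ?_
  filter_upwards [eventually_gnpProb_not_hasDisjointHamiltonianCycles_le hε, hmul, hle_one]
    with n hprob hn hn₁
  refine (gnpProb_mono (hp0 n) hn₁ fun G => mt fun hG _ => ?_).trans (hprob (p n) (hp0 n) hn₁ hn)
  exact hG
end

section
/- For every fixed β > 0 there exists an integer n₀ = n₀(β) > 0 such that for every n ≥ n₀, every graph G ∈ 𝓛(n,β) (with witnessing partition V = V₁ ∪ D) is either Hamiltonian or satisfies |{v ∈ V₁ : |B_G(v)| ≥ n/3 + βn}| ≥ n/3 + βn. -/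
open Filter Finset SimpleGraph
open scoped Classical

/-! Pósa's rotation–extension argument. Fix a longest path `p` from `a`. Rotations about its moving
end produce further longest paths from `a`, whose ends accumulate in a set `T`; at vertices outside
`T` and its neighbours along `p`, these paths use only edges of `p`. So a vertex `w ∈ N(T)` outside
these neighbours is joined by an edge of `p` to a vertex that becomes a new end after a rotation
about `w`. Since `D` is scattered, all but at most `|T|` of these `w` give an end in `V₁`. Hence `T`
grows inside `V₁` to size `t = ⌊β n₁⌋`, and one further rotation gives at least
`(|N(T)| - 3t) / 2 ≥ n / 3 + β n` ends in `V₁`. Each of these ends is in turn the start of as many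
longest paths. The ends of a longest path form a booster unless `G` is Hamiltonian: an edge between
them closes a cycle, which either spans `G` or, by connectivity, opens up to a longer path. -/

section Walks

variable {V : Type*} {G : SimpleGraph V}

lemma exists_rotation {a u w : V} {q : G.Walk a u} (hq : q.IsPath) (hw : w ∈ q.support)
    (hadj : G.Adj u w) :
    ∃ (w' : V) (q' : G.Walk a w'), q'.IsPath ∧ q'.length = q.length ∧ s(w, w') ∈ q.edges ∧
      ∀ e ∈ q'.edges, e ∈ q.edges ∨ e = s(w, u) := by
  have hspec := q.take_spec hw
  obtain ⟨w', h, r, hr⟩ := Walk.exists_eq_cons_of_ne hadj.ne' (q.dropUntil w hw)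
  rw [hr] at hspec
  refine ⟨w', (q.takeUntil w hw).append (Walk.cons hadj.symm r.reverse), ?_, ?_, ?_, ?_⟩
  · have hnodup : q.support.Nodup := hq.support_nodup
    rw [← hspec, Walk.support_append] at hnodup
    rw [Walk.isPath_def, Walk.support_append]
    simp only [Walk.support_cons, List.tail_cons, Walk.support_reverse] at hnodup ⊢
    exact ((List.reverse_perm _).append_left _).nodup_iff.2 hnodup
  · conv_rhs => rw [← hspec]
    simp
  · rw [← hspec]
    simp
  · intro e he
    rw [← hspec]
    simp only [Walk.edges_append, Walk.edges_cons, Walk.edges_reverse, List.mem_append,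
      List.mem_cons, List.mem_reverse] at he ⊢
    tauto

lemma exists_isPath_length_eq_of_isCycle (hG : G.Preconnected) {z x : V} {c : G.Walk z z}
    (hc : c.IsCycle) (hx : x ∉ c.support) :
    ∃ (u v : V) (q : G.Walk u v), q.IsPath ∧ q.length = c.length := by
  obtain ⟨p⟩ := hG z x
  obtain ⟨d, -, hfst, hsnd⟩ := p.exists_boundary_dart {w | w ∈ c.support} (by simp) hx
  simp only [Set.mem_ofPred_eq] at hfst hsnd
  have hrot := hc.rotate hfst
  have hnotMem : d.snd ∉ (c.rotate d.fst hfst).tail.support := by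
    rw [Walk.support_tail_of_not_nil _ hrot.not_nil]
    exact fun h => hsnd (by simpa using List.mem_of_mem_tail h)
  refine ⟨_, _, _, hrot.isPath_tail.concat hnotMem d.adj, ?_⟩
  rw [Walk.length_concat, Walk.length_tail_add_one hrot.not_nil, Walk.length_rotate]

variable [Fintype V] {a b : V}

lemma card_filter_mem_edges_le_two {p : G.Walk a b} (hp : p.IsPath) (y : V) :
    #{x | s(x, y) ∈ p.edges} ≤ 2 := by
  by_cases hy : y ∈ p.support
  · have hsub : ({x | s(x, y) ∈ p.edges} : Finset V) ⊆
        {(p.takeUntil y hy).penultimate, (p.dropUntil y hy).snd} := by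
      intro x hx
      rw [Finset.mem_filter_univ, Sym2.eq_swap, ← p.take_spec hy, Walk.edges_append,
        List.mem_append] at hx
      rw [Finset.mem_insert, Finset.mem_singleton]
      exact hx.imp (hp.takeUntil hy).eq_penultimate_of_mem_edges
        (hp.dropUntil hy).eq_snd_of_mem_edges
    exact (Finset.card_le_card hsub).trans Finset.card_le_two
  · rw [Finset.filter_eq_empty_iff.2 fun x _ hx => hy (p.snd_mem_support_of_mem_edges hx)]
    simp

/-- The set of neighbours along the walk `p` of the vertices of `T`. Unlike `extNbhd`, it may meet
`T`. -/
noncomputable def walkNbhd (p : G.Walk a b) (T : Finset V) : Finset V :=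
  T.biUnion fun y => {x | s(x, y) ∈ p.edges}

lemma mem_walkNbhd {p : G.Walk a b} {T : Finset V} {x : V} :
    x ∈ walkNbhd p T ↔ ∃ y ∈ T, s(x, y) ∈ p.edges := by
  simp [walkNbhd]

lemma walkNbhd_mono (p : G.Walk a b) {T T' : Finset V} (h : T ⊆ T') :
    walkNbhd p T ⊆ walkNbhd p T' :=
  Finset.biUnion_subset_biUnion_of_subset_left _ h

lemma card_walkNbhd_le {p : G.Walk a b} (hp : p.IsPath) (T : Finset V) :
    #(walkNbhd p T) ≤ #T * 2 :=
  Finset.card_biUnion_le_card_mul _ _ _ fun y _ => card_filter_mem_edges_le_two hp y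

end Walks

section LongestPaths

variable {V : Type*} {G : SimpleGraph V}

lemma bddAbove_setOf_isPath_length [Finite V] (G : SimpleGraph V) :
    BddAbove {l : ℕ | ∃ (u v : V) (q : G.Walk u v), q.IsPath ∧ q.length = l} := by
  have := Fintype.ofFinite V
  refine ⟨Fintype.card V, ?_⟩
  rintro l ⟨u, v, q, hq, rfl⟩
  exact hq.length_lt.le

variable [Fintype V] {a b u v w z : V}

lemma length_le_longestPath {q : G.Walk u v} (hq : q.IsPath) : q.length ≤ longestPath G :=
  le_csSup (bddAbove_setOf_isPath_length G) ⟨u, v, q, hq, rfl⟩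

/-- A path of maximum length in the whole graph. -/
structure IsLongestPath (q : G.Walk u v) : Prop where
  isPath : q.IsPath
  length_eq : q.length = longestPath G

lemma exists_isLongestPath [Nonempty V] (G : SimpleGraph V) :
    ∃ (u v : V) (q : G.Walk u v), IsLongestPath q := by
  obtain ⟨u, v, q, hq, hlen⟩ :=
    Nat.sSup_mem (s := {l : ℕ | ∃ (u v : V) (q : G.Walk u v), q.IsPath ∧ q.length = l})
      ⟨0, Classical.arbitrary V, _, Walk.nil, by simp, rfl⟩ (bddAbove_setOf_isPath_length G)
  exact ⟨u, v, q, hq, hlen⟩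

lemma IsLongestPath.reverse {q : G.Walk u v} (hq : IsLongestPath q) : IsLongestPath q.reverse :=
  ⟨hq.isPath.reverse, by rw [Walk.length_reverse, hq.length_eq]⟩

lemma IsLongestPath.mem_support_of_adj {q : G.Walk a u} (hq : IsLongestPath q)
    (hadj : G.Adj u w) : w ∈ q.support := by
  by_contra hw
  have hlonger := length_le_longestPath (hq.isPath.concat hw hadj)
  rw [Walk.length_concat, hq.length_eq] at hlonger
  omega

lemma IsLongestPath.exists_rotation {q : G.Walk a u} (hq : IsLongestPath q) (hadj : G.Adj u w) :
    ∃ (w' : V) (q' : G.Walk a w'), IsLongestPath q' ∧ s(w, w') ∈ q.edges ∧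
      ∀ e ∈ q'.edges, e ∈ q.edges ∨ e = s(w, u) := by
  obtain ⟨w', q', hq', hlen, hedge, hedges⟩ :=
    _root_.exists_rotation hq.isPath (hq.mem_support_of_adj hadj) hadj
  exact ⟨w', q', ⟨hq', hlen.trans hq.length_eq⟩, hedge, hedges⟩

lemma IsLongestPath.card_extNbhd_singleton_le {q : G.Walk a u} (hq : IsLongestPath q) :
    #(extNbhd G {u}) ≤ q.length := by
  have hsub : insert u (extNbhd G {u}) ⊆ q.support.toFinset := by
    intro w hw
    simp only [extNbhd, Finset.mem_insert, Finset.mem_filter_univ, Finset.mem_singleton,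
      exists_eq_left] at hw
    rw [List.mem_toFinset]
    rcases hw with rfl | ⟨-, hadj⟩
    · exact q.end_mem_support
    · exact hq.mem_support_of_adj hadj
  have hcard := (Finset.card_le_card hsub).trans q.support.toFinset_card_le
  rw [Finset.card_insert_of_notMem (by simp [extNbhd]), Walk.length_support] at hcard
  omega

lemma isHamiltonian_or_length_lt_longestPath (hG : G.Preconnected) {q : G.Walk v z}
    (hq : q.IsPath) (hadj : G.Adj z v) (hedge : s(z, v) ∉ q.edges) :
    G.IsHamiltonian ∨ q.length < longestPath G := by
  have hcycle : (Walk.cons hadj q).IsCycle := (Walk.cons_isCycle_iff q hadj).2 ⟨hq, hedge⟩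
  by_cases hspan : ∀ w, w ∈ q.support
  · exact .inl fun _ => ⟨z, _, hcycle, hcycle.isPath_tail.isHamiltonian_iff.2 (by simpa)⟩
  · right
    push Not at hspan
    obtain ⟨x, hx⟩ := hspan
    have hx' : x ∉ (Walk.cons hadj q).support := by
      rw [Walk.support_cons, List.mem_cons, not_or]
      exact ⟨fun h => hx (h ▸ q.end_mem_support), hx⟩
    obtain ⟨_, _, r, hr, hlen⟩ := exists_isPath_length_eq_of_isCycle hG hcycle hx'
    have hle := length_le_longestPath hr
    rw [hlen, Walk.length_cons] at hle
    omega

lemma IsLongestPath.not_adj (hG : G.Preconnected) (hH : ¬G.IsHamiltonian) {q : G.Walk v z}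
    (hq : IsLongestPath q) (hlen : 2 ≤ q.length) : ¬G.Adj v z := by
  intro hadj
  have hedge : s(z, v) ∉ q.edges := by
    intro he
    rw [Sym2.eq_swap] at he
    have := hq.isPath.length_eq_one_of_mem_edges he
    omega
  rcases isHamiltonian_or_length_lt_longestPath hG hq.isPath hadj.symm hedge with h | h
  · exact hH h
  · exact h.ne hq.length_eq

lemma IsLongestPath.isBooster (hG : G.Preconnected) (hH : ¬G.IsHamiltonian) {q : G.Walk v z}
    (hq : IsLongestPath q) (hlen : 2 ≤ q.length) : IsBooster G v z := by
  have hne : v ≠ z := by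
    rintro rfl
    have := Walk.length_eq_zero_iff.2 (Walk.isPath_iff_nil.1 hq.isPath)
    omega
  have hnadj := hq.not_adj hG hH hlen
  refine ⟨hne, hnadj, ?_⟩
  have hle : G ≤ G ⊔ fromEdgeSet {s(v, z)} := le_sup_left
  have hadj : (G ⊔ fromEdgeSet {s(v, z)}).Adj z v := by
    right
    simp [Sym2.eq_swap, hne.symm]
  have hedge : s(z, v) ∉ (q.mapLe hle).edges := by
    rw [Walk.edges_mapLe_eq_edges]
    exact fun he => hnadj (q.adj_of_mem_edges he).symm
  simpa [hq.length_eq] using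
    isHamiltonian_or_length_lt_longestPath (hG.mono hle) (hq.isPath.mapLe hle) hadj hedge

end LongestPaths

section RotationEnds

variable {V : Type*} [Fintype V] {G : SimpleGraph V} {a b u w : V} {p : G.Walk a b}
  {T T' : Finset V}

/-- The invariant of Pósa's procedure with base path `p`: `u` is the end of a longest path from `a`
all of whose edges outside `p` lie within `T` and the neighbours of `T` along `p`. -/
def IsRotationEnd (p : G.Walk a b) (T : Finset V) (u : V) : Prop :=
  ∃ q : G.Walk a u, IsLongestPath q ∧
    ∀ e ∈ q.edges, e ∈ p.edges ∨ ∀ x ∈ e, x ∈ T ∪ walkNbhd p T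

lemma IsLongestPath.isRotationEnd (hp : IsLongestPath p) (T : Finset V) : IsRotationEnd p T b :=
  ⟨p, hp, fun _ he => .inl he⟩

lemma IsRotationEnd.mono (h : IsRotationEnd p T u) (hT : T ⊆ T') : IsRotationEnd p T' u := by
  obtain ⟨q, hq, hedges⟩ := h
  have hsub := Finset.union_subset_union hT (walkNbhd_mono p hT)
  exact ⟨q, hq, fun e he => (hedges e he).imp_right fun h x hx => hsub (h x hx)⟩

lemma IsRotationEnd.exists_rotation (h : IsRotationEnd p T u) (hu : u ∈ T) (hadj : G.Adj u w)
    (hwT : w ∉ T) (hwN : w ∉ walkNbhd p T) :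
    ∃ w' ∉ T, s(w, w') ∈ p.edges ∧ IsRotationEnd p (insert w' T) w' := by
  obtain ⟨q, hq, hedges⟩ := h
  obtain ⟨w', q', hq', hedge, hedges'⟩ := hq.exists_rotation hadj
  have hedge_p : s(w, w') ∈ p.edges := by
    refine (hedges _ hedge).resolve_right fun h => ?_
    have hw := h w (Sym2.mem_mk_left w w')
    exact (Finset.mem_union.1 hw).elim hwT hwN
  have hw'T : w' ∉ T := fun h => hwN (mem_walkNbhd.2 ⟨w', h, hedge_p⟩)
  refine ⟨w', hw'T, hedge_p, q', hq', fun e he => ?_⟩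
  have hsub := Finset.subset_insert w' T
  rcases hedges' e he with he | rfl
  · exact (hedges e he).imp_right fun h x hx =>
      Finset.union_subset_union hsub (walkNbhd_mono p hsub) (h x hx)
  · right
    intro x hx
    rcases Sym2.mem_iff.1 hx with rfl | rfl
    · exact Finset.mem_union_right _ (mem_walkNbhd.2 ⟨w', Finset.mem_insert_self _ _, hedge_p⟩)
    · exact Finset.mem_union_left _ (hsub hu)

end RotationEnds

section ScatteredComplement

variable {V : Type*} {G : SimpleGraph V} {A : Finset V}

/-- Every vertex outside `A` has two neighbours in `A`, and the vertices outside `A` are far apart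
and on no short cycle: the part of (L2) and (L3) that rotations need. -/
structure HasScatteredCompl (G : SimpleGraph V) (A : Finset V) : Prop where
  two_le_card_nbrs : ∀ u ∉ A, 2 ≤ #{w ∈ A | G.Adj u w}
  four_lt_length_of_isPath : ∀ u ∉ A, ∀ v ∉ A, ∀ q : G.Walk u v, q.IsPath → 0 < q.length →
    4 < q.length
  four_lt_length_of_isCycle : ∀ u ∉ A, ∀ q : G.Walk u u, q.IsCycle → 4 < q.length

namespace HasScatteredCompl

lemma mem_of_adj_of_adj (h : HasScatteredCompl G A) {u w v : V} (hu : u ∉ A) (huw : G.Adj u w)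
    (hwv : G.Adj w v) (hne : v ≠ u) : v ∈ A := by
  by_contra hv
  let q : G.Walk u v := .cons huw (.cons hwv .nil)
  have hq : q.IsPath := by
    simp [q, huw.ne, hwv.ne, hne.symm]
  have := h.four_lt_length_of_isPath u hu v hv q hq (by simp [q])
  simp [q] at this

lemma eq_of_adj_of_adj (h : HasScatteredCompl G A) {u w₁ w₂ d₁ d₂ : V} (hu : u ∈ A)
    (hw₁ : w₁ ∈ A) (hw₂ : w₂ ∈ A) (hd₁ : d₁ ∉ A) (hd₂ : d₂ ∉ A) (huw₁ : G.Adj u w₁)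
    (huw₂ : G.Adj u w₂) (hwd₁ : G.Adj w₁ d₁) (hwd₂ : G.Adj w₂ d₂) : w₁ = w₂ := by
  by_contra hne
  have := huw₁.ne
  have := huw₂.ne
  by_cases hd : d₁ = d₂
  · subst hd
    let q : G.Walk d₁ d₁ := .cons hwd₁.symm (.cons huw₁.symm (.cons huw₂ (.cons hwd₂ .nil)))
    have hq : q.IsCycle := by
      rw [Walk.cons_isCycle_iff]
      simp only [Walk.cons_isPath_iff, Walk.IsPath.nil, Walk.support_cons,
        Walk.support_nil, Walk.edges_cons, Walk.edges_nil, List.mem_cons, List.not_mem_nil]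
      grind
    have := h.four_lt_length_of_isCycle d₁ hd₁ q hq
    simp [q] at this
  · let q : G.Walk d₁ d₂ := .cons hwd₁.symm (.cons huw₁.symm (.cons huw₂ (.cons hwd₂ .nil)))
    have hq : q.IsPath := by
      simp only [q, Walk.cons_isPath_iff, Walk.IsPath.nil, Walk.support_cons,
        Walk.support_nil, List.mem_cons, List.not_mem_nil]
      grind
    have := h.four_lt_length_of_isPath d₁ hd₁ d₂ hd₂ q hq (by simp [q])
    simp [q] at this

end HasScatteredCompl

/-- The vertices of `A` that have neighbours both in `T` and outside `A`. A rotation about such a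
vertex may move the end of a path out of `A`. -/
noncomputable def exitNbhd (G : SimpleGraph V) (A T : Finset V) : Finset V :=
  T.biUnion fun u => {w ∈ A | G.Adj u w ∧ ∃ d ∉ A, G.Adj w d}

lemma mem_exitNbhd {T : Finset V} {w : V} :
    w ∈ exitNbhd G A T ↔ ∃ u ∈ T, w ∈ A ∧ G.Adj u w ∧ ∃ d ∉ A, G.Adj w d := by
  simp [exitNbhd]

lemma HasScatteredCompl.card_exitNbhd_le (h : HasScatteredCompl G A) {T : Finset V} (hT : T ⊆ A) :
    #(exitNbhd G A T) ≤ #T := by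
  rw [← mul_one #T]
  refine Finset.card_biUnion_le_card_mul _ _ _ fun u hu => Finset.card_le_one.2 ?_
  intro w₁ hw₁ w₂ hw₂
  obtain ⟨hw₁A, huw₁, d₁, hd₁, hwd₁⟩ := Finset.mem_filter.1 hw₁
  obtain ⟨hw₂A, huw₂, d₂, hd₂, hwd₂⟩ := Finset.mem_filter.1 hw₂
  exact h.eq_of_adj_of_adj (hT hu) hw₁A hw₂A hd₁ hd₂ huw₁ huw₂ hwd₁ hwd₂

variable [Fintype V] {a b : V} {p : G.Walk a b}

lemma HasScatteredCompl.exists_isLongestPath_mem (h : HasScatteredCompl G A)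
    (hp : IsLongestPath p) : ∃ c ∈ A, ∃ q : G.Walk a c, IsLongestPath q := by
  by_cases hb : b ∈ A
  · exact ⟨b, hb, p, hp⟩
  obtain ⟨w, hw, hne⟩ := Finset.exists_mem_ne (h.two_le_card_nbrs b hb) p.penultimate
  have hbw := (Finset.mem_filter.1 hw).2
  obtain ⟨c, q, hq, hedge, -⟩ := hp.exists_rotation hbw
  have hcb : c ≠ b := by
    rintro rfl
    rw [Sym2.eq_swap] at hedge
    exact hne (hp.isPath.eq_penultimate_of_mem_edges hedge)
  exact ⟨c, h.mem_of_adj_of_adj hb hbw (p.adj_of_mem_edges hedge) hcb, q, hq⟩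

lemma exists_isRotationEnd_of_mem_extNbhd {T : Finset V} (hends : ∀ u ∈ T, IsRotationEnd p T u)
    {w : V} (hw : w ∈ extNbhd G T ∩ A) (hwN : w ∉ walkNbhd p T) (hwE : w ∉ exitNbhd G A T) :
    ∃ w' ∈ A, w' ∉ T ∧ s(w, w') ∈ p.edges ∧ IsRotationEnd p (insert w' T) w' := by
  simp only [extNbhd, Finset.mem_inter, Finset.mem_filter_univ] at hw
  obtain ⟨⟨hwT, u, hu, huw⟩, hwA⟩ := hw
  obtain ⟨w', hw'T, hedge, hend⟩ := (hends u hu).exists_rotation hu huw hwT hwN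
  have hw'A : w' ∈ A := by
    by_contra hw'A
    exact hwE (mem_exitNbhd.2 ⟨u, hu, hwA, huw, w', hw'A, p.adj_of_mem_edges hedge⟩)
  exact ⟨w', hw'A, hw'T, hedge, hend⟩

end ScatteredComplement

section Expansion

variable {V : Type*} [Fintype V] {G : SimpleGraph V} {A : Finset V} {t m : ℕ}

/-- The expansion of `G` inside `A` that rotations need: sets of fewer than `t` vertices expand by
a factor more than `3`, and sets of `t` vertices have at least `m` neighbours in `A`. -/
structure ExpandsWithin (G : SimpleGraph V) (A : Finset V) (t m : ℕ) : Prop where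
  nonempty : A.Nonempty
  two_le : 2 ≤ t
  card_lt_two_mul : #A < 2 * m
  three_mul_card_lt : ∀ U ⊆ A, U.Nonempty → #U < t → 3 * #U < #(extNbhd G U ∩ A)
  le_card_extNbhd : ∀ U ⊆ A, #U = t → m ≤ #(extNbhd G U ∩ A)

/-- The vertices of `A` at which some longest path from `a` ends. -/
noncomputable def longestPathEnds (G : SimpleGraph V) (A : Finset V) (a : V) : Finset V :=
  {z ∈ A | ∃ q : G.Walk a z, IsLongestPath q}

namespace ExpandsWithin

lemma card_lt_two_mul_card_of_closed (h : ExpandsWithin G A t m) {S : Finset V} (hS : S ⊆ A)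
    (hne : S.Nonempty) (hclosed : ∀ u ∈ S, ∀ v ∈ A, G.Adj u v → v ∈ S) : #A < 2 * #S := by
  have hnbhd : ∀ U ⊆ S, extNbhd G U ∩ A ⊆ S \ U := by
    intro U hU v hv
    simp only [extNbhd, Finset.mem_inter, Finset.mem_filter_univ] at hv
    obtain ⟨⟨hvU, u, hu, huv⟩, hvA⟩ := hv
    exact Finset.mem_sdiff.2 ⟨hclosed u (hU hu) v hvA huv, hvU⟩
  have ht : t ≤ #S := by
    by_contra! hlt
    have hexp := h.three_mul_card_lt S hS hne hlt
    have hcard := Finset.card_le_card (hnbhd S subset_rfl)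
    rw [Finset.sdiff_self, Finset.card_empty] at hcard
    omega
  obtain ⟨U, hU, hUt⟩ := Finset.exists_subset_card_eq ht
  have hexp := h.le_card_extNbhd U (hU.trans hS) hUt
  have hcard := Finset.card_le_card ((hnbhd U hU).trans Finset.sdiff_subset)
  have := h.card_lt_two_mul
  omega

lemma preconnected (h : ExpandsWithin G A t m) (hA : HasScatteredCompl G A) :
    G.Preconnected := by
  have hhalf : ∀ x, #A < 2 * #{v ∈ A | G.Reachable x v} := by
    intro x
    refine h.card_lt_two_mul_card_of_closed (Finset.filter_subset _ _) ?_ fun u hu v hv huv => ?_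
    · by_cases hx : x ∈ A
      · exact ⟨x, by simp [hx]⟩
      · obtain ⟨w, hw⟩ := Finset.card_pos.1 (zero_lt_two.trans_le (hA.two_le_card_nbrs x hx))
        rw [Finset.mem_filter] at hw
        exact ⟨w, Finset.mem_filter.2 ⟨hw.1, hw.2.reachable⟩⟩
    · exact Finset.mem_filter.2 ⟨hv, (Finset.mem_filter.1 hu).2.trans huv.reachable⟩
  intro x y
  obtain ⟨w, hw⟩ := Finset.inter_nonempty_of_card_lt_card_add_card
    (Finset.filter_subset (G.Reachable x) A) (Finset.filter_subset (G.Reachable y) A)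
    (by linarith [hhalf x, hhalf y])
  simp only [Finset.mem_inter, Finset.mem_filter] at hw
  exact hw.1.2.trans hw.2.2.symm

lemma two_le_length (h : ExpandsWithin G A t m) {a b : V} {p : G.Walk a b}
    (hp : IsLongestPath p) (hb : b ∈ A) : 2 ≤ p.length := by
  have hexp := h.three_mul_card_lt {b} (by simpa using hb) (by simp)
    (by simpa using one_lt_two.trans_le h.two_le)
  have hsub := Finset.card_le_card (Finset.inter_subset_left (s₁ := extNbhd G {b}) (s₂ := A))
  have hlen := hp.card_extNbhd_singleton_le
  rw [Finset.card_singleton] at hexp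
  omega

variable {a b : V} {p : G.Walk a b}

lemma exists_rotationEnds (h : ExpandsWithin G A t m) (hA : HasScatteredCompl G A)
    (hp : IsLongestPath p) (hb : b ∈ A) {k : ℕ} (hk : 1 ≤ k) (hkt : k ≤ t) :
    ∃ T ⊆ A, #T = k ∧ ∀ u ∈ T, IsRotationEnd p T u := by
  induction k, hk using Nat.le_induction with
  | base =>
    refine ⟨{b}, by simpa using hb, Finset.card_singleton b, fun u hu => ?_⟩
    rw [Finset.mem_singleton.1 hu]
    exact hp.isRotationEnd _
  | succ k hk ih =>
    obtain ⟨T, hT, hcard, hends⟩ := ih (by omega)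
    have hexp := h.three_mul_card_lt T hT (Finset.card_pos.1 (by omega)) (by omega)
    have hwalk := card_walkNbhd_le hp.isPath T
    have hexit := hA.card_exitNbhd_le hT
    have hunion := Finset.card_union_le (walkNbhd p T) (exitNbhd G A T)
    obtain ⟨w, hw, hw'⟩ := Finset.exists_mem_notMem_of_card_lt_card
      (show #(walkNbhd p T ∪ exitNbhd G A T) < #(extNbhd G T ∩ A) by omega)
    rw [Finset.mem_union, not_or] at hw'
    obtain ⟨v, hvA, hvT, -, hv⟩ := exists_isRotationEnd_of_mem_extNbhd hends hw hw'.1 hw'.2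
    refine ⟨insert v T, Finset.insert_subset hvA hT, ?_, fun u hu => ?_⟩
    · rw [Finset.card_insert_of_notMem hvT, hcard]
    · rcases Finset.mem_insert.1 hu with rfl | hu
      · exact hv
      · exact (hends u hu).mono (Finset.subset_insert v T)

lemma le_card_longestPathEnds (h : ExpandsWithin G A t m) (hA : HasScatteredCompl G A)
    (hp : IsLongestPath p) (hb : b ∈ A) : m ≤ 3 * t + 2 * #(longestPathEnds G A a) := by
  obtain ⟨T, hT, hcard, hends⟩ :=
    h.exists_rotationEnds hA hp hb (one_le_two.trans h.two_le) le_rfl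
  have hcover : extNbhd G T ∩ A ⊆
      (walkNbhd p T ∪ exitNbhd G A T) ∪ walkNbhd p (longestPathEnds G A a) := by
    intro w hw
    by_contra hcon
    simp only [Finset.mem_union, not_or] at hcon
    obtain ⟨⟨hwN, hwE⟩, hwL⟩ := hcon
    obtain ⟨v, hvA, -, hedge, q, hq, -⟩ := exists_isRotationEnd_of_mem_extNbhd hends hw hwN hwE
    exact hwL (mem_walkNbhd.2 ⟨v, Finset.mem_filter.2 ⟨hvA, q, hq⟩, hedge⟩)
  calc m ≤ #(extNbhd G T ∩ A) := h.le_card_extNbhd T hT hcard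
    _ ≤ #(walkNbhd p T) + #(exitNbhd G A T) + #(walkNbhd p (longestPathEnds G A a)) :=
      (Finset.card_le_card hcover).trans <| (Finset.card_union_le _ _).trans <|
        Nat.add_le_add_right (Finset.card_union_le _ _) _
    _ ≤ #T * 2 + #T + #(longestPathEnds G A a) * 2 :=
      add_le_add_three (card_walkNbhd_le hp.isPath T) (hA.card_exitNbhd_le hT)
        (card_walkNbhd_le hp.isPath _)
    _ = 3 * t + 2 * #(longestPathEnds G A a) := by rw [hcard]; ring

lemma longestPathEnds_subset_boosterSet (h : ExpandsWithin G A t m) (hA : HasScatteredCompl G A)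
    (hH : ¬G.IsHamiltonian) (v : V) : longestPathEnds G A v ⊆ boosterSet G v := by
  intro z hz
  obtain ⟨hzA, q, hq⟩ := Finset.mem_filter.1 hz
  exact (Finset.mem_filter_univ z).2
    (hq.isBooster (h.preconnected hA) hH (h.two_le_length hq hzA))

theorem le_card_filter_le_card_boosterSet (h : ExpandsWithin G A t m)
    (hA : HasScatteredCompl G A) (hH : ¬G.IsHamiltonian) {k : ℕ} (hk : 3 * t + 2 * k ≤ m) :
    k ≤ #{v ∈ A | k ≤ #(boosterSet G v)} := by
  have : Nonempty V := ⟨h.nonempty.choose⟩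
  have hends : ∀ {a b : V} {p : G.Walk a b}, IsLongestPath p → k ≤ #(longestPathEnds G A a) := by
    intro a b p hp
    obtain ⟨c, hc, q, hq⟩ := hA.exists_isLongestPath_mem hp
    have := h.le_card_longestPathEnds hA hq hc
    omega
  obtain ⟨a, b, p, hp⟩ := exists_isLongestPath G
  refine (hends hp).trans (Finset.card_le_card fun v hv => ?_)
  obtain ⟨hvA, q, hq⟩ := Finset.mem_filter.1 hv
  have hbooster := Finset.card_le_card (h.longestPathEnds_subset_boosterSet hA hH v)
  exact Finset.mem_filter.2 ⟨hvA, (hends hq.reverse).trans hbooster⟩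

end ExpandsWithin

lemma IsExpander.le_card_extNbhd_inter {R : ℝ} {f : ℕ → ℝ}
    (h : IsExpander (G.induce (A : Set V)) R f) {U : Finset V} (hU : U ⊆ A) (hne : U.Nonempty)
    (hR : (#U : ℝ) ≤ R) : f #U * #U ≤ (#(extNbhd G U ∩ A) : ℝ) := by
  let U' : Finset (A : Set V) := Finset.univ.filter fun x => (x : V) ∈ U
  have hmap : U'.map (Function.Embedding.subtype _) = U := by
    ext x
    simpa [U'] using @hU x
  have hcard : #U' = #U := by rw [← hmap, Finset.card_map]
  have hexp := h U' (Finset.card_pos.1 (hcard ▸ hne.card_pos)) (hcard ▸ hR)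
  rw [hcard] at hexp
  refine hexp.trans (Nat.cast_le.2 ?_)
  refine Finset.card_le_card_of_injOn Subtype.val (fun x hx => ?_) Subtype.val_injective.injOn
  simp only [extNbhd, Finset.coe_filter_univ, Set.mem_ofPred_eq] at hx
  obtain ⟨hxU, u, hu, hux⟩ := hx
  simp only [extNbhd, Finset.mem_coe, Finset.mem_inter, Finset.mem_filter_univ]
  exact ⟨⟨fun hx => hxU (by simpa [U'] using hx), u, by simpa [U'] using hu, hux⟩, x.2⟩

end Expansion

section FamilyL

/-- The value of `f_β` at its last argument `⌊β n₁⌋`. -/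
noncomputable def topExpansion (β : ℝ) : ℝ :=
  2 * (1 + 39 * β) / (3 * β)

lemma topExpansion_pos {β : ℝ} (hβ : 0 < β) : 0 < topExpansion β := by
  unfold topExpansion
  positivity

lemma topExpansion_mul_self {β : ℝ} (hβ : β ≠ 0) : topExpansion β * β = 2 / 3 + 26 * β := by
  unfold topExpansion
  field_simp
  ring

lemma fBeta_floor (β : ℝ) (N : ℕ) : fBeta β N ⌊β * N⌋₊ = topExpansion β :=
  if_pos rfl

lemma lt_fBeta_of_ne_floor {β c : ℝ} {N t : ℕ} (ht : t ≠ ⌊β * N⌋₊) (hc : c < 11)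
    (hlog : c < Real.log N ^ (0.8 : ℝ)) : c < fBeta β N t := by
  rw [fBeta, if_neg ht]
  split_ifs
  exacts [hlog, hc]

lemma le_topExpansion_mul_floor {β : ℝ} (hβ : 0 < β) (N : ℕ) :
    (2 / 3 + 26 * β) * N - topExpansion β ≤ topExpansion β * ⌊β * N⌋₊ := by
  have hfloor := mul_le_mul_of_nonneg_left (Nat.lt_floor_add_one (β * N)).le
    (topExpansion_pos hβ).le
  rw [← topExpansion_mul_self hβ.ne']
  linarith

lemma three_mul_floor_add_two_mul_ceil_le {β x : ℝ} (hβ : 0 < β) (hx : 0 ≤ x) {N : ℕ}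
    (hN : (2 / 3 + 2 * β) * x + topExpansion β + 2 ≤ (2 / 3 + 23 * β) * N) :
    3 * ⌊β * N⌋₊ + 2 * ⌈x / 3 + β * x⌉₊ ≤ ⌈topExpansion β * ⌊β * N⌋₊⌉₊ := by
  have hfloor : (⌊β * N⌋₊ : ℝ) ≤ β * N := Nat.floor_le (by positivity)
  have hceil := Nat.ceil_lt_add_one (show 0 ≤ x / 3 + β * x by positivity)
  have htop := le_topExpansion_mul_floor hβ N
  have hle := Nat.le_ceil (topExpansion β * ⌊β * N⌋₊)
  have : 3 * (⌊β * N⌋₊ : ℝ) + 2 * ⌈x / 3 + β * x⌉₊ ≤ ⌈topExpansion β * ⌊β * N⌋₊⌉₊ := by linarith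
  exact_mod_cast this

namespace InFamilyL

variable {n : ℕ} {β : ℝ} {G : SimpleGraph (Fin n)} {V₁ D : Finset (Fin n)}

lemma mem_right (h : InFamilyL n β G V₁ D) {v : Fin n} (hv : v ∉ V₁) : v ∈ D := by
  have hmem : v ∈ V₁ ∪ D := h.2.1 ▸ Finset.mem_univ v
  exact (Finset.mem_union.1 hmem).resolve_left hv

lemma sub_rpow_le_card (h : InFamilyL n β G V₁ D) : (n : ℝ) - (n : ℝ) ^ (0.09 : ℝ) ≤ #V₁ := by
  obtain ⟨hdisj, hunion, hD, -⟩ := h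
  have hcard := Finset.card_union_of_disjoint hdisj
  rw [hunion, Finset.card_univ, Fintype.card_fin] at hcard
  have hcard' : (n : ℝ) = #V₁ + #D := mod_cast hcard
  linarith

lemma hasScatteredCompl (h : InFamilyL n β G V₁ D)
    (hn : 4 ≤ 2 * Real.log n / (3 * Real.log (Real.log n))) : HasScatteredCompl G V₁ := by
  have hmem := @h.mem_right
  obtain ⟨-, -, -, hdeg, hpath, hcycle, -⟩ := h
  refine ⟨fun u hu => (hdeg u (hmem hu)).trans (Finset.card_le_card fun w hw => ?_),
    fun u hu v hv q hq hpos => ?_, fun u hu q hq => ?_⟩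
  · rw [Finset.mem_inter, mem_neighborFinset] at hw
    exact Finset.mem_filter.2 hw.symm
  · exact_mod_cast hn.trans_lt (hpath u (hmem hu) v (hmem hv) q hq hpos)
  · exact_mod_cast hn.trans_lt (hcycle u (hmem hu) q hq)

lemma expandsWithin (h : InFamilyL n β G V₁ D) (hβ : 0 < β)
    (hlog : 3 < Real.log #V₁ ^ (0.8 : ℝ)) (hfloor : 2 ≤ β * #V₁)
    (htop : 6 * topExpansion β < #V₁) :
    ExpandsWithin G V₁ ⌊β * #V₁⌋₊ ⌈topExpansion β * ⌊β * #V₁⌋₊⌉₊ := by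
  obtain ⟨-, -, -, -, -, -, hexp⟩ := h
  have htop_pos := topExpansion_pos hβ
  have hfloor_le : (⌊β * #V₁⌋₊ : ℝ) ≤ β * #V₁ := Nat.floor_le (by positivity)
  refine ⟨?_, Nat.le_floor (mod_cast hfloor), ?_, fun U hU hne hlt => ?_, fun U hU hcard => ?_⟩
  · have : (0 : ℝ) < #V₁ := by linarith
    exact Finset.card_pos.1 (mod_cast this)
  · have hle := Nat.le_ceil (topExpansion β * ⌊β * #V₁⌋₊)
    have hmul := le_topExpansion_mul_floor hβ #V₁
    have : (#V₁ : ℝ) < 2 * ⌈topExpansion β * ⌊β * #V₁⌋₊⌉₊ := by linarith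
    exact_mod_cast this
  · have hle := hexp.le_card_extNbhd_inter hU hne ((Nat.cast_le.2 hlt.le).trans hfloor_le)
    have hf := lt_fBeta_of_ne_floor hlt.ne (by norm_num) hlog
    have := (mul_lt_mul_of_pos_right hf (Nat.cast_pos.2 hne.card_pos)).trans_le hle
    exact_mod_cast this
  · have hne : U.Nonempty := Finset.card_pos.1 (hcard ▸ Nat.floor_pos.2 (by linarith))
    have hle := hexp.le_card_extNbhd_inter hU hne (hcard ▸ hfloor_le)
    rw [hcard, fBeta_floor] at hle
    exact Nat.ceil_le.2 hle

end InFamilyL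

end FamilyL

section Asymptotics

lemma eventually_rpow_le_mul {s ε : ℝ} (hs : s < 1) (hε : 0 < ε) :
    ∀ᶠ x : ℝ in atTop, x ^ s ≤ ε * x := by
  filter_upwards [(tendsto_rpow_atTop (sub_pos.2 hs)).eventually_ge_atTop ε⁻¹,
    eventually_gt_atTop 0] with x hx hpos
  calc x ^ s = ε * (ε⁻¹ * x ^ s) := by field_simp
    _ ≤ ε * (x ^ (1 - s) * x ^ s) := by gcongr
    _ = ε * x := by rw [← Real.rpow_add hpos, sub_add_cancel, Real.rpow_one]

lemma eventually_le_log_div_log_log (c : ℝ) :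
    ∀ᶠ x : ℝ in atTop, c ≤ 2 * Real.log x / (3 * Real.log (Real.log x)) := by
  refine Real.tendsto_log_atTop.eventually
    (p := fun y => c ≤ 2 * y / (3 * Real.log y)) ?_
  filter_upwards [Real.isLittleO_log_id_atTop.def (show 0 < 2 / (3 * (|c| + 1)) by positivity),
    eventually_gt_atTop 1] with y hy hy1
  have hlog : 0 < Real.log y := Real.log_pos hy1
  rw [id, Real.norm_of_nonneg hlog.le, Real.norm_of_nonneg (by linarith), div_mul_eq_mul_div,
    le_div_iff₀ (by positivity)] at hy
  rw [le_div_iff₀ (by positivity)]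
  nlinarith [le_abs_self c]

lemma eventually_forall_of_sub_rpow_le {s : ℝ} (hs : s < 1) {P : ℝ → Prop}
    (hP : ∀ᶠ x in atTop, P x) : ∀ᶠ x : ℝ in atTop, ∀ y, x - x ^ s ≤ y → P y := by
  obtain ⟨x₀, hx₀⟩ := eventually_atTop.1 hP
  filter_upwards [eventually_rpow_le_mul hs one_half_pos, eventually_ge_atTop (2 * x₀)]
    with x hpow hx y hy
  exact hx₀ y (by linarith)

lemma eventually_size_bounds {β : ℝ} (hβ : 0 < β) : ∀ᶠ x : ℝ in atTop,
    3 < Real.log x ^ (0.8 : ℝ) ∧ 2 ≤ β * x ∧ 6 * topExpansion β < x := by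
  filter_upwards [((tendsto_rpow_atTop (by norm_num : (0 : ℝ) < 0.8)).comp
      Real.tendsto_log_atTop).eventually_gt_atTop 3,
    (tendsto_id.const_mul_atTop hβ).eventually_ge_atTop 2, eventually_gt_atTop _]
    with x hlog hmul htop
  exact ⟨hlog, hmul, htop⟩

lemma eventually_add_topExpansion_le {s β : ℝ} (hs : s < 1) (hβ : 0 < β) : ∀ᶠ x : ℝ in atTop,
    (2 / 3 + 2 * β) * x + topExpansion β + 2 ≤ (2 / 3 + 23 * β) * (x - x ^ s) := by
  have hpos : 0 < 2 / 3 + 23 * β := by positivity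
  filter_upwards [eventually_rpow_le_mul hs (show 0 < 20 * β / (2 / 3 + 23 * β) by positivity),
    (tendsto_id.const_mul_atTop hβ).eventually_ge_atTop (topExpansion β + 2)] with x hpow hx
  rw [div_mul_eq_mul_div, le_div_iff₀ hpos] at hpow
  simp only [id] at hx
  linarith

end Asymptotics

/-- Lemma 3.6: for fixed `β > 0` and `n` large, every `G ∈ 𝓛(n, β)` is Hamiltonian or
has at least `n/3 + βn` vertices `v ∈ V₁` with `|B_G(v)| ≥ n/3 + βn`. -/
theorem stmt6 (β : ℝ) (hβ : 0 < β) :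
    ∃ n0 : ℕ, 0 < n0 ∧ ∀ n : ℕ, n0 ≤ n → ∀ G : SimpleGraph (Fin n),
      ∀ V1 D : Finset (Fin n), InFamilyL n β G V1 D →
        G.IsHamiltonian ∨
          (n : ℝ) / 3 + β * n ≤
            ((V1.filter (fun v => (n : ℝ) / 3 + β * n ≤ ((boosterSet G v).card : ℝ))).card : ℝ) := by
  have hs : (0.09 : ℝ) < 1 := by norm_num
  obtain ⟨n₀, hn₀⟩ := eventually_atTop.1 <| tendsto_natCast_atTop_atTop.eventually <|
    (eventually_le_log_div_log_log 4).and <|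
      (eventually_forall_of_sub_rpow_le hs (eventually_size_bounds hβ)).and <|
        eventually_add_topExpansion_le hs hβ
  refine ⟨max n₀ 1, by positivity, fun n hn G V1 D hL => or_iff_not_imp_left.2 fun hH => ?_⟩
  obtain ⟨hlength, hcore, hsize⟩ := hn₀ n (le_of_max_le_left hn)
  have hcard := hL.sub_rpow_le_card
  obtain ⟨hlog, hfloor, htop⟩ := hcore #V1 hcard
  have hk := three_mul_floor_add_two_mul_ceil_le (N := #V1) hβ n.cast_nonneg
    (hsize.trans (by gcongr))
  have hboosters := (hL.expandsWithin hβ hlog hfloor htop).le_card_filter_le_card_boosterSet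
    (hL.hasScatteredCompl hlength) (by convert hH) hk
  simpa only [Nat.ceil_le] using hboosters
end
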